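/- Let G and G' be two finitely generated virtually free groups. Then there exists a finite subset F of G \ {1} such that for every non-injective group homomorphism φ : G → G', there exists an automorphism σ of G with σ ∼ id_G and ker(φ ∘ σ) ∩ F ≠ ∅, i.e. there exists f ∈ F with φ(σ(f)) = 1. -/

import Mathlib

open FirstOrder Language

/-- Function symbols of the first-order language of groups:
a binary multiplication, a unary inverse and a constant for the identity. -/
inductive GroupFunc : ℕ → Type
  | mul : GroupFunc 2
  | inv : GroupFunc 1
  | one : GroupFunc 0

/-- The first-order language of groups. -/
def groupLang : FirstOrder.Language :=
  { Functions := GroupFunc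
    Relations := fun _ => Empty }

/-- Every group is a structure for the language of groups in the natural way. -/
instance groupLangStructure (G : Type*) [Group G] : groupLang.Structure G where
  funMap {n} f v :=
    match f with
    | .mul => v 0 * v 1
    | .inv => (v 0)⁻¹
    | .one => 1
  RelMap {n} r _ := r.elim

/-- Existential formulas: iterated existential quantifications of a
quantifier-free formula. -/
inductive IsExistentialQF {α : Type*} : ∀ {n : ℕ}, groupLang.BoundedFormula α n → Prop
  | of_isQF {n : ℕ} {φ : groupLang.BoundedFormula α n} (h : φ.IsQF) : IsExistentialQF φ
  | ex {n : ℕ} {φ : groupLang.BoundedFormula α (n + 1)} (h : IsExistentialQF φ) :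
      IsExistentialQF φ.ex

/-- Universal formulas: iterated universal quantifications of a
quantifier-free formula. -/
inductive IsUniversalQF {α : Type*} : ∀ {n : ℕ}, groupLang.BoundedFormula α n → Prop
  | of_isQF {n : ℕ} {φ : groupLang.BoundedFormula α n} (h : φ.IsQF) : IsUniversalQF φ
  | all {n : ℕ} {φ : groupLang.BoundedFormula α (n + 1)} (h : IsUniversalQF φ) :
      IsUniversalQF φ.all

/-- ∀∃-formulas: iterated universal quantifications of an existential formula. -/
inductive IsAE {α : Type*} : ∀ {n : ℕ}, groupLang.BoundedFormula α n → Prop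
  | of_existential {n : ℕ} {φ : groupLang.BoundedFormula α n} (h : IsExistentialQF φ) : IsAE φ
  | all {n : ℕ} {φ : groupLang.BoundedFormula α (n + 1)} (h : IsAE φ) : IsAE φ.all

/-- A group is virtually free if it has a free subgroup of finite index. -/
def VirtuallyFree (G : Type*) [Group G] : Prop :=
  ∃ H : Subgroup G, H.FiniteIndex ∧ Nonempty (IsFreeGroup H)

/-- A group is co-Hopfian if every injective endomorphism is surjective. -/
def CoHopfian (G : Type*) [Group G] : Prop :=
  ∀ φ : G →* G, Function.Injective φ → Function.Surjective φ

/-- Two homomorphisms `φ, φ' : G → G'` are equivalent if they coincide up to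
conjugation on every finite subgroup of `G`. -/
def HomEquiv {G G' : Type*} [Group G] [Group G'] (φ φ' : G →* G') : Prop :=
  ∀ H : Subgroup G, (H : Set G).Finite →
    ∃ g' : G', ∀ h ∈ H, φ' h = g' * φ h * g'⁻¹

/-- Two groups are ∀∃-equivalent if they satisfy the same ∀∃-sentences. -/
def AEEquivalent (G : Type*) (G' : Type*) [Group G] [Group G'] : Prop :=
  ∀ φ : groupLang.Sentence, IsAE φ → (G ⊨ φ ↔ G' ⊨ φ)

/-- Two groups are ∃-equivalent if they satisfy the same existential sentences. -/
def ExistentiallyEquivalent (G : Type*) (G' : Type*) [Group G] [Group G'] : Prop :=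
  ∀ φ : groupLang.Sentence, IsExistentialQF φ → (G ⊨ φ ↔ G' ⊨ φ)

/-- An endomorphism is rigid-testing: `G` is rigid if every endomorphism
equivalent to the identity is an automorphism. -/
def Rigid (G : Type*) [Group G] : Prop :=
  ∀ φ : G →* G, HomEquiv φ (MonoidHom.id G) → Function.Bijective φ

/-- `Out G` is finite, expressed as: the inner automorphisms form a finite index
subgroup of `Aut G`. -/
def OutFinite (G : Type*) [Group G] : Prop :=
  (MulAut.conj : G →* MulAut G).range.FiniteIndex

/-- Iterated composition of an endomorphism. -/
def homPow {G : Type*} [Group G] (φ : G →* G) : ℕ → (G →* G)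
  | 0 => MonoidHom.id G
  | n + 1 => φ.comp (homPow φ n)

/-- An endomorphism `φ` of `G` is class-permuting if some positive power of `φ`
is equivalent to the identity of `G`. -/
def ClassPermuting {G : Type*} [Group G] (φ : G →* G) : Prop :=
  ∃ n : ℕ, 1 ≤ n ∧ HomEquiv (homPow φ n) (MonoidHom.id G)

/-- A maximal finite subgroup: a finite subgroup maximal with respect to
inclusion among finite subgroups. -/
def MaximalFiniteSubgroup {G : Type*} [Group G] (A : Subgroup G) : Prop :=
  (A : Set G).Finite ∧ ∀ B : Subgroup G, (B : Set G).Finite → A ≤ B → A = B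

/-- Two subgroups are conjugate. -/
def SubgroupConj {G : Type*} [Group G] (A B : Subgroup G) : Prop :=
  ∃ g : G, B = A.map (MulAut.conj g).toMonoidHom

/-- A group is strongly co-Hopfian if there is a finite subset `F` of
`G \ {1}` such that every endomorphism whose kernel misses `F` is an
automorphism. -/
def StronglyCoHopfian (G : Type*) [Group G] : Prop :=
  ∃ F : Finset G, (1 : G) ∉ F ∧
    ∀ φ : G →* G, (∀ f ∈ F, φ f ≠ 1) → Function.Bijective φ

/-- A group is finitely presented. -/
def GroupFinitelyPresented (G : Type*) [Group G] : Prop :=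
  ∃ (n : ℕ) (rels : Finset (FreeGroup (Fin n))),
    Nonempty (PresentedGroup (rels : Set (FreeGroup (Fin n))) ≃* G)

namespace VF

section Tree
variable {V : Type*} {Γ : SimpleGraph V}

theorem closer_unique (hT : Γ.IsTree) (r : V) {v a b : V} (ha : Γ.Adj a v) (hb : Γ.Adj b v)
    (hda : Γ.dist r v = Γ.dist r a + 1) (hdb : Γ.dist r v = Γ.dist r b + 1) : a = b := by
  obtain ⟨p, hp, hp'⟩ := (hT.connected r a).exists_path_of_dist
  obtain ⟨q, hq, hq'⟩ := (hT.connected r b).exists_path_of_dist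
  have h1 : (p.concat ha).length = Γ.dist r v := by simp [hp', hda]
  have h2 : (q.concat hb).length = Γ.dist r v := by simp [hq', hdb]
  have e := hT.isAcyclic.subsingleton_path r v |>.elim
    ⟨_, SimpleGraph.Walk.isPath_of_length_eq_dist _ h1⟩
    ⟨_, SimpleGraph.Walk.isPath_of_length_eq_dist _ h2⟩
  have e' := congrArg (fun w => (SimpleGraph.Walk.penultimate w.1)) e
  simpa using e'

theorem isTree_of_potential (hc : Γ.Connected)
    (h : ∀ t : V → V → ZMod 2, (∀ u v, t u v = t v u) →
      ∃ p : V → ZMod 2, ∀ u v, Γ.Adj u v → p v = p u + t u v) : Γ.IsTree := by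
  classical
  refine ⟨hc, SimpleGraph.isAcyclic_iff_forall_adj_isBridge.2 ?_⟩
  intro v w hvw
  obtain ⟨p, hp⟩ := h (fun a b => if s(a, b) = s(v, w) then 1 else 0)
    (fun a b => by rw [Sym2.eq_swap])
  have key : ∀ x y, (Γ.deleteEdges {s(v, w)}).Reachable x y → p x = p y := by
    rintro x y ⟨q⟩
    induction q with
    | nil => rfl
    | cons hadj _ ih =>
      rw [SimpleGraph.deleteEdges_adj] at hadj
      rw [← ih, hp _ _ hadj.1, if_neg (by simpa using hadj.2), add_zero]
  rw [SimpleGraph.isBridge_iff]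
  intro hr
  have h1 := key _ _ hr
  have h2 := hp v w hvw
  rw [h1] at h2
  simp at h2

/-- Auxiliary recursion for potentials. -/
noncomputable def potAux {H : Type*} [Group H] (par : V → V) (t : V → V → H) : ℕ → V → H
  | 0, _ => 1
  | n + 1, v => potAux par t n (par v) * t (par v) v

theorem exists_potential (hT : Γ.IsTree) {H : Type*} [Group H] (t : V → V → H)
    (ht : ∀ u v, Γ.Adj u v → t v u = (t u v)⁻¹) (r : V) :
    ∃ p : V → H, p r = 1 ∧ ∀ u v, Γ.Adj u v → p v = p u * t u v := by
  classical
  have hpar : ∀ v, ∃ a, v ≠ r → (Γ.Adj a v ∧ Γ.dist r v = Γ.dist r a + 1) := by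
    intro v
    by_cases hv : v = r
    · exact ⟨v, fun h => absurd hv h⟩
    obtain ⟨q, hq⟩ := (hT.connected v r).exists_walk_length_eq_dist
    cases q with
    | nil => exact absurd rfl hv
    | cons h q =>
      rename_i a
      refine ⟨a, fun _ => ⟨h.symm, ?_⟩⟩
      have h3 : Γ.dist a r ≤ q.length := SimpleGraph.dist_le q
      have h4 := hT.dist_eq_dist_add_one_of_adj r h
      rw [SimpleGraph.Walk.length_cons] at hq
      rw [SimpleGraph.dist_comm (u := r), SimpleGraph.dist_comm (u := r)] at h4 ⊢
      omega
  choose par hpar using hpar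
  let p : V → H := fun v => potAux par t (Γ.dist r v) v
  have step : ∀ u v, Γ.Adj u v → Γ.dist r v = Γ.dist r u + 1 → p v = p u * t u v := by
    intro u v huv hd
    have hvr : v ≠ r := by
      rintro rfl
      simp at hd
    obtain ⟨h1, h2⟩ := hpar v hvr
    have : par v = u := closer_unique hT r h1 huv h2 hd
    simp only [p]
    rw [hd, potAux, this]
  refine ⟨p, by simp [p, potAux], fun u v huv => ?_⟩
  rcases hT.dist_eq_dist_add_one_of_adj r huv with h | h
  · rw [step v u huv.symm h, ht u v huv]; simp
  · exact step u v huv h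

theorem exists_potential_two (hT : Γ.IsTree) (t : V → V → ZMod 2)
    (ht : ∀ u v, t u v = t v u) (r : V) :
    ∃ p : V → ZMod 2, p r = 0 ∧ ∀ u v, Γ.Adj u v → p v = p u + t u v := by
  obtain ⟨p, h0, hp⟩ := exists_potential hT (H := Multiplicative (ZMod 2))
    (fun u v => Multiplicative.ofAdd (t u v)) (fun u v _ => by
      rw [← ofAdd_neg, ht, ZModModule.neg_eq_self]) r
  exact ⟨fun v => (p v).toAdd, by simp [h0], fun u v h => by
    show (p v).toAdd = (p u).toAdd + t u v
    rw [hp u v h]; rfl⟩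

/-- A function constant along edges is constant on a connected graph. -/
theorem const_of_adj {X : Type*} (hc : Γ.Connected) (s : V → X)
    (h : ∀ u v, Γ.Adj u v → s u = s v) (u v : V) : s u = s v := by
  obtain ⟨q⟩ := hc u v
  induction q with
  | nil => rfl
  | cons hadj _ ih => exact (h _ _ hadj).trans ih

/-- A non-injective lazy graph map to a tree identifies two vertices at distance at most two. -/
theorem exists_fold {V' : Type*} {Γ' : SimpleGraph V'} (hT : Γ.IsTree) (hT' : Γ'.IsTree)
    (f : V → V') (hf : ∀ u v, Γ.Adj u v → Γ'.Adj (f u) (f v) ∨ f u = f v)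
    (hni : ¬ Function.Injective f) :
    ∃ u w, u ≠ w ∧ f u = f w ∧ (Γ.Adj u w ∨ ∃ v, Γ.Adj v u ∧ Γ.Adj v w) := by
  classical
  by_contra hcon
  push Not at hcon
  apply hni
  intro x y hxy
  obtain ⟨q, hq, -⟩ := (hT.connected x y).exists_path_of_dist
  by_contra hne
  -- maximize the distance from `f x` along the path
  have hn : 0 < q.length := by
    rcases Nat.eq_zero_or_pos q.length with h | h
    · exact absurd (SimpleGraph.Walk.eq_of_length_eq_zero h) hne
    · exact h
  let D : ℕ → ℕ := fun i => Γ'.dist (f x) (f (q.getVert i))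
  obtain ⟨m, hm, hmax⟩ := Finset.exists_max_image (Finset.range (q.length + 1)) D ⟨0, by simp⟩
  have hadj : ∀ i, i < q.length → Γ'.Adj (f (q.getVert i)) (f (q.getVert (i+1))) := by
    intro i hi
    have ha := q.adj_getVert_succ hi
    rcases hf _ _ ha with h | h
    · exact h
    · exact absurd ha (hcon _ _ ha.ne h).1
  have hD0 : D 0 = 0 := by simp [D]
  have hDn : D q.length = 0 := by simp [D, hxy]
  have hD1 : D 1 ≠ 0 := by
    have := hadj 0 hn
    have h2 := hT'.dist_eq_dist_add_one_of_adj (f x) this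
    simp only [SimpleGraph.Walk.getVert_zero, SimpleGraph.dist_self] at h2
    simp only [D]
    simp only [zero_add] at h2
    omega
  have hm1 := hmax 1 (by simp; omega)
  have hm0 : m ≠ 0 := by rintro rfl; omega
  have hmn : m ≠ q.length := by rintro rfl; omega
  have hmlt : m < q.length := by simp at hm; omega
  obtain ⟨k, rfl⟩ := Nat.exists_eq_succ_of_ne_zero hm0
  have a1 := hadj k (by omega)
  have a2 := hadj (k+1) (by omega)
  have d1 := hT'.dist_eq_dist_add_one_of_adj (f x) a1
  have d2 := hT'.dist_eq_dist_add_one_of_adj (f x) a2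
  have m1 := hmax k (by simp; omega)
  have m2 := hmax (k+1+1) (by simp; omega)
  simp only [D] at m1 m2
  have := closer_unique hT' (f x) a1 a2.symm (by simp only [Nat.succ_eq_add_one] at *; omega)
    (by simp only [Nat.succ_eq_add_one] at *; omega)
  have b1 := q.adj_getVert_succ (i := k) (by omega)
  have b2 := q.adj_getVert_succ (i := k+1) (by omega)
  refine (hcon (q.getVert k) (q.getVert (k+2)) ?_ this).2 (q.getVert (k+1)) b1.symm b2
  intro h
  have := hq.getVert_injOn (by simp; omega) (by simp; omega) h
  omega

/-- A group acting on a tree with a finite invariant set: a finite subgroup fixes a vertex or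
stabilizes an edge. -/
theorem fixed_vertex_or_edge {G : Type*} [Group G] [MulAction G V] (hT : Γ.IsTree)
    (hinv : ∀ (g : G) u v, Γ.Adj u v → Γ.Adj (g • u) (g • v))
    (H : Subgroup G) (hH : (H : Set G).Finite) :
    ∃ u w : V, (u = w ∨ Γ.Adj u w) ∧ ∀ h ∈ H, (h • u = u ∧ h • w = w) ∨ (h • u = w ∧ h • w = u) := by
  classical
  obtain ⟨x⟩ := hT.connected.nonempty
  have hdist_le : ∀ (g : G) a b, Γ.dist (g • a) (g • b) ≤ Γ.dist a b := by
    intro g a b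
    obtain ⟨q, hq⟩ := (hT.connected a b).exists_walk_length_eq_dist
    let F : Γ →g Γ := ⟨fun v => g • v, fun h => hinv g _ _ h⟩
    rw [← hq, ← SimpleGraph.Walk.length_map F q]
    exact SimpleGraph.dist_le _
  have hdist : ∀ (g : G) a b, Γ.dist (g • a) (g • b) = Γ.dist a b := by
    intro g a b
    refine le_antisymm (hdist_le g a b) ?_
    have := hdist_le g⁻¹ (g • a) (g • b)
    simpa using this
  let S : Finset G := hH.toFinset
  let F : V → ℕ := fun v => ∑ h ∈ S, (Γ.dist (h • x) v) ^ 2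
  have hF : ∀ g ∈ H, ∀ v, F (g • v) = F v := by
    intro g hg v
    simp only [F]
    refine Finset.sum_bij' (fun h _ => g⁻¹ * h) (fun h _ => g * h) ?_ ?_ ?_ ?_ ?_
    · intro a ha; simp only [S, Set.Finite.mem_toFinset, SetLike.mem_coe] at *
      exact H.mul_mem (H.inv_mem hg) ha
    · intro a ha; simp only [S, Set.Finite.mem_toFinset, SetLike.mem_coe] at *
      exact H.mul_mem hg ha
    · intro a _; simp
    · intro a _; simp
    · intro a _
      rw [← hdist g ((g⁻¹ * a) • x) v, ← mul_smul]; simp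
  obtain ⟨u, hu⟩ : ∃ u, ∀ v, F u ≤ F v := by
    have := WellFounded.has_min (measure F).wf Set.univ ⟨x, trivial⟩
    obtain ⟨u, -, hu⟩ := this
    exact ⟨u, fun v => not_lt.1 (hu v trivial)⟩
  -- strict convexity
  have hconv : ∀ a v b, Γ.Adj v a → Γ.Adj v b → a ≠ b → 2 * F v < F a + F b := by
    intro a v b ha hb hab
    simp only [F, Finset.mul_sum, ← Finset.sum_add_distrib]
    refine Finset.sum_lt_sum_of_nonempty ⟨1, by simp [S, H.one_mem]⟩ ?_
    intro h _
    have d1 := hT.dist_eq_dist_add_one_of_adj (h • x) ha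
    have d2 := hT.dist_eq_dist_add_one_of_adj (h • x) hb
    by_cases hh : Γ.dist (h • x) v = Γ.dist (h • x) a + 1 ∧ Γ.dist (h • x) v = Γ.dist (h • x) b + 1
    · exact absurd (closer_unique hT (h • x) ha.symm hb.symm hh.1 hh.2) hab
    · generalize Γ.dist (h • x) v = A at *
      generalize Γ.dist (h • x) a = B at *
      generalize Γ.dist (h • x) b = C at *
      rcases d1 with d1 | d1 <;> rcases d2 with d2 | d2
      · exact absurd ⟨d1, d2⟩ hh
      · subst d2; subst d1; nlinarith
      · subst d2; subst d1; nlinarith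
      · subst d2; subst d1
        have : (A+1)^2 = A^2+2*A+1 := by ring
        omega
  -- two minimizers are equal or adjacent
  have hmin : ∀ w, F w = F u → u = w ∨ Γ.Adj u w := by
    intro w hw
    obtain ⟨q, hq, -⟩ := (hT.connected u w).exists_path_of_dist
    by_contra hcon
    push Not at hcon
    have hlen : 2 ≤ q.length := by
      rcases q with _ | ⟨h, q⟩
      · exact absurd rfl hcon.1
      · rcases q with _ | ⟨h', q⟩
        · exact absurd h hcon.2
        · simp
    have hinc : ∀ i, i < q.length → 1 ≤ i → F (q.getVert i) < F (q.getVert (i+1)) := by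
      intro i hi h1
      induction i with
      | zero => omega
      | succ i ih =>
        have b1 := q.adj_getVert_succ (i := i) (by omega)
        have b2 := q.adj_getVert_succ (i := i+1) (by omega)
        have hne : q.getVert i ≠ q.getVert (i+2) := by
          intro h
          have := hq.getVert_injOn (by simp; omega) (by simp; omega) h
          omega
        have c := hconv _ _ _ b1.symm b2 hne
        rcases Nat.eq_zero_or_pos i with h0 | h0
        · subst h0
          have := hu (q.getVert 1)
          simp only [SimpleGraph.Walk.getVert_zero] at c
          simp only [zero_add] at *
          omega
        · have := ih (by omega) h0
          omega
    have : ∀ i, i ≤ q.length → 2 ≤ i → F u < F (q.getVert i) := by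
      intro i hi h2
      induction i with
      | zero => omega
      | succ i ih =>
        have h3 := hinc i (by omega) (by omega)
        have := hu (q.getVert i)
        omega
    have := this q.length le_rfl hlen
    simp at this
    omega
  by_cases hfix : ∀ h ∈ H, h • u = u
  · exact ⟨u, u, Or.inl rfl, fun h hh => Or.inl ⟨hfix h hh, hfix h hh⟩⟩
  · push Not at hfix
    obtain ⟨g, hg, hgu⟩ := hfix
    have hadj : ∀ h ∈ H, h • u = u ∨ Γ.Adj u (h • u) := fun h hh => by
      rcases hmin (h • u) (hF h hh u) with h | h
      · exact Or.inl h.symm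
      · exact Or.inr h
    have hug : Γ.Adj u (g • u) := (hadj g hg).resolve_left hgu
    have tri : ∀ a b, Γ.Adj u a → Γ.Adj u b → (a = b ∨ Γ.Adj a b) → a = b := by
      intro a b ha hb hab
      rcases hab with h | h
      · exact h
      · have := hT.dist_eq_dist_add_one_of_adj u h
        rw [SimpleGraph.dist_eq_one_iff_adj.2 ha, SimpleGraph.dist_eq_one_iff_adj.2 hb] at this
        omega
    have hminH : ∀ a b, a ∈ H → b ∈ H → a • u = b • u ∨ Γ.Adj (a • u) (b • u) := by
      intro a b ha hb
      rcases hadj (a⁻¹ * b) (H.mul_mem (H.inv_mem ha) hb) with h | h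
      · left; rw [mul_smul, inv_smul_eq_iff] at h; exact h.symm
      · right
        have := hinv a _ _ h
        rwa [← mul_smul, mul_inv_cancel_left] at this
    refine ⟨u, g • u, Or.inr hug, fun h hh => ?_⟩
    rcases hadj h hh with h1 | h1
    · left
      refine ⟨h1, ?_⟩
      have h2 : Γ.Adj u (h • g • u) := by
        have := hinv h _ _ hug; rwa [h1] at this
      rw [← mul_smul] at h2 ⊢
      exact (tri _ _ hug h2 (hminH g (h * g) hg (H.mul_mem hh hg))).symm
    · right
      have e1 : h • u = g • u := tri _ _ h1 hug (hminH h g hh hg)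
      refine ⟨e1, ?_⟩
      by_contra hne
      have h2 : Γ.Adj (g • u) (h • g • u) := by
        have := hinv h _ _ hug; rwa [e1] at this
      have h3 : Γ.Adj u (h • g • u) := by
        rcases hadj (h * g) (H.mul_mem hh hg) with h | h
        · rw [mul_smul] at h; exact absurd h hne
        · rwa [mul_smul] at h
      exact h2.ne (tri _ _ hug h3 (Or.inr h2))

end Tree
end VF

namespace VF

universe u v w

section GTdef
variable {G : Type u} [Group G]

/-- Tree with a cocompact action of `G` with finite stabilizers in which
every finite subgroup fixes a vertex. -/
structure IsGT (K : Subgroup G) (V : Type v) [MulAction G V] (Γ : SimpleGraph V) : Prop where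
  tree : Γ.IsTree
  inv : ∀ (g : G) u v, Γ.Adj u v → Γ.Adj (g • u) (g • v)
  stab : ∀ v : V, {g : G | g • v = v}.Finite
  fix : ∀ H : Subgroup G, (H : Set G).Finite → ∃ v : V, ∀ h ∈ H, h • v = v
  fin : Finite (MulAction.orbitRel.Quotient K V)

/-- The set of elements generating the stabilizer of a folded vertex. -/
def SS {V : Type v} [MulAction G V] (u₁ u₂ : V) : Set G :=
  {g | g • u₁ = u₁ ∨ g • u₂ = u₂ ∨ g • u₁ = u₂}

/-- Lazy graph maps. -/
def Lazy {V : Type v} {W : Type w} (Γ : SimpleGraph V) (Δ : SimpleGraph W) (f : V → W) : Prop :=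
  ∀ u v, Γ.Adj u v → Δ.Adj (f u) (f v) ∨ f u = f v

/-- Orbit count. -/
noncomputable def oc (K : Subgroup G) (V : Type v) [MulAction G V] : ℕ :=
  Nat.card (MulAction.orbitRel.Quotient K V)

end GTdef

section Fold
variable {G : Type u} [Group G] {V : Type v} [MulAction G V]

/-- membership in the block -/
def Blk (u₁ u₂ : V) (x : V) : Prop :=
  ∃ γ ∈ Subgroup.closure (SS (G := G) u₁ u₂), x = γ • u₁ ∨ x = γ • u₂

theorem blk_const (u₁ u₂ : V) {X : Type w} (F : V → X) (hF : ∀ g : G, F (g • u₁) = F (g • u₂))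
    (g : G) (x : V) (hx : Blk (G := G) u₁ u₂ x) : F (g • x) = F (g • u₁) := by
  have key : ∀ γ ∈ Subgroup.closure (SS (G := G) u₁ u₂), ∀ g : G, F ((g * γ) • u₁) = F (g • u₁) := by
    intro γ hγ
    induction hγ using Subgroup.closure_induction with
    | mem s hs =>
      intro g
      rcases hs with hs | hs | hs
      · rw [mul_smul, hs]
      · rw [hF, mul_smul, hs, hF]
      · rw [mul_smul, hs, hF]
    | one => intro g; simp
    | mul a b _ _ ha hb => intro g; rw [← mul_assoc, hb, ha]
    | inv a _ ha => intro g; rw [← ha]; simp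
  obtain ⟨γ, hγ, rfl | rfl⟩ := hx
  · rw [← mul_smul, key γ hγ]
  · rw [← mul_smul, ← hF, key γ hγ]

theorem blk_mem {u₁ u₂ : V} {x : V} {h : G} (hx : Blk (G := G) u₁ u₂ x)
    (hy : Blk (G := G) u₁ u₂ (h • x)) : h ∈ Subgroup.closure (SS (G := G) u₁ u₂) := by
  set C := Subgroup.closure (SS (G := G) u₁ u₂)
  have sub : ∀ s ∈ SS (G := G) u₁ u₂, s ∈ C := fun s hs => Subgroup.subset_closure hs
  obtain ⟨γ, hγ, hx⟩ := hx
  obtain ⟨δ, hδ, hy⟩ := hy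
  have : δ⁻¹ * h * γ ∈ C := by
    rcases hx with rfl | rfl <;> rcases hy with hy | hy
    · apply sub; left; rw [mul_smul, mul_smul, hy, inv_smul_smul]
    · apply sub; right; right; rw [mul_smul, mul_smul, hy, inv_smul_smul]
    · rw [← inv_mem_iff]; apply sub; right; right
      rw [inv_smul_eq_iff, mul_smul, mul_smul, hy, inv_smul_smul]
    · apply sub; right; left; rw [mul_smul, mul_smul, hy, inv_smul_smul]
  have h2 := C.mul_mem (C.mul_mem hδ this) (C.inv_mem hγ)
  simpa [mul_assoc] using h2

theorem blk_smul {u₁ u₂ : V} {x : V} {h : G} (hx : Blk (G := G) u₁ u₂ x)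
    (hh : h ∈ Subgroup.closure (SS (G := G) u₁ u₂)) : Blk (G := G) u₁ u₂ (h • x) := by
  obtain ⟨γ, hγ, hx⟩ := hx
  refine ⟨h * γ, Subgroup.mul_mem _ hh hγ, ?_⟩
  rcases hx with rfl | rfl
  · left; rw [mul_smul]
  · right; rw [mul_smul]

/-- The folding equivalence relation. -/
def foldSetoid (G : Type u) [Group G] {V : Type v} [MulAction G V] (u₁ u₂ : V) : Setoid V where
  r x y := x = y ∨ ∃ g : G, Blk (G := G) u₁ u₂ (g • x) ∧ Blk (G := G) u₁ u₂ (g • y)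
  iseqv := by
    refine ⟨fun x => Or.inl rfl, ?_, ?_⟩
    · rintro x y (h | ⟨g, h1, h2⟩)
      · exact Or.inl h.symm
      · exact Or.inr ⟨g, h2, h1⟩
    · rintro x y z (rfl | ⟨g, h1, h2⟩) (rfl | ⟨g', h3, h4⟩)
      · exact Or.inl rfl
      · exact Or.inr ⟨g', h3, h4⟩
      · exact Or.inr ⟨g, h1, h2⟩
      · right
        refine ⟨g', ?_, h4⟩
        have : g' * g⁻¹ ∈ Subgroup.closure (SS (G := G) u₁ u₂) := by
          apply blk_mem h2
          rwa [← mul_smul, inv_mul_cancel_right]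
        have := blk_smul h1 this
        rwa [← mul_smul, inv_mul_cancel_right] at this

theorem foldSetoid_smul (u₁ u₂ : V) (g : G) {x y : V} (h : foldSetoid G u₁ u₂ x y) :
    foldSetoid G u₁ u₂ (g • x) (g • y) := by
  rcases h with rfl | ⟨h, h1, h2⟩
  · exact Or.inl rfl
  · right
    refine ⟨h * g⁻¹, ?_, ?_⟩ <;> rwa [← mul_smul, inv_mul_cancel_right]

/-- action on the quotient -/
@[reducible] def foldAction (G : Type u) [Group G] {V : Type v} [MulAction G V] (u₁ u₂ : V) :
    MulAction G (Quotient (foldSetoid G u₁ u₂)) where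
  smul g := Quotient.map (fun x => g • x) (fun _ _ h => foldSetoid_smul u₁ u₂ g h)
  one_smul := by
    intro x
    induction x using Quotient.inductionOn with
    | _ x => exact congrArg _ (one_smul G x)
  mul_smul := by
    intro g h x
    induction x using Quotient.inductionOn with
    | _ x => exact congrArg _ (mul_smul g h x)

/-- quotient graph -/
def foldGraph (G : Type u) [Group G] {V : Type v} [MulAction G V] (Γ : SimpleGraph V) (u₁ u₂ : V) :
    SimpleGraph (Quotient (foldSetoid G u₁ u₂)) where
  Adj a b := a ≠ b ∧ ∃ x y, Γ.Adj x y ∧ Quotient.mk _ x = a ∧ Quotient.mk _ y = b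
  symm := ⟨by
    rintro a b ⟨h, x, y, h1, h2, h3⟩
    exact ⟨h.symm, y, x, h1.symm, h3, h2⟩⟩
  loopless := ⟨fun a h => h.1 rfl⟩

theorem fold_step {K : Subgroup G} (hK : ∀ k ∈ K, IsOfFinOrder k → k = 1)
    {Γ : SimpleGraph V} (h : IsGT K V Γ) (u₁ u₂ : V) (hne : u₁ ≠ u₂)
    (hadj : Γ.Adj u₁ u₂ ∨ ∃ v, Γ.Adj v u₁ ∧ Γ.Adj v u₂)
    (hfin : (Subgroup.closure (SS (G := G) u₁ u₂) : Set G).Finite) :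
    ∃ (W : Type v) (_ : MulAction G W) (Δ : SimpleGraph W) (c : V → W),
      IsGT K W Δ ∧ Function.Surjective c ∧ (∀ (g : G) x, c (g • x) = g • c x) ∧ Lazy Γ Δ c ∧
      oc K W < oc K V ∧ (∀ a b, Δ.Adj a b → ∃ x y, Γ.Adj x y ∧ c x = a ∧ c y = b) ∧
      c u₁ = c u₂ ∧
      ∀ {X : Type w} (F : V → X), (∀ g : G, F (g • u₁) = F (g • u₂)) → ∃ F' : W → X, ∀ x, F' (c x) = F x := by
  classical
  let W := Quotient (foldSetoid G u₁ u₂)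
  let act : MulAction G W := foldAction G u₁ u₂
  let c : V → W := Quotient.mk _
  have hc : Function.Surjective c := Quotient.mk_surjective
  have hce : ∀ (g : G) x, c (g • x) = g • c x := fun g x => rfl
  have b1 : Blk (G := G) u₁ u₂ u₁ := ⟨1, Subgroup.one_mem _, by simp⟩
  have b2 : Blk (G := G) u₁ u₂ u₂ := ⟨1, Subgroup.one_mem _, by simp⟩
  have hc12 : c u₁ = c u₂ := Quotient.sound (Or.inr ⟨1, by simpa using b1, by simpa using b2⟩)
  have hdesc : ∀ {X : Type w} (F : V → X), (∀ g : G, F (g • u₁) = F (g • u₂)) →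
      ∃ F' : W → X, ∀ x, F' (c x) = F x := by
    intro X F hF
    refine ⟨Quotient.lift F ?_, fun x => rfl⟩
    rintro x y (rfl | ⟨g, h1, h2⟩)
    · rfl
    · have e1 := blk_const u₁ u₂ F hF g⁻¹ _ h1
      have e2 := blk_const u₁ u₂ F hF g⁻¹ _ h2
      rw [inv_smul_smul] at e1 e2
      rw [e1, e2]
  have hdesc0 : ∀ {X : Type} (F : V → X), (∀ g : G, F (g • u₁) = F (g • u₂)) →
      ∃ F' : W → X, ∀ x, F' (c x) = F x := by
    intro X F hF
    refine ⟨Quotient.lift F ?_, fun x => rfl⟩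
    rintro x y (rfl | ⟨g, h1, h2⟩)
    · rfl
    · have e1 := blk_const u₁ u₂ F hF g⁻¹ _ h1
      have e2 := blk_const u₁ u₂ F hF g⁻¹ _ h2
      rw [inv_smul_smul] at e1 e2
      rw [e1, e2]
  let Δ := foldGraph G Γ u₁ u₂
  have hlazy : Lazy Γ Δ c := by
    intro x y hxy
    by_cases e : c x = c y
    · exact Or.inr e
    · exact Or.inl ⟨e, x, y, hxy, rfl, rfl⟩
  have hconn : Δ.Connected := by
    have hr : ∀ x y, Γ.Reachable x y → Δ.Reachable (c x) (c y) := by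
      rintro x y ⟨q⟩
      induction q with
      | nil => exact SimpleGraph.Reachable.refl _
      | cons hxy _ ih =>
        rcases hlazy _ _ hxy with h1 | h1
        · exact h1.reachable.trans ih
        · rw [h1]; exact ih
    have : Nonempty W := ⟨c u₁⟩
    refine ⟨fun a b => ?_⟩
    obtain ⟨x, rfl⟩ := hc a
    obtain ⟨y, rfl⟩ := hc b
    exact hr x y (h.tree.connected x y)
  have htree : Δ.IsTree := by
    refine isTree_of_potential hconn ?_
    intro t ht
    obtain ⟨p, -, hp⟩ := exists_potential_two h.tree
      (fun x y => if c x = c y then 0 else t (c x) (c y))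
      (fun x y => by simp only [ht (c x) (c y), eq_comm]) u₁
    obtain ⟨p', hp'⟩ := hdesc0 p (by
      intro g
      have e : c (g • u₁) = c (g • u₂) := by rw [hce, hce, hc12]
      rcases hadj with h1 | ⟨v, h1, h2⟩
      · rw [hp _ _ (h.inv g _ _ h1), if_pos e, add_zero]
      · rw [hp _ _ (h.inv g _ _ h1), hp _ _ (h.inv g _ _ h2), e])
    refine ⟨p', ?_⟩
    rintro a b ⟨hab, x, y, hxy, rfl, rfl⟩
    have := hp x y hxy
    rw [if_neg hab] at this
    rw [show (Quotient.mk _ x : W) = c x from rfl, show (Quotient.mk _ y : W) = c y from rfl,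
      hp', hp', this]
  have hstab : ∀ a : W, {g : G | g • a = a}.Finite := by
    intro a
    obtain ⟨x, rfl⟩ := hc a
    have hsub : ∀ g : G, g • c x = c x → g • x = x ∨
        ∃ g' : G, Blk (G := G) u₁ u₂ (g' • g • x) ∧ Blk (G := G) u₁ u₂ (g' • x) := by
      intro g hg
      exact Quotient.exact (s := foldSetoid G u₁ u₂) hg
    by_cases hx : ∃ g₀ : G, Blk (G := G) u₁ u₂ (g₀ • x)
    · obtain ⟨g₀, hg₀⟩ := hx
      refine ((h.stab x).union (hfin.image (fun γ => g₀⁻¹ * γ * g₀))).subset ?_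
      intro g hg
      rcases hsub g hg with h1 | ⟨g', h1, h2⟩
      · exact Or.inl h1
      · right
        refine ⟨g₀ * g * g₀⁻¹, ?_, by group⟩
        have m1 : g' * g₀⁻¹ ∈ Subgroup.closure (SS (G := G) u₁ u₂) := by
          apply blk_mem hg₀
          rwa [← mul_smul, inv_mul_cancel_right]
        have m2 : g' * g * g₀⁻¹ ∈ Subgroup.closure (SS (G := G) u₁ u₂) := by
          apply blk_mem hg₀
          rw [← mul_smul, inv_mul_cancel_right]
          rwa [← mul_smul] at h1
        have := Subgroup.mul_mem _ (Subgroup.inv_mem _ m1) m2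
        have e : (g' * g₀⁻¹)⁻¹ * (g' * g * g₀⁻¹) = g₀ * g * g₀⁻¹ := by group
        rwa [e] at this
    · refine (h.stab x).subset ?_
      intro g hg
      rcases hsub g hg with h1 | ⟨g', h1, h2⟩
      · exact h1
      · exact absurd ⟨g', h2⟩ hx
  -- orbits
  have hstep : ∀ x y, MulAction.orbitRel K V x y → MulAction.orbitRel K W (c x) (c y) := by
    rintro x y ⟨k, hk⟩
    exact ⟨k, by rw [← hk]; rfl⟩
  let q : MulAction.orbitRel.Quotient K V → MulAction.orbitRel.Quotient K W :=
    Quotient.map c hstep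
  have hq : Function.Surjective q := by
    intro a
    induction a using Quotient.inductionOn with
    | _ a =>
      obtain ⟨x, rfl⟩ := hc a
      exact ⟨Quotient.mk _ x, rfl⟩
  have := h.fin
  refine ⟨W, act, Δ, c, ⟨htree, ?_, hstab, ?_, Finite.of_surjective q hq⟩, hc, hce, hlazy, ?_, ?_, hc12, hdesc⟩
  · rintro g a b ⟨hab, x, y, hxy, rfl, rfl⟩
    exact ⟨fun e => hab (MulAction.injective g e), g • x, g • y, h.inv g _ _ hxy, rfl, rfl⟩
  · intro H hH
    obtain ⟨v, hv⟩ := h.fix H hH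
    exact ⟨c v, fun g hg => by rw [← hce, hv g hg]⟩
  · by_contra hlt
    have hinj := (hq.bijective_of_nat_card_le (not_lt.1 hlt)).1
    have e : (Quotient.mk _ u₁ : MulAction.orbitRel.Quotient K V) = Quotient.mk _ u₂ := by
      apply hinj
      show (Quotient.mk _ (c u₁) : MulAction.orbitRel.Quotient K W) = Quotient.mk _ (c u₂)
      rw [hc12]
    obtain ⟨⟨k, hk⟩, e⟩ := Quotient.exact (s := MulAction.orbitRel K V) e.symm
    have hkC : k ∈ Subgroup.closure (SS (G := G) u₁ u₂) := by
      apply Subgroup.subset_closure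
      exact Or.inr (Or.inr e)
    have : IsOfFinOrder k := by
      have : Finite (Subgroup.closure (SS (G := G) u₁ u₂)) := hfin
      have := isOfFinOrder_of_finite (⟨k, hkC⟩ : Subgroup.closure (SS (G := G) u₁ u₂))
      exact (Subgroup.subtype _).isOfFinOrder this
    have := hK k hk this
    subst this
    exact hne (by simpa using e)
  · rintro a b ⟨-, x, y, h1, h2, h3⟩
    exact ⟨x, y, h1, h2, h3⟩

end Fold
end VF

namespace VF

universe u v w

section Misc

theorem orbit_fin_iff {G : Type u} [Group G] (K : Subgroup G) (V : Type v) [MulAction G V] :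
    Finite (MulAction.orbitRel.Quotient K V) ↔
      ∃ A : Set V, A.Finite ∧ ∀ v, ∃ k ∈ K, k • v ∈ A := by
  classical
  constructor
  · intro h
    refine ⟨Set.range (fun q : MulAction.orbitRel.Quotient K V => q.out), Set.finite_range _, ?_⟩
    intro v
    have : (MulAction.orbitRel K V) (Quotient.mk _ v : MulAction.orbitRel.Quotient K V).out v :=
      Quotient.mk_out (s := MulAction.orbitRel K V) v
    obtain ⟨⟨k, hk⟩, e⟩ := this
    exact ⟨k, hk, Quotient.mk _ v, e.symm⟩
  · rintro ⟨A, hA, h⟩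
    have := hA.to_subtype
    refine Finite.of_surjective (fun a : A => (Quotient.mk _ a.1 : MulAction.orbitRel.Quotient K V)) ?_
    intro q
    induction q using Quotient.inductionOn with
    | _ v =>
      obtain ⟨k, hk, hv⟩ := h v
      exact ⟨⟨_, hv⟩, Quotient.sound ⟨⟨k, hk⟩, rfl⟩⟩

theorem edge_fin {G : Type u} [Group G] {V : Type v} [MulAction G V] {Γ : SimpleGraph V}
    (hT : Γ.IsTree) (hinv : ∀ (g : G) u v, Γ.Adj u v → Γ.Adj (g • u) (g • v)) (hfg : Group.FG G)
    (hfin : ∃ A : Set V, A.Finite ∧ ∀ v, ∃ g : G, g • v ∈ A) :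
    ∃ E : Set (V × V), E.Finite ∧ (∀ e ∈ E, Γ.Adj e.1 e.2) ∧
      ∀ u v, Γ.Adj u v → ∃ g : G, (g • u, g • v) ∈ E := by
  classical
  obtain ⟨A, hA, hAV⟩ := hfin
  obtain ⟨S, hS⟩ := hfg.out
  obtain ⟨v₀⟩ := hT.connected.nonempty
  let P : ∀ a b, Γ.Walk a b := fun a b => (hT.connected a b).some
  -- targets
  let B : Set V := A ∪ (fun s : G => s • v₀) '' (S : Set G)
  have hB : B.Finite := hA.union (S.finite_toSet.image _)
  let D : V → Set (V × V) := fun b => (fun d : Γ.Dart => d.toProd) '' {d | d ∈ (P v₀ b).darts}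
  let D' : V → Set (V × V) := fun b => Prod.swap '' D b
  have hD : ∀ b, (D b).Finite := fun b => ((P v₀ b).darts.finite_toSet).image _
  let E := ⋃ b ∈ B, (D b ∪ D' b)
  have hE : E.Finite := hB.biUnion (fun b _ => (hD b).union ((hD b).image _))
  have hEadj : ∀ e ∈ E, Γ.Adj e.1 e.2 := by
    intro e he
    simp only [E, Set.mem_iUnion] at he
    obtain ⟨b, -, he⟩ := he
    rcases he with ⟨d, -, rfl⟩ | ⟨_, ⟨d, -, rfl⟩, rfl⟩
    · exact d.adj
    · exact d.adj.symm
  let Γ' : SimpleGraph V :=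
    { Adj := fun u v => ∃ g : G, (g • u, g • v) ∈ E
      symm := ⟨by
        rintro u v ⟨g, hg⟩
        refine ⟨g, ?_⟩
        simp only [E, Set.mem_iUnion] at hg ⊢
        obtain ⟨b, hb, he⟩ := hg
        refine ⟨b, hb, ?_⟩
        rcases he with h | ⟨d, h1, h2⟩
        · right; exact ⟨_, h, rfl⟩
        · left
          have : d = (g • v, g • u) := by rw [← Prod.swap_swap d, h2]; rfl
          rwa [← this]⟩
      loopless := ⟨by
        rintro u ⟨g, hg⟩
        exact (hEadj _ hg).ne rfl⟩ }
  have hle : Γ' ≤ Γ := by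
    rintro u v ⟨g, hg⟩
    have := hinv g⁻¹ _ _ (hEadj _ hg)
    simpa using this
  have hinv' : ∀ (g : G) u v, Γ'.Reachable u v → Γ'.Reachable (g • u) (g • v) := by
    rintro g u v ⟨q⟩
    induction q with
    | nil => exact SimpleGraph.Reachable.refl _
    | cons h _ ih =>
      refine SimpleGraph.Reachable.trans (SimpleGraph.Adj.reachable ?_) ih
      obtain ⟨k, hk⟩ := h
      refine ⟨k * g⁻¹, ?_⟩
      simpa [← mul_smul] using hk
  have hrB : ∀ b ∈ B, Γ'.Reachable v₀ b := by
    intro b hb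
    have : ∀ {x y : V} (q : Γ.Walk x y), (∀ d ∈ q.darts, d.toProd ∈ D b) → Γ'.Reachable x y := by
      intro x y q
      induction q with
      | nil => intro _; exact SimpleGraph.Reachable.refl _
      | @cons x y z h q ih =>
        intro hd
        refine SimpleGraph.Reachable.trans (SimpleGraph.Adj.reachable ?_)
          (ih (fun d hd' => hd d (by simp [hd'])))
        refine ⟨1, ?_⟩
        rw [one_smul, one_smul]
        simp only [E, Set.mem_iUnion]
        exact ⟨b, hb, Or.inl (hd ⟨(x, y), h⟩ (by simp))⟩
    exact this (P v₀ b) (fun d hd => ⟨d, hd, rfl⟩)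
  have hrg : ∀ g : G, Γ'.Reachable v₀ (g • v₀) := by
    intro g
    have hg : g ∈ Subgroup.closure (S : Set G) := by rw [hS]; trivial
    induction hg using Subgroup.closure_induction with
    | mem s hs => exact hrB _ (Or.inr ⟨s, hs, rfl⟩)
    | one => simp
    | mul a b _ _ ha hb =>
      rw [mul_smul]
      exact ha.trans (hinv' a _ _ hb)
    | inv a _ ha =>
      have := hinv' a⁻¹ _ _ ha
      rw [inv_smul_smul] at this
      exact this.symm
  have hconn : Γ'.Connected := by
    have : Nonempty V := ⟨v₀⟩
    have h1 : ∀ v, Γ'.Reachable v₀ v := by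
      intro v
      obtain ⟨g, hg⟩ := hAV v
      have := hinv' g⁻¹ _ _ (hrB _ (Or.inl hg))
      rw [inv_smul_smul] at this
      exact (hrg g⁻¹).trans this
    exact ⟨fun a b => (h1 a).symm.trans (h1 b)⟩
  refine ⟨E, hE, hEadj, ?_⟩
  intro u v huv
  have hbr := SimpleGraph.isAcyclic_iff_forall_adj_isBridge.1 hT.isAcyclic huv
  by_contra hcon
  rw [SimpleGraph.isBridge_iff] at hbr
  apply hbr
  have hle2 : Γ' ≤ Γ.deleteEdges {s(u, v)} := by
    intro a b hab
    rw [SimpleGraph.deleteEdges_adj]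
    refine ⟨hle hab, ?_⟩
    intro h
    simp only [Set.mem_singleton_iff, Sym2.eq_iff] at h
    rcases h with ⟨rfl, rfl⟩ | ⟨rfl, rfl⟩
    · exact hcon hab
    · exact hcon hab.symm
  exact (hconn u v).mono hle2

theorem exists_paths {G : Type u} [Group G] {V : Type v} [MulAction G V] {Γ : SimpleGraph V}
    (hT : Γ.IsTree) (hinv : ∀ (g : G) u v, Γ.Adj u v → Γ.Adj (g • u) (g • v)) :
    ∃ (len : V → V → ℕ) (pt : V → V → ℕ → V), (∀ a b, pt a b 0 = a) ∧
      (∀ a b j, len a b ≤ j → pt a b j = b) ∧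
      (∀ a b j, Γ.Adj (pt a b j) (pt a b (j+1)) ∨ pt a b j = pt a b (j+1)) ∧
      (∀ (g : G) a b, len (g • a) (g • b) = len a b) ∧
      (∀ (g : G) a b j, pt (g • a) (g • b) j = g • pt a b j) := by
  classical
  choose P hP hP' using fun a b => (hT.connected a b).exists_path_of_dist
  have key : ∀ (g : G) a b, ∃ F : Γ →g Γ, (∀ x, F x = g • x) ∧
      ∀ j, ((P (g • a) (g • b))).getVert j = F ((P a b).getVert j) ∧
        (P (g • a) (g • b)).length = (P a b).length := by
    intro g a b
    let F : Γ →g Γ := ⟨fun v => g • v, fun h => hinv g _ _ h⟩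
    have hF : Function.Injective F := MulAction.injective g
    have e := hT.isAcyclic.subsingleton_path (g • a) (g • b) |>.elim
      ⟨_, hP (g • a) (g • b)⟩ ⟨(P a b).map F, SimpleGraph.Walk.IsPath.map hF (hP a b)⟩
    have e' : P (g • a) (g • b) = (P a b).map F := congrArg Subtype.val e
    refine ⟨F, fun x => rfl, fun j => ⟨?_, ?_⟩⟩
    · rw [e', SimpleGraph.Walk.getVert_map]
    · rw [e', SimpleGraph.Walk.length_map]
  refine ⟨fun a b => (P a b).length, fun a b j => (P a b).getVert j, ?_, ?_, ?_, ?_, ?_⟩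
  · intro a b; simp
  · intro a b j hj; exact SimpleGraph.Walk.getVert_of_length_le _ hj
  · intro a b j
    by_cases hj : j < (P a b).length
    · exact Or.inl ((P a b).adj_getVert_succ hj)
    · right
      show (P a b).getVert j = (P a b).getVert (j + 1)
      rw [SimpleGraph.Walk.getVert_of_length_le _ (by omega),
        SimpleGraph.Walk.getVert_of_length_le _ (by omega)]
  · intro g a b
    obtain ⟨F, -, h⟩ := key g a b
    exact (h 0).2
  · intro g a b j
    obtain ⟨F, hF, h⟩ := key g a b
    exact (h j).1.trans (hF _)

/-- Equivariant maps exist on sets when stabilizers have fixed points in the target. -/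
theorem exists_equivariant {G : Type u} [Group G] {V : Type v} [MulAction G V]
    {G' : Type*} [Group G'] {V' : Type*} [MulAction G' V'] (φ : G →* G')
    (h : ∀ v : V, ∃ y : V', ∀ g : G, g • v = v → φ g • y = y) :
    ∃ f : V → V', ∀ (g : G) v, f (g • v) = φ g • f v := by
  classical
  choose y hy using h
  let r : V → V := fun v => (Quotient.mk _ v : MulAction.orbitRel.Quotient G V).out
  have hr : ∀ v, ∃ g : G, g • r v = v := by
    intro v
    have : (MulAction.orbitRel G V) (Quotient.mk _ v : MulAction.orbitRel.Quotient G V).out v :=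
      Quotient.mk_out (s := MulAction.orbitRel G V) v
    obtain ⟨g, e⟩ := (MulAction.orbitRel G V).symm this
    exact ⟨g, e⟩
  have hr2 : ∀ (g : G) v, r (g • v) = r v := by
    intro g v
    have : (Quotient.mk _ (g • v) : MulAction.orbitRel.Quotient G V) = Quotient.mk _ v :=
      Quotient.sound ⟨g, rfl⟩
    simp only [r]; rw [this]
  choose k hk using hr
  refine ⟨fun v => φ (k v) • y (r v), ?_⟩
  intro g v
  show φ (k (g • v)) • y (r (g • v)) = φ g • φ (k v) • y (r v)
  rw [hr2, ← mul_smul, ← map_mul]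
  have : (g * k v)⁻¹ * k (g • v) ∈ {g : G | g • r v = r v} := by
    have e1 := hk (g • v)
    rw [hr2] at e1
    show ((g * k v)⁻¹ * k (g • v)) • r v = r v
    rw [mul_smul, inv_smul_eq_iff, mul_smul, hk v, e1]
  have e := hy (r v) _ this
  rw [map_mul, mul_smul, map_inv, inv_smul_eq_iff] at e
  exact e

end Misc
end VF

namespace VF

universe u v w

section Sub
variable {G : Type u} [Group G] {V : Type v} [MulAction G V]

/-- interior subdivision points -/
def SubPt (Γ : SimpleGraph V) (col : V → Prop) (n : V → V → ℕ) (x : V × V × ℕ) : Prop :=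
  (Γ.Adj x.1 x.2.1 ∧ col x.1 ∧ ¬ col x.2.1) ∧ 0 < x.2.2 ∧ x.2.2 < n x.1 x.2.1

/-- vertices of the subdivision -/
abbrev SubV (Γ : SimpleGraph V) (col : V → Prop) (n : V → V → ℕ) : Type v :=
  V ⊕ {x : V × V × ℕ // SubPt Γ col n x}

/-- action on the subdivision -/
@[reducible] def subAction {Γ : SimpleGraph V} {col : V → Prop} {n : V → V → ℕ}
    (hinv : ∀ (g : G) u v, Γ.Adj u v → Γ.Adj (g • u) (g • v))
    (hcol : ∀ (g : G) u, col (g • u) ↔ col u)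
    (hn : ∀ (g : G) u v, n (g • u) (g • v) = n u v) : MulAction G (SubV Γ col n) where
  smul g := Sum.map (fun v => g • v) (fun x => ⟨(g • x.1.1, g • x.1.2.1, x.1.2.2), by
    obtain ⟨⟨h1, h2, h3⟩, h4, h5⟩ := x.2
    exact ⟨⟨hinv g _ _ h1, (hcol g _).2 h2, fun h => h3 ((hcol g _).1 h)⟩, h4, by
      rw [hn]; exact h5⟩⟩)
  one_smul := by
    rintro (x | x)
    · exact congrArg Sum.inl (one_smul G x)
    · refine congrArg Sum.inr (Subtype.ext ?_)
      simp
  mul_smul := by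
    rintro g h (x | x)
    · exact congrArg Sum.inl (mul_smul g h x)
    · refine congrArg Sum.inr (Subtype.ext ?_)
      simp [mul_smul]

open Classical in
/-- points along a subdivided edge -/
noncomputable def subW (Γ : SimpleGraph V) (col : V → Prop) (n : V → V → ℕ) (a b : V) (j : ℕ) :
    SubV Γ col n :=
  if h : SubPt Γ col n (a, b, j) then Sum.inr ⟨(a, b, j), h⟩ else if j = 0 then Sum.inl a else Sum.inl b

/-- subdivided graph -/
def subGraph (Γ : SimpleGraph V) (col : V → Prop) (n : V → V → ℕ) : SimpleGraph (SubV Γ col n) where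
  Adj x y := x ≠ y ∧ ∃ a b j, (Γ.Adj a b ∧ col a ∧ ¬ col b) ∧ j < n a b ∧
    ((x = subW Γ col n a b j ∧ y = subW Γ col n a b (j+1)) ∨
     (y = subW Γ col n a b j ∧ x = subW Γ col n a b (j+1)))
  symm := ⟨by
    rintro x y ⟨h, a, b, j, h1, h2, h3⟩
    exact ⟨h.symm, a, b, j, h1, h2, h3.symm⟩⟩
  loopless := ⟨fun x h => h.1 rfl⟩

theorem subdivide {K : Subgroup G} (hKfg : Group.FG K) {Γ : SimpleGraph V} (h : IsGT K V Γ)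
    (col : V → Prop) (hcol : ∀ (g : G) u, col (g • u) ↔ col u)
    (hcolA : ∀ u v, Γ.Adj u v → (col u ↔ ¬ col v))
    (n : V → V → ℕ) (hn1 : ∀ a b, 1 ≤ n a b) (hn : ∀ (g : G) u v, n (g • u) (g • v) = n u v)
    {G' : Type*} [Group G'] {V' : Type*} [MulAction G' V'] {Γ' : SimpleGraph V'} (φ : G →* G')
    (pt : V → V → ℕ → V') (f : V → V') (hf : ∀ (g : G) v, f (g • v) = φ g • f v)
    (hpt0 : ∀ a b, pt a b 0 = f a) (hptn : ∀ a b, pt a b (n a b) = f b)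
    (hptl : ∀ a b j, Γ'.Adj (pt a b j) (pt a b (j+1)) ∨ pt a b j = pt a b (j+1))
    (hpte : ∀ (g : G) a b j, pt (g • a) (g • b) j = φ g • pt a b j) :
    ∃ (W : Type v) (_ : MulAction G W) (Δ : SimpleGraph W) (F : W → V'),
      IsGT K W Δ ∧ (∀ (g : G) x, F (g • x) = φ g • F x) ∧ Lazy Δ Γ' F := by
  classical
  let W := SubV Γ col n
  let act : MulAction G W := subAction h.inv hcol hn
  let Δ := subGraph Γ col n
  let ww := subW Γ col n
  have gl : ∀ (g : G) (v : V), g • (Sum.inl v : W) = Sum.inl (g • v) := fun g v => rfl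
  have gww : ∀ (g : G) a b j, g • ww a b j = ww (g • a) (g • b) j := by
    intro g a b j
    by_cases hh : SubPt Γ col n (a, b, j)
    · have hh' : SubPt Γ col n (g • a, g • b, j) := by
        obtain ⟨⟨h1, h2, h3⟩, h4, h5⟩ := hh
        exact ⟨⟨h.inv g _ _ h1, (hcol g _).2 h2, fun h => h3 ((hcol g _).1 h)⟩, h4, by
          show j < n (g • a) (g • b); rw [hn]; exact h5⟩
      simp only [ww, subW, dif_pos hh, dif_pos hh']; rfl
    · have hh' : ¬ SubPt Γ col n (g • a, g • b, j) := by
        rintro ⟨⟨h1, h2, h3⟩, h4, h5⟩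
        apply hh
        refine ⟨⟨?_, (hcol g _).1 h2, fun h => h3 ((hcol g _).2 h)⟩, h4, ?_⟩
        · have := h.inv g⁻¹ _ _ h1; simpa using this
        · have h6 : j < n (g • a) (g • b) := h5
          rwa [hn] at h6
      simp only [ww, subW, dif_neg hh, dif_neg hh']
      split_ifs <;> rfl
  have w0 : ∀ a b, ww a b 0 = Sum.inl a := by
    intro a b
    simp only [ww, subW]
    rw [dif_neg (fun hh => absurd hh.2.1 (lt_irrefl _)), if_pos trivial]
  have wn : ∀ a b, ww a b (n a b) = Sum.inl b := by
    intro a b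
    simp only [ww, subW]
    rw [dif_neg (fun hh => absurd hh.2.2 (lt_irrefl _)), if_neg]
    have := hn1 a b; omega
  have wj : ∀ a b j (hh : SubPt Γ col n (a, b, j)), ww a b j = Sum.inr ⟨(a, b, j), hh⟩ := by
    intro a b j hh
    simp only [ww, subW, dif_pos hh]
  have wstep : ∀ a b j, (Γ.Adj a b ∧ col a ∧ ¬ col b) → j < n a b →
      Δ.Reachable (ww a b j) (ww a b (j+1)) := by
    intro a b j hv hj
    by_cases e : ww a b j = ww a b (j+1)
    · rw [e]
    · exact SimpleGraph.Adj.reachable ⟨e, a, b, j, hv, hj, Or.inl ⟨rfl, rfl⟩⟩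
  have wreach : ∀ a b j, (Γ.Adj a b ∧ col a ∧ ¬ col b) → j ≤ n a b →
      Δ.Reachable (Sum.inl a) (ww a b j) := by
    intro a b j hv
    induction j with
    | zero => intro _; rw [w0]
    | succ j ih => intro hj; exact (ih (by omega)).trans (wstep a b j hv (by omega))
  have radj : ∀ a b, Γ.Adj a b → Δ.Reachable (Sum.inl a) (Sum.inl b) := by
    intro a b hab
    by_cases ha : col a
    · have := wreach a b (n a b) ⟨hab, ha, (hcolA a b hab).1 ha⟩ le_rfl
      rwa [wn] at this
    · have := wreach b a (n b a) ⟨hab.symm, (hcolA b a hab.symm).2 ha, ha⟩ le_rfl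
      rw [wn] at this; exact this.symm
  obtain ⟨v₀⟩ := h.tree.connected.nonempty
  have hconn : Δ.Connected := by
    have h1 : ∀ a b, Γ.Reachable a b → Δ.Reachable (Sum.inl a) (Sum.inl b) := by
      rintro a b ⟨q⟩
      induction q with
      | nil => exact SimpleGraph.Reachable.refl _
      | cons hh _ ih => exact (radj _ _ hh).trans ih
    have h2 : ∀ x : W, Δ.Reachable (Sum.inl v₀) x := by
      rintro (x | ⟨⟨a, b, j⟩, hh⟩)
      · exact h1 _ _ (h.tree.connected _ _)
      · rw [← wj a b j hh]
        exact (h1 _ _ (h.tree.connected _ _)).trans (wreach a b j hh.1 hh.2.2.le)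
    have : Nonempty W := ⟨Sum.inl v₀⟩
    exact ⟨fun x y => (h2 x).symm.trans (h2 y)⟩
  have htree : Δ.IsTree := by
    refine isTree_of_potential hconn ?_
    intro t ht
    let s : V → V → ℕ → ZMod 2 := fun a b j => ∑ i ∈ Finset.range j,
      (if ww a b i = ww a b (i+1) then 0 else t (ww a b i) (ww a b (i+1)))
    obtain ⟨p, -, hp⟩ := exists_potential_two h.tree
      (fun a b => if col a ∧ ¬ col b then s a b (n a b) else
        if col b ∧ ¬ col a then s b a (n b a) else 0)
      (fun a b => by
        by_cases ha : col a <;> by_cases hb : col b <;> simp [ha, hb]) v₀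
    let q : W → ZMod 2 := fun x => match x with
      | Sum.inl a => p a
      | Sum.inr x => p x.1.1 + s x.1.1 x.1.2.1 x.1.2.2
    have hq : ∀ a b j, (Γ.Adj a b ∧ col a ∧ ¬ col b) → j ≤ n a b → q (ww a b j) = p a + s a b j := by
      intro a b j hv hj
      by_cases hh : SubPt Γ col n (a, b, j)
      · rw [wj a b j hh]
      · have : j = 0 ∨ j = n a b := by
          by_contra hcon
          push Not at hcon
          apply hh
          refine ⟨hv, ?_, ?_⟩
          · show 0 < j; omega
          · show j < n a b; omega
        rcases this with rfl | rfl
        · rw [w0]; simp [q, s]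
        · rw [wn]
          show p b = _
          rw [hp a b hv.1, if_pos hv.2]
    have hstep : ∀ a b j, (Γ.Adj a b ∧ col a ∧ ¬ col b) → j < n a b → ww a b j ≠ ww a b (j+1) →
        q (ww a b (j+1)) = q (ww a b j) + t (ww a b j) (ww a b (j+1)) := by
      intro a b j hv hj hne
      rw [hq a b j hv hj.le, hq a b (j+1) hv hj]
      simp only [s]
      rw [Finset.sum_range_succ, if_neg hne, add_assoc]
    refine ⟨q, ?_⟩
    rintro x y ⟨hxy, a, b, j, hv, hj, ⟨rfl, rfl⟩ | ⟨rfl, rfl⟩⟩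
    · exact hstep a b j hv hj hxy
    · have := hstep a b j hv hj hxy.symm
      rw [ht]
      change q (ww a b j) = q (ww a b (j+1)) + t (ww a b j) (ww a b (j+1))
      rw [this, add_assoc, CharTwo.add_self_eq_zero, add_zero]
  let F : W → V' := fun x => match x with
    | Sum.inl a => f a
    | Sum.inr x => pt x.1.1 x.1.2.1 x.1.2.2
  have hFw : ∀ a b j, (Γ.Adj a b ∧ col a ∧ ¬ col b) → j ≤ n a b → F (ww a b j) = pt a b j := by
    intro a b j hv hj
    by_cases hh : SubPt Γ col n (a, b, j)
    · rw [wj a b j hh]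
    · have : j = 0 ∨ j = n a b := by
        by_contra hcon
        push Not at hcon
        apply hh
        refine ⟨hv, ?_, ?_⟩
        · show 0 < j; omega
        · show j < n a b; omega
      rcases this with rfl | rfl
      · rw [w0]; exact (hpt0 a b).symm
      · rw [wn]; exact (hptn a b).symm
  refine ⟨W, act, Δ, F, ⟨htree, ?_, ?_, ?_, ?_⟩, ?_, ?_⟩
  · rintro g x y ⟨hxy, a, b, j, hv, hj, hh⟩
    refine ⟨fun e => hxy (MulAction.injective g e), g • a, g • b, j, ⟨h.inv g _ _ hv.1,
      (hcol g _).2 hv.2.1, fun hb => hv.2.2 ((hcol g _).1 hb)⟩, by rwa [hn], ?_⟩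
    rcases hh with ⟨rfl, rfl⟩ | ⟨rfl, rfl⟩
    · exact Or.inl ⟨gww _ _ _ _, gww _ _ _ _⟩
    · exact Or.inr ⟨gww _ _ _ _, gww _ _ _ _⟩
  · rintro (x | x)
    · refine (h.stab x).subset ?_
      intro g hg
      exact Sum.inl_injective hg
    · refine (h.stab x.1.1).subset ?_
      intro g hg
      have := Sum.inr_injective hg
      exact congrArg (fun z => z.1.1) this
  · intro H hH
    obtain ⟨v, hv⟩ := h.fix H hH
    exact ⟨Sum.inl v, fun g hg => by rw [gl, hv g hg]⟩
  · rw [orbit_fin_iff]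
    obtain ⟨A, hA, hAV⟩ := (orbit_fin_iff K V).1 h.fin
    obtain ⟨E, hE, -, hEV⟩ := edge_fin (G := K) h.tree (fun g u v => h.inv g u v) hKfg
      ⟨A, hA, fun v => by obtain ⟨k, hk, hv⟩ := hAV v; exact ⟨⟨k, hk⟩, hv⟩⟩
    refine ⟨Sum.inl '' A ∪ ⋃ e ∈ E, (fun j => ww e.1 e.2 j) '' Set.Iio (n e.1 e.2),
      (hA.image _).union (hE.biUnion fun e _ => (Set.finite_Iio _).image _), ?_⟩
    rintro (x | ⟨⟨a, b, j⟩, hh⟩)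
    · obtain ⟨k, hk, hv⟩ := hAV x
      exact ⟨k, hk, Or.inl ⟨_, hv, rfl⟩⟩
    · obtain ⟨⟨k, hk⟩, hkE⟩ := hEV a b hh.1.1
      refine ⟨k, hk, Or.inr ?_⟩
      simp only [Set.mem_iUnion]
      refine ⟨_, hkE, j, ?_, ?_⟩
      · show j < n (k • a) (k • b)
        rw [hn]; exact hh.2.2
      · show ww (k • a) (k • b) j = _
        rw [← gww, wj a b j hh]
  · rintro g (x | x)
    · exact hf g x
    · exact hpte g _ _ _
  · rintro x y ⟨hxy, a, b, j, hv, hj, ⟨rfl, rfl⟩ | ⟨rfl, rfl⟩⟩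
    · have := hptl a b j
      rwa [← hFw a b j hv hj.le, ← hFw a b (j+1) hv hj] at this
    · have := hptl a b j
      rw [← hFw a b j hv hj.le, ← hFw a b (j+1) hv hj] at this
      rcases this with h1 | h1
      · exact Or.inl h1.symm
      · exact Or.inr h1.symm

theorem exists_resolved_map {K : Subgroup G} (hKfg : Group.FG K) {Γ : SimpleGraph V} (h : IsGT K V Γ)
    (col : V → Prop) (hcol : ∀ (g : G) u, col (g • u) ↔ col u)
    (hcolA : ∀ u v, Γ.Adj u v → (col u ↔ ¬ col v))
    {G' : Type*} [Group G'] {K' : Subgroup G'} {V' : Type*} [MulAction G' V'] {Γ' : SimpleGraph V'}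
    (h' : IsGT K' V' Γ') (φ : G →* G') :
    ∃ (W : Type v) (_ : MulAction G W) (Δ : SimpleGraph W) (F : W → V'),
      IsGT K W Δ ∧ (∀ (g : G) x, F (g • x) = φ g • F x) ∧ Lazy Δ Γ' F := by
  classical
  obtain ⟨f, hf⟩ := exists_equivariant (V := V) (V' := V') φ (by
    intro v
    obtain ⟨y, hy⟩ := h'.fix ((MulAction.stabilizer G v).map φ) (by
      rw [Subgroup.coe_map]
      exact (h.stab v).image _)
    exact ⟨y, fun g hg => hy _ ⟨g, hg, rfl⟩⟩)
  obtain ⟨len, pt, h0, h1, h2, h3, h4⟩ := exists_paths h'.tree h'.inv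
  refine subdivide hKfg h col hcol hcolA (fun a b => len (f a) (f b) + 1) (by simp) ?_ φ
    (fun a b j => pt (f a) (f b) j) f hf ?_ ?_ ?_ ?_
  · intro g a b; simp only [hf, h3]
  · intro a b; exact h0 _ _
  · intro a b; exact h1 _ _ _ (by simp)
  · intro a b j; exact h2 _ _ _
  · intro g a b j; simp only [hf, h4]

end Sub
end VF

namespace VF

universe u v w

section Bary
variable {G : Type u} [Group G] {V : Type v} [MulAction G V]

theorem trans_fin (hst : ∀ v : V, {g : G | g • v = v}.Finite) (a b : V) :
    {g : G | g • a = b}.Finite := by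
  rcases Set.eq_empty_or_nonempty {g : G | g • a = b} with h | ⟨g₀, h₀⟩
  · rw [h]; exact Set.finite_empty
  · refine ((hst a).image (fun g => g₀ * g)).subset ?_
    intro g hg
    refine ⟨g₀⁻¹ * g, ?_, by simp⟩
    show (g₀⁻¹ * g) • a = a
    rw [mul_smul, hg, inv_smul_eq_iff]; exact h₀.symm

/-- action on the barycentric subdivision -/
@[reducible] def baryAction {Γ : SimpleGraph V}
    (hinv : ∀ (g : G) u v, Γ.Adj u v → Γ.Adj (g • u) (g • v)) : MulAction G (V ⊕ Γ.edgeSet) where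
  smul g := Sum.map (fun v => g • v) (fun e => ⟨Sym2.map (fun v => g • v) e.1, by
    obtain ⟨e, he⟩ := e
    induction e using Sym2.inductionOn with
    | _ a b => exact hinv g a b he⟩)
  one_smul := by
    rintro (x | ⟨e, he⟩)
    · exact congrArg Sum.inl (one_smul G x)
    · refine congrArg Sum.inr (Subtype.ext ?_)
      induction e using Sym2.inductionOn with
      | _ a b => simp
  mul_smul := by
    rintro g h (x | ⟨e, he⟩)
    · exact congrArg Sum.inl (mul_smul g h x)
    · refine congrArg Sum.inr (Subtype.ext ?_)
      induction e using Sym2.inductionOn with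
      | _ a b => simp [mul_smul]

/-- barycentric subdivision -/
def baryGraph (Γ : SimpleGraph V) : SimpleGraph (V ⊕ Γ.edgeSet) where
  Adj x y := ∃ (a : V) (e : Γ.edgeSet), a ∈ e.1 ∧
    ((x = Sum.inl a ∧ y = Sum.inr e) ∨ (y = Sum.inl a ∧ x = Sum.inr e))
  symm := ⟨by
    rintro x y ⟨a, e, h1, h2⟩
    exact ⟨a, e, h1, h2.symm⟩⟩
  loopless := ⟨by
    rintro x ⟨a, e, h1, ⟨h2, h3⟩ | ⟨h2, h3⟩⟩ <;> simp [h2] at h3⟩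

theorem bary {K : Subgroup G} (hKfg : Group.FG K) {Γ : SimpleGraph V} (hT : Γ.IsTree)
    (hinv : ∀ (g : G) u v, Γ.Adj u v → Γ.Adj (g • u) (g • v))
    (hst : ∀ v : V, {g : G | g • v = v}.Finite)
    (hfin : ∃ A : Set V, A.Finite ∧ ∀ v, ∃ k ∈ K, k • v ∈ A) :
    ∃ (W : Type v) (_ : MulAction G W) (Δ : SimpleGraph W) (col : W → Prop),
      IsGT K W Δ ∧ (∀ (g : G) u, col (g • u) ↔ col u) ∧
      (∀ u v, Δ.Adj u v → (col u ↔ ¬ col v)) := by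
  classical
  let W := V ⊕ Γ.edgeSet
  let act : MulAction G W := baryAction hinv
  let Δ := baryGraph Γ
  have gl : ∀ (g : G) (v : V), g • (Sum.inl v : W) = Sum.inl (g • v) := fun g v => rfl
  obtain ⟨v₀⟩ := hT.connected.nonempty
  have hconn : Δ.Connected := by
    have h0 : ∀ a (e : Γ.edgeSet), a ∈ e.1 → Δ.Reachable (Sum.inl a) (Sum.inr e) := fun a e h =>
      SimpleGraph.Adj.reachable ⟨a, e, h, Or.inl ⟨rfl, rfl⟩⟩
    have h1 : ∀ a b, Γ.Reachable a b → Δ.Reachable (Sum.inl a) (Sum.inl b) := by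
      rintro a b ⟨q⟩
      induction q with
      | nil => exact SimpleGraph.Reachable.refl _
      | @cons a b c hh _ ih =>
        exact ((h0 a ⟨s(a, b), hh⟩ (by simp)).trans (h0 b ⟨s(a, b), hh⟩ (by simp)).symm).trans ih
    have h2 : ∀ x : W, Δ.Reachable (Sum.inl v₀) x := by
      rintro (x | ⟨e, he⟩)
      · exact h1 _ _ (hT.connected _ _)
      · induction e using Sym2.inductionOn with
        | _ a b => exact (h1 _ _ (hT.connected _ _)).trans (h0 a ⟨s(a, b), he⟩ (by simp))
    have : Nonempty W := ⟨Sum.inl v₀⟩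
    exact ⟨fun x y => (h2 x).symm.trans (h2 y)⟩
  have htree : Δ.IsTree := by
    refine isTree_of_potential hconn ?_
    intro t ht
    let tt : V → V → ZMod 2 := fun a b => if h : Γ.Adj a b then
      t (Sum.inl a) (Sum.inr ⟨s(a, b), h⟩) + t (Sum.inl b) (Sum.inr ⟨s(a, b), h⟩) else 0
    obtain ⟨p, -, hp⟩ := exists_potential_two hT tt (fun a b => by
        simp only [tt]
        by_cases hab : Γ.Adj a b
        · rw [dif_pos hab, dif_pos hab.symm, add_comm]
          have : (⟨s(a, b), hab⟩ : Γ.edgeSet) = ⟨s(b, a), hab.symm⟩ := Subtype.ext Sym2.eq_swap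
          rw [this]
        · rw [dif_neg hab, dif_neg (fun h => hab h.symm)]) v₀
    have key : ∀ a b (e : Γ.edgeSet), a ∈ e.1 → b ∈ e.1 →
        p a + t (Sum.inl a) (Sum.inr e) = p b + t (Sum.inl b) (Sum.inr e) := by
      rintro a b ⟨e, he⟩ ha hb
      by_cases hab : a = b
      · rw [hab]
      · have : e = s(a, b) := ((Sym2.mem_and_mem_iff hab).1 ⟨ha, hb⟩)
        subst this
        have he' : Γ.Adj a b := he
        rw [hp a b he']
        simp only [tt]
        rw [dif_pos he', add_assoc, add_assoc, CharTwo.add_self_eq_zero, add_zero]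
    have hq : ∀ e : Γ.edgeSet, ∃ z, ∀ a ∈ e.1, z = p a + t (Sum.inl a) (Sum.inr e) := by
      rintro ⟨e, he⟩
      induction e using Sym2.inductionOn with
      | _ a b => exact ⟨_, fun c hc => key a c ⟨s(a, b), he⟩ (by simp) hc⟩
    choose z hz using hq
    refine ⟨Sum.elim p z, ?_⟩
    rintro x y ⟨a, e, hae, ⟨rfl, rfl⟩ | ⟨rfl, rfl⟩⟩
    · exact hz e a hae
    · show p a = z e + _
      rw [hz e a hae, ht (Sum.inr e), add_assoc, CharTwo.add_self_eq_zero, add_zero]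
  refine ⟨W, act, Δ, fun x => x.isLeft, ⟨htree, ?_, ?_, ?_, ?_⟩, ?_, ?_⟩
  · rintro g x y ⟨a, ⟨e, he⟩, hae, hh⟩
    induction e using Sym2.inductionOn with
    | _ b c =>
      refine ⟨g • a, ⟨s(g • b, g • c), hinv g _ _ he⟩, ?_, ?_⟩
      · simp only [Sym2.mem_iff] at hae ⊢
        rcases hae with rfl | rfl <;> simp
      · rcases hh with ⟨rfl, rfl⟩ | ⟨rfl, rfl⟩
        · exact Or.inl ⟨rfl, rfl⟩
        · exact Or.inr ⟨rfl, rfl⟩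
  · rintro (x | ⟨e, he⟩)
    · refine (hst x).subset ?_
      intro g hg
      exact Sum.inl_injective hg
    · induction e using Sym2.inductionOn with
      | _ a b =>
        refine ((hst a).union (trans_fin hst a b)).subset ?_
        intro g hg
        have h1 : (⟨s(g • a, g • b), hinv g _ _ he⟩ : Γ.edgeSet) = ⟨s(a, b), he⟩ := Sum.inr_injective hg
        have h2 : s(g • a, g • b) = s(a, b) := congrArg Subtype.val h1
        rw [Sym2.eq_iff] at h2
        rcases h2 with h2 | h2
        · exact Or.inl h2.1
        · exact Or.inr h2.1
  · intro H hH
    obtain ⟨a, b, hab, hh⟩ := fixed_vertex_or_edge hT hinv H hH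
    rcases hab with rfl | hab
    · refine ⟨Sum.inl a, fun g hg => ?_⟩
      rw [gl]
      rcases hh g hg with h1 | h1 <;> rw [h1.1]
    · refine ⟨Sum.inr ⟨s(a, b), hab⟩, fun g hg => ?_⟩
      refine congrArg Sum.inr (Subtype.ext ?_)
      show s(g • a, g • b) = s(a, b)
      rcases hh g hg with h1 | h1
      · rw [h1.1, h1.2]
      · rw [h1.1, h1.2, Sym2.eq_swap]
  · rw [orbit_fin_iff]
    obtain ⟨A, hA, hAV⟩ := hfin
    obtain ⟨E, hE, hEadj, hEV⟩ := edge_fin (G := K) hT (fun g u v => hinv g u v) hKfg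
      ⟨A, hA, fun v => by obtain ⟨k, hk, hv⟩ := hAV v; exact ⟨⟨k, hk⟩, hv⟩⟩
    let m : V × V → W := fun e => if h : Γ.Adj e.1 e.2 then Sum.inr ⟨s(e.1, e.2), h⟩ else Sum.inl v₀
    refine ⟨Sum.inl '' A ∪ m '' E, (hA.image _).union (hE.image _), ?_⟩
    rintro (x | ⟨e, he⟩)
    · obtain ⟨k, hk, hv⟩ := hAV x
      exact ⟨k, hk, Or.inl ⟨_, hv, rfl⟩⟩
    · induction e using Sym2.inductionOn with
      | _ a b =>
        obtain ⟨⟨k, hk⟩, hkE⟩ := hEV a b he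
        refine ⟨k, hk, Or.inr ⟨_, hkE, ?_⟩⟩
        have h1 : Γ.Adj (k • a) (k • b) := hinv k _ _ he
        show m (k • a, k • b) = _
        simp only [m]
        rw [dif_pos h1]
        rfl
  · rintro g (x | x) <;> rfl
  · rintro x y ⟨a, e, hae, ⟨rfl, rfl⟩ | ⟨rfl, rfl⟩⟩ <;> simp

end Bary
end VF

namespace VF

universe u v w

section Pocset
open scoped Pointwise
variable {G : Type u} [Group G]

/-- nested invariant family of cuts -/
structure IsPoc (K : Subgroup G) (W : Set (Set G)) : Prop where
  inv : ∀ (g : G), ∀ C ∈ W, g • C ∈ W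
  compl : ∀ C ∈ W, Cᶜ ∈ W
  nested : ∀ C ∈ W, ∀ D ∈ W, C ⊆ D ∨ C ⊆ Dᶜ ∨ Cᶜ ⊆ D ∨ Cᶜ ⊆ Dᶜ
  nontriv : ∀ C ∈ W, C.Nonempty
  sep : ∀ x y : G, {C ∈ W | x ∈ C ∧ y ∉ C}.Finite
  cof : ∃ W₀ : Set (Set G), W₀.Finite ∧ ∀ C ∈ W, ∃ k ∈ K, k • C ∈ W₀
  ax : ∀ h ∈ K, h ≠ 1 → ∃ C ∈ W, (∃ n₀ : ℕ, ∀ n ≥ n₀, h ^ n ∈ C) ∧ (∃ n₀ : ℕ, ∀ n ≥ n₀, h⁻¹ ^ n ∉ C)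

/-- orientations -/
structure IsOr (W : Set (Set G)) (o : Set (Set G)) : Prop where
  sub : o ⊆ W
  or : ∀ C ∈ W, C ∈ o ∨ Cᶜ ∈ o
  nb : ∀ C ∈ o, Cᶜ ∉ o
  up : ∀ C ∈ o, ∀ D ∈ W, C ⊆ D → D ∈ o
  fin : {C ∈ o | (1 : G) ∉ C}.Finite

theorem IsPoc.isOr_smul {K : Subgroup G} {W : Set (Set G)} (h : IsPoc K W) (g : G) {o : Set (Set G)}
    (ho : IsOr W o) : IsOr W (g • o) := by
  have hc : ∀ C : Set G, g⁻¹ • Cᶜ = (g⁻¹ • C)ᶜ := fun C => Set.smul_set_compl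
  refine ⟨?_, ?_, ?_, ?_, ?_⟩
  · rintro _ ⟨C, hC, rfl⟩
    exact h.inv g C (ho.sub hC)
  · intro C hC
    rw [Set.mem_smul_set_iff_inv_smul_mem, Set.mem_smul_set_iff_inv_smul_mem, hc]
    exact ho.or _ (h.inv _ _ hC)
  · intro C hC
    rw [Set.mem_smul_set_iff_inv_smul_mem] at hC ⊢
    rw [hc]
    exact ho.nb _ hC
  · intro C hC D hD hCD
    rw [Set.mem_smul_set_iff_inv_smul_mem] at hC ⊢
    exact ho.up _ hC _ (h.inv _ _ hD) (Set.smul_set_mono hCD)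
  · refine ((ho.fin.union (h.sep 1 g⁻¹)).image (fun C => g • C)).subset ?_
    rintro _ ⟨⟨C, hC, rfl⟩, h1⟩
    refine ⟨C, ?_, rfl⟩
    have h2 : g⁻¹ ∉ C := by
      intro h3; apply h1
      exact ⟨_, h3, by simp⟩
    by_cases h3 : (1 : G) ∈ C
    · exact Or.inr ⟨ho.sub hC, h3, h2⟩
    · exact Or.inl ⟨hC, h3⟩

/-- action on orientations -/
@[reducible] def orAction {K : Subgroup G} {W : Set (Set G)} (h : IsPoc K W) :
    MulAction G {o : Set (Set G) // IsOr W o} where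
  smul g o := ⟨g • o.1, h.isOr_smul g o.2⟩
  one_smul o := Subtype.ext (one_smul G o.1)
  mul_smul a b o := Subtype.ext (mul_smul a b o.1)

/-- graph of orientations -/
def orGraph {K : Subgroup G} {W : Set (Set G)} (h : IsPoc K W) :
    SimpleGraph {o : Set (Set G) // IsOr W o} where
  Adj o o' := ∃ C ∈ o.1, o'.1 = insert Cᶜ (o.1 \ {C})
  symm := ⟨by
    rintro o o' ⟨C, hC, e⟩
    refine ⟨Cᶜ, by rw [e]; simp, ?_⟩
    rw [e, _root_.compl_compl]
    have hne : C ≠ Cᶜ := by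
      intro e2; exact o.2.nb C hC (e2 ▸ hC)
    ext D
    simp only [Set.mem_insert_iff, Set.mem_sdiff, Set.mem_singleton_iff]
    constructor
    · intro hD
      by_cases h1 : D = C
      · exact Or.inl h1
      · refine Or.inr ⟨Or.inr ⟨hD, h1⟩, ?_⟩
        rintro rfl
        exact o.2.nb C hC hD
    · rintro (rfl | ⟨rfl | h1, h2⟩)
      · exact hC
      · exact absurd rfl h2
      · exact h1.1⟩
  loopless := ⟨by
    rintro o ⟨C, hC, e⟩
    have : C ∈ insert Cᶜ (o.1 \ {C}) := e ▸ hC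
    rcases this with e2 | h2
    · exact o.2.nb C hC (e2 ▸ hC)
    · exact h2.2 rfl⟩

theorem IsPoc.flip_isOr {K : Subgroup G} {W : Set (Set G)} (h : IsPoc K W) {o : Set (Set G)}
    (ho : IsOr W o) {C : Set G} (hC : C ∈ o) (hmin : ∀ D ∈ o, D ⊆ C → D = C) :
    IsOr W (insert Cᶜ (o \ {C})) := by
  have hne : C ≠ Cᶜ := by
    intro e2; exact ho.nb C hC (e2 ▸ hC)
  refine ⟨?_, ?_, ?_, ?_, ?_⟩
  · rintro D (rfl | hD)
    · exact h.compl _ (ho.sub hC)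
    · exact ho.sub hD.1
  · intro D hD
    by_cases h1 : D = C
    · subst h1; right; left; rfl
    by_cases h2 : D = Cᶜ
    · left; left; exact h2
    rcases ho.or D hD with h3 | h3
    · left; right; exact ⟨h3, h1⟩
    · right; right; refine ⟨h3, ?_⟩
      intro e; apply h2; rw [← Set.mem_singleton_iff.1 e, _root_.compl_compl]
  · rintro D (rfl | hD) (h1 | h1)
    · rw [_root_.compl_compl] at h1; exact hne h1
    · rw [_root_.compl_compl] at h1; exact h1.2 rfl
    · exact hD.2 (compl_injective h1)
    · exact ho.nb D hD.1 h1.1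
  · rintro D (rfl | hD) E hE hDE
    · by_cases h2 : E = Cᶜ
      · left; exact h2
      right
      have hEo : E ∈ o := by
        rcases ho.or E hE with h3 | h3
        · exact h3
        · have := hmin _ h3 (by rwa [Set.compl_subset_comm])
          exact absurd (by rw [← this, _root_.compl_compl]) h2
      refine ⟨hEo, ?_⟩
      intro e
      rw [Set.mem_singleton_iff] at e
      subst e
      obtain ⟨x, hx⟩ := h.nontriv _ (h.compl _ hE)
      exact hx (hDE hx)
    · right
      refine ⟨ho.up D hD.1 E hE hDE, ?_⟩
      intro e
      rw [Set.mem_singleton_iff] at e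
      subst e
      exact hD.2 (hmin D hD.1 hDE)
  · refine ((Set.finite_singleton Cᶜ).union ho.fin).subset ?_
    rintro D ⟨rfl | hD, h1⟩
    · exact Or.inl rfl
    · exact Or.inr ⟨hD.1, h1⟩

/-- the orientation is determined by a minimal element -/
theorem IsPoc.or_unique {K : Subgroup G} {W : Set (Set G)} (h : IsPoc K W) {o o' : Set (Set G)}
    (ho : IsOr W o) (ho' : IsOr W o') {C : Set G} (hC : C ∈ o) (hmin : ∀ D ∈ o, D ⊆ C → D = C)
    (hC' : C ∈ o') (hmin' : ∀ D ∈ o', D ⊆ C → D = C) : o = o' := by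
  have key : ∀ o o' : Set (Set G), IsOr W o → IsOr W o' → C ∈ o → (∀ D ∈ o, D ⊆ C → D = C) →
      C ∈ o' → (∀ D ∈ o', D ⊆ C → D = C) → o ⊆ o' := by
    intro o o' ho ho' hC hmin hC' hmin' D hD
    by_contra hD'
    have hDc : Dᶜ ∈ o' := (ho'.or D (ho.sub hD)).resolve_left hD'
    rcases h.nested C (ho.sub hC) D (ho.sub hD) with h1 | h1 | h1 | h1
    · exact hD' (ho'.up C hC' D (ho.sub hD) h1)
    · exact ho.nb D hD (ho.up C hC _ (h.compl _ (ho.sub hD)) h1)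
    · have := hmin' _ hDc (by rwa [Set.compl_subset_comm])
      subst this
      exact ho.nb D hD hC
    · have := hmin _ hD (by rwa [← Set.compl_subset_compl])
      subst this
      exact hD' hC'
  exact Set.Subset.antisymm (key o o' ho ho' hC hmin hC' hmin') (key o' o ho' ho hC' hmin' hC hmin)

theorem IsPoc.adj_min {K : Subgroup G} {W : Set (Set G)} (h : IsPoc K W)
    {o o' : {o : Set (Set G) // IsOr W o}} {C : Set G} (hC : C ∈ o.1)
    (e : o'.1 = insert Cᶜ (o.1 \ {C})) : ∀ D ∈ o.1, D ⊆ C → D = C := by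
  intro D hD hDC
  by_contra hne
  have h1 : D ∈ o'.1 := by rw [e]; exact Or.inr ⟨hD, hne⟩
  have h2 := o'.2.up D h1 C (o.2.sub hC) hDC
  refine o'.2.nb C h2 ?_
  rw [e]; exact Or.inl rfl

theorem IsPoc.diff_fin {K : Subgroup G} {W : Set (Set G)} (_h : IsPoc K W) {o o' : Set (Set G)}
    (ho : IsOr W o) (ho' : IsOr W o') : (o \ o').Finite := by
  refine (ho.fin.union (ho'.fin.image (fun C => Cᶜ))).subset ?_
  rintro C ⟨h1, h2⟩
  by_cases h3 : (1 : G) ∈ C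
  · right
    refine ⟨Cᶜ, ⟨(ho'.or C (ho.sub h1)).resolve_left h2, fun h4 => h4 h3⟩, _root_.compl_compl C⟩
  · exact Or.inl ⟨h1, h3⟩

theorem IsPoc.exists_min {K : Subgroup G} {W : Set (Set G)} (h : IsPoc K W) {o o' : Set (Set G)}
    (ho : IsOr W o) (ho' : IsOr W o') (hne : (o \ o').Nonempty) :
    ∃ C ∈ o \ o', ∀ D ∈ o, D ⊆ C → D = C := by
  obtain ⟨C, hC, hmin⟩ := (h.diff_fin ho ho').exists_minimal hne
  refine ⟨C, hC, ?_⟩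
  intro D hD hDC
  by_cases h1 : D ∈ o'
  · exact absurd (ho'.up D h1 C (ho.sub hC.1) hDC) hC.2
  · exact Set.Subset.antisymm hDC (hmin ⟨hD, h1⟩ hDC)

theorem IsPoc.base {K : Subgroup G} {W : Set (Set G)} (h : IsPoc K W) (x : G) :
    IsOr W {C ∈ W | x ∈ C} := by
  refine ⟨fun C hC => hC.1, ?_, ?_, ?_, ?_⟩
  · intro C hC
    by_cases hx : x ∈ C
    · exact Or.inl ⟨hC, hx⟩
    · exact Or.inr ⟨h.compl _ hC, hx⟩
  · rintro C ⟨h1, h2⟩ ⟨h3, h4⟩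
    exact h4 h2
  · rintro C ⟨h1, h2⟩ D hD hCD
    exact ⟨hD, hCD h2⟩
  · refine (h.sep x 1).subset ?_
    rintro C ⟨⟨h1, h2⟩, h3⟩
    exact ⟨h1, h2, h3⟩

theorem IsPoc.isTree {K : Subgroup G} {W : Set (Set G)} (h : IsPoc K W) : (orGraph h).IsTree := by
  classical
  constructor
  · have hr : ∀ n : ℕ, ∀ o o' : {o : Set (Set G) // IsOr W o}, (o.1 \ o'.1).ncard = n →
        (orGraph h).Reachable o o' := by
      intro n
      induction n with
      | zero =>
        intro o o' hn
        rw [Set.ncard_eq_zero (h.diff_fin o.2 o'.2), Set.sdiff_eq_empty] at hn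
        have : o = o' := by
          apply Subtype.ext
          refine Set.Subset.antisymm hn ?_
          intro C hC
          rcases o.2.or C (o'.2.sub hC) with h1 | h1
          · exact h1
          · exact absurd (hn h1) (o'.2.nb C hC)
        rw [this]
      | succ n ih =>
        intro o o' hn
        have hne : (o.1 \ o'.1).Nonempty := by
          rw [Set.nonempty_iff_ne_empty]; intro e; rw [e] at hn; simp at hn
        obtain ⟨C, hC, hmin⟩ := h.exists_min o.2 o'.2 hne
        let o2 : {o : Set (Set G) // IsOr W o} := ⟨_, h.flip_isOr o.2 hC.1 hmin⟩
        have hadj : (orGraph h).Adj o o2 := ⟨C, hC.1, rfl⟩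
        refine hadj.reachable.trans (ih o2 o' ?_)
        have hCc : Cᶜ ∈ o'.1 := (o'.2.or C (o.2.sub hC.1)).resolve_left hC.2
        have : o2.1 \ o'.1 = (o.1 \ o'.1) \ {C} := by
          ext D
          simp only [o2, Set.mem_insert_iff, Set.mem_sdiff, Set.mem_singleton_iff]
          constructor
          · rintro ⟨rfl | h1, h2⟩
            · exact absurd hCc h2
            · exact ⟨⟨h1.1, h2⟩, h1.2⟩
          · rintro ⟨⟨h1, h2⟩, h3⟩
            exact ⟨Or.inr ⟨h1, h3⟩, h2⟩
        rw [this, Set.ncard_sdiff_singleton_of_mem hC, hn]; rfl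
    have : Nonempty {o : Set (Set G) // IsOr W o} := ⟨⟨_, h.base 1⟩⟩
    exact ⟨fun o o' => hr _ o o' rfl⟩
  · refine SimpleGraph.isAcyclic_iff_forall_adj_isBridge.2 ?_
    intro o o' hoo
    obtain ⟨C, hC, e⟩ := hoo
    have hCc : C ∉ o'.1 := by
      rw [e]
      rintro (e2 | h2)
      · exact o.2.nb C hC (e2 ▸ hC)
      · exact h2.2 rfl
    have key1 : ∀ x y, ((orGraph h).deleteEdges {s(o, o')}).Adj x y → C ∈ x.1 → C ∈ y.1 := by
      intro x y hxy hx
      rw [SimpleGraph.deleteEdges_adj] at hxy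
      obtain ⟨⟨D, hD, e2⟩, h2⟩ := hxy
      by_contra hy
      have hDC : C = D := by
        by_contra hne
        apply hy
        rw [e2]; exact Or.inr ⟨hx, hne⟩
      subst hDC
      have e3 : x.1 = o.1 := h.or_unique x.2 o.2 hD (h.adj_min hD e2) hC (h.adj_min hC e)
      have e4 : x = o := Subtype.ext e3
      have e5 : y = o' := Subtype.ext (by rw [e2, e, e3])
      apply h2
      rw [e4, e5]; rfl
    have key : ∀ x y, ((orGraph h).deleteEdges {s(o, o')}).Reachable x y → C ∈ x.1 → C ∈ y.1 := by
      rintro x y ⟨q⟩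
      induction q with
      | nil => exact id
      | cons hadj _ ih => exact fun hx => ih (key1 _ _ hadj hx)
    rw [SimpleGraph.isBridge_iff]
    intro hr
    exact hCc (key _ _ hr hC)

theorem stab_fin_of_free {K : Subgroup G} (hK : K.FiniteIndex) {V : Type v} [MulAction G V] (v : V)
    (h : ∀ k ∈ K, k • v = v → k = 1) : {g : G | g • v = v}.Finite := by
  have : Finite (G ⧸ K) := inferInstance
  refine Set.Finite.of_finite_image (f := fun g : G => (g : G ⧸ K)) (Set.toFinite _) ?_
  intro a ha b hb e
  have h1 : a⁻¹ * b ∈ K := QuotientGroup.eq.1 e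
  have := h _ h1 (by
    have ha' : a • v = v := ha
    have hb' : b • v = v := hb
    rw [mul_smul, hb', inv_smul_eq_iff, ha'])
  rwa [inv_mul_eq_one] at this

theorem IsPoc.free {K : Subgroup G} {W : Set (Set G)} (h : IsPoc K W) {o : Set (Set G)}
    (ho : IsOr W o) (k : G) (hk : k ∈ K) (hko : k • o = o) : k = 1 := by
  by_contra hk1
  obtain ⟨C, hC, ⟨n₁, h1⟩, ⟨n₂, h2⟩⟩ := h.ax k hk hk1
  -- a general contradiction
  have key : ∀ (k : G), k • o = o → ∀ C ∈ o, (∃ n₀ : ℕ, ∀ n ≥ n₀, k ^ n ∈ C) →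
      (∃ n₀ : ℕ, ∀ n ≥ n₀, k⁻¹ ^ n ∉ C) → False := by
    rintro k hko C hC ⟨n₁, h1⟩ ⟨n₂, h2⟩
    have hm : ∀ m : ℕ, k ^ m • C ∈ o := by
      intro m
      induction m with
      | zero => simpa using hC
      | succ m ih =>
        rw [pow_succ', mul_smul, ← hko]
        exact ⟨_, ih, rfl⟩
    have hout : ∀ m ≥ n₂, k ^ m • C ∈ {C ∈ o | (1 : G) ∉ C} := by
      intro m hm2
      refine ⟨hm m, ?_⟩
      rw [Set.mem_smul_set_iff_inv_smul_mem]
      simpa using h2 m hm2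
    have hinj : Function.Injective (fun m : ℕ => k ^ (m + n₂) • C) := by
      have aux : ∀ d : ℕ, 0 < d → k ^ d • C ≠ C := by
        intro d hd e
        have e2 : ∀ n : ℕ, (k ^ d) ^ n • C = C := by
          intro n
          induction n with
          | zero => simp
          | succ n ih => rw [pow_succ, mul_smul, e, ih]
        set N := n₁ + n₂
        have hN : N ≤ d * N := Nat.le_mul_of_pos_left _ hd
        have a1 := h1 (d * N) (by omega)
        have a2 := h2 (d * N) (by omega)
        rw [← e2 N, ← pow_mul] at a1
        rw [Set.mem_smul_set_iff_inv_smul_mem] at a1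
        rw [← e2 N, ← pow_mul] at a1
        apply a2
        rw [Set.mem_smul_set_iff_inv_smul_mem] at a1
        simpa using a1
      intro a b hab
      by_contra hne
      wlog hlt : a < b generalizing a b
      · exact this hab.symm (fun e => hne e.symm) (by omega)
      simp only at hab
      obtain ⟨d, rfl⟩ := Nat.exists_eq_add_of_lt hlt
      refine aux (d + 1) (by omega) ?_
      have : k ^ (a + d + 1 + n₂) = k ^ (a + n₂) * k ^ (d + 1) := by rw [← pow_add]; congr 1; omega
      rw [this, mul_smul] at hab
      exact (smul_left_cancel _ hab).symm
    exact Set.infinite_of_injective_forall_mem hinj (fun m => hout (m + n₂) (by omega)) ho.fin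
  rcases ho.or C hC with h3 | h3
  · exact key k hko C h3 ⟨n₁, h1⟩ ⟨n₂, h2⟩
  · refine key k⁻¹ ?_ Cᶜ h3 ⟨n₂, h2⟩ ⟨n₁, fun n hn => ?_⟩
    · rw [inv_smul_eq_iff, hko]
    · rw [inv_inv]; exact fun h4 => h4 (h1 n hn)

theorem IsPoc.exists_tree {K : Subgroup G} (hK : K.FiniteIndex) (hKfg : Group.FG K)
    {W : Set (Set G)} (h : IsPoc K W) :
    ∃ (V : Type u) (_ : MulAction G V) (Δ : SimpleGraph V) (col : V → Prop),
      IsGT K V Δ ∧ (∀ (g : G) u, col (g • u) ↔ col u) ∧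
      (∀ u v, Δ.Adj u v → (col u ↔ ¬ col v)) := by
  classical
  let act := orAction h
  have hsm : ∀ (g : G) (o : {o : Set (Set G) // IsOr W o}), (g • o).1 = g • o.1 := fun g o => rfl
  have hc : ∀ (g : G) (C : Set G), g • Cᶜ = (g • C)ᶜ := fun g C => Set.smul_set_compl
  have hinv : ∀ (g : G) o o', (orGraph h).Adj o o' → (orGraph h).Adj (g • o) (g • o') := by
    rintro g o o' ⟨C, hC, e⟩
    refine ⟨g • C, ⟨C, hC, rfl⟩, ?_⟩
    rw [hsm, hsm, e, ← hc, Set.smul_set_insert, Set.smul_set_sdiff, Set.smul_set_singleton]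
  refine bary hKfg h.isTree hinv ?_ ?_
  · intro o
    refine stab_fin_of_free hK o ?_
    intro k hk e
    exact h.free o.2 k hk (congrArg Subtype.val e)
  · obtain ⟨W₀, hW₀, hcof⟩ := h.cof
    by_cases hW : W.Nonempty
    · let oo : Set G → {o : Set (Set G) // IsOr W o} := fun C =>
        if hh : ∃ o : {o : Set (Set G) // IsOr W o}, C ∈ o.1 ∧ ∀ D ∈ o.1, D ⊆ C → D = C then
          hh.choose else ⟨_, h.base 1⟩
      refine ⟨oo '' W₀, hW₀.image _, ?_⟩
      intro o
      obtain ⟨C, hC⟩ := hW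
      have hne : ∃ o' : {o : Set (Set G) // IsOr W o}, (o.1 \ o'.1).Nonempty := by
        have : ∀ C ∈ o.1, ∃ o' : {o : Set (Set G) // IsOr W o}, (o.1 \ o'.1).Nonempty := by
          intro C hC
          obtain ⟨x, hx⟩ := h.nontriv _ (h.compl _ (o.2.sub hC))
          exact ⟨⟨_, h.base x⟩, C, hC, fun h2 => hx h2.2⟩
        rcases o.2.or C hC with h1 | h1
        · exact this _ h1
        · exact this _ h1
      obtain ⟨o', hne⟩ := hne
      obtain ⟨C, hC, hmin⟩ := h.exists_min o.2 o'.2 hne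
      obtain ⟨k, hk, hkC⟩ := hcof C (o.2.sub hC.1)
      refine ⟨k, hk, k • C, hkC, ?_⟩
      have hko : k • C ∈ (k • o).1 ∧ ∀ D ∈ (k • o).1, D ⊆ k • C → D = k • C := by
        refine ⟨⟨C, hC.1, rfl⟩, ?_⟩
        rintro _ ⟨D, hD, rfl⟩ hDC
        have := hmin D hD (Set.smul_set_subset_smul_set_iff.1 hDC)
        rw [this]
      have hex : ∃ o : {o : Set (Set G) // IsOr W o}, k • C ∈ o.1 ∧ ∀ D ∈ o.1, D ⊆ k • C → D = k • C :=
        ⟨_, hko⟩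
      simp only [oo]
      rw [dif_pos hex]
      apply Subtype.ext
      exact h.or_unique hex.choose.2 (k • o).2 hex.choose_spec.1 hex.choose_spec.2 hko.1 hko.2
    · rw [Set.not_nonempty_iff_eq_empty] at hW
      refine ⟨{⟨_, h.base 1⟩}, Set.finite_singleton _, fun o => ⟨1, K.one_mem, ?_⟩⟩
      rw [one_smul, Set.mem_singleton_iff]
      apply Subtype.ext
      have h1 : o.1 = ∅ := Set.subset_empty_iff.1 (hW ▸ o.2.sub)
      rw [h1]
      ext C; simp [hW]

end Pocset
end VF

namespace VF

universe u v w

section Tight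
variable {X : Type u}

/-- boundary of a set with respect to a relation -/
def bdR (R : X → X → Prop) (C : Set X) : Set (X × X) := {p | p.1 ∈ C ∧ p.2 ∉ C ∧ R p.1 p.2}

/-- connectedness of a subset -/
def ConnR (R : X → X → Prop) (C : Set X) : Prop :=
  ∀ D, D ⊆ C → D.Nonempty → (∀ x ∈ D, ∀ y ∈ C, R x y → y ∈ D) → D = C

theorem path_edges {R : X → X → Prop} {x y : X} (h : Relation.ReflTransGen R x y) :
    ∃ E : Set (X × X), E.Finite ∧ (∀ e ∈ E, R e.1 e.2) ∧
      ∀ C : Set X, x ∈ C → y ∉ C → ∃ e ∈ E, e.1 ∈ C ∧ e.2 ∉ C := by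
  induction h with
  | refl => exact ⟨∅, Set.finite_empty, by simp, fun C h1 h2 => absurd h1 h2⟩
  | @tail b c _ hbc ih =>
    obtain ⟨E, h1, h2, h3⟩ := ih
    refine ⟨insert (b, c) E, h1.insert _, ?_, ?_⟩
    · rintro e (rfl | he)
      · exact hbc
      · exact h2 e he
    · intro C hx hc
      by_cases hb : b ∈ C
      · exact ⟨(b, c), by simp, hb, hc⟩
      · obtain ⟨e, he, h4⟩ := h3 C hx hb
        exact ⟨e, Or.inr he, h4⟩

theorem tight_fin (k : ℕ) : ∀ (R : X → X → Prop), (∀ x y, R x y → R y x) → ∀ x y, R x y →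
    {C : Set X | x ∈ C ∧ y ∉ C ∧ ConnR R C ∧ ConnR R Cᶜ ∧ (bdR R C).Finite ∧
      (bdR R C).ncard = k}.Finite := by
  classical
  induction k with
  | zero =>
    intro R hR x y hxy
    convert Set.finite_empty
    rw [Set.eq_empty_iff_forall_notMem]
    rintro C ⟨hx, hy, -, -, hf, hc⟩
    rw [Set.ncard_eq_zero hf] at hc
    have : (x, y) ∈ bdR R C := ⟨hx, hy, hxy⟩
    rw [hc] at this
    exact this
  | succ k ih =>
    intro R hR x y hxy
    let R' : X → X → Prop := fun a b => R a b ∧ ¬ (a = x ∧ b = y) ∧ ¬ (a = y ∧ b = x)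
    have hR' : ∀ a b, R' a b → R' b a := fun a b h => ⟨hR _ _ h.1, fun e => h.2.2 ⟨e.2, e.1⟩,
      fun e => h.2.1 ⟨e.2, e.1⟩⟩
    have hin : ∀ C : Set X, (x ∈ C → y ∉ C) → (y ∈ C → x ∉ C) → ∀ a ∈ C, ∀ b ∈ C, R a b → R' a b := by
      intro C h1 h2 a ha b hb hab
      refine ⟨hab, ?_, ?_⟩
      · rintro ⟨rfl, rfl⟩; exact h1 ha hb
      · rintro ⟨rfl, rfl⟩; exact h1 hb ha
    by_cases hr : Relation.ReflTransGen R' x y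
    · obtain ⟨E, hE, hER, hEC⟩ := path_edges hr
      refine (hE.biUnion (t := fun e => {C : Set X | e.1 ∈ C ∧ e.2 ∉ C ∧ ConnR R' C ∧ ConnR R' Cᶜ ∧
        (bdR R' C).Finite ∧ (bdR R' C).ncard = k}) (fun e he => ih R' hR' e.1 e.2 (hER e he))).subset ?_
      rintro C ⟨hx, hy, h1, h2, h3, h4⟩
      obtain ⟨e, he, he1, he2⟩ := hEC C hx hy
      simp only [Set.mem_iUnion]
      have hbd : bdR R' C = bdR R C \ {(x, y)} := by
        ext ⟨a, b⟩
        constructor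
        · rintro ⟨g1, g2, g3⟩
          refine ⟨⟨g1, g2, g3.1⟩, ?_⟩
          intro e
          rw [Set.mem_singleton_iff, Prod.mk.injEq] at e
          exact g3.2.1 e
        · rintro ⟨⟨g1, g2, g3⟩, g4⟩
          refine ⟨g1, g2, g3, ?_, ?_⟩
          · rintro ⟨e1, e2⟩
            apply g4
            simp only at e1 e2
            rw [e1, e2]; rfl
          · rintro ⟨e1, e2⟩
            simp only at e1 e2 g1
            rw [e1] at g1; exact hy g1
      refine ⟨e, he, he1, he2, ?_, ?_, ?_, ?_⟩
      · intro D hD hne hcl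
        exact h1 D hD hne (fun a ha b hb hab => hcl a ha b hb
          (hin C (fun _ => hy) (fun h => absurd h hy) a (hD ha) b hb hab))
      · intro D hD hne hcl
        exact h2 D hD hne (fun a ha b hb hab => hcl a ha b hb
          (hin Cᶜ (fun h => absurd hx h) (fun _ h => h hx) a (hD ha) b hb hab))
      · rw [hbd]; exact h3.subset Set.sdiff_subset
      · rw [hbd, Set.ncard_sdiff_singleton_of_mem (show (x, y) ∈ bdR R C from ⟨hx, hy, hxy⟩), h4]; rfl
    · refine (Set.finite_singleton {z | Relation.ReflTransGen R' x z}).subset ?_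
      rintro C ⟨hx, hy, h1, h2, -, -⟩
      rw [Set.mem_singleton_iff]
      have e1 : C ∩ {z | Relation.ReflTransGen R' x z} = C := by
        refine h1 _ Set.inter_subset_left ⟨x, hx, Relation.ReflTransGen.refl⟩ ?_
        rintro a ⟨ha, ha'⟩ b hb hab
        exact ⟨hb, Relation.ReflTransGen.tail ha'
          (hin C (fun _ => hy) (fun h => absurd h hy) a ha b hb hab)⟩
      have e2 : Cᶜ ∩ {z | Relation.ReflTransGen R' y z} = Cᶜ := by
        refine h2 _ Set.inter_subset_left ⟨y, hy, Relation.ReflTransGen.refl⟩ ?_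
        rintro a ⟨ha, ha'⟩ b hb hab
        exact ⟨hb, Relation.ReflTransGen.tail ha'
          (hin Cᶜ (fun h => absurd hx h) (fun _ h => h hx) a ha b hb hab)⟩
      refine Set.Subset.antisymm (Set.inter_eq_left.1 e1) ?_
      intro z hz
      by_contra hzC
      have hz2 : Relation.ReflTransGen R' y z := Set.inter_eq_left.1 e2 hzC
      have hsym : Relation.ReflTransGen R' z y := by
        have : Std.Symm R' := ⟨hR'⟩
        exact (Relation.ReflTransGen.stdSymm (r := R')).symm _ _ hz2
      exact hr (Relation.ReflTransGen.trans hz hsym)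

/-- crossing sets -/
def Cross (C D : Set X) : Prop :=
  (C ∩ D).Nonempty ∧ (C ∩ Dᶜ).Nonempty ∧ (Cᶜ ∩ D).Nonempty ∧ (Cᶜ ∩ Dᶜ).Nonempty

theorem Cross.symm {C D : Set X} (h : Cross C D) : Cross D C := by
  obtain ⟨h1, h2, h3, h4⟩ := h
  refine ⟨?_, ?_, ?_, ?_⟩ <;> rw [Set.inter_comm] <;> assumption

theorem Cross.compl_right {C D : Set X} (h : Cross C D) : Cross C Dᶜ := by
  obtain ⟨h1, h2, h3, h4⟩ := h
  refine ⟨h2, ?_, h4, ?_⟩ <;> rwa [_root_.compl_compl]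

theorem cross_compl_right_iff {C D : Set X} : Cross C Dᶜ ↔ Cross C D :=
  ⟨fun h => by simpa using h.compl_right, fun h => h.compl_right⟩

theorem nested_of_not_cross {C D : Set X} (h : ¬ Cross C D) :
    C ⊆ D ∨ C ⊆ Dᶜ ∨ Cᶜ ⊆ D ∨ Cᶜ ⊆ Dᶜ := by
  unfold Cross at h
  by_contra hcon
  push Not at hcon
  obtain ⟨h1, h2, h3, h4⟩ := hcon
  apply h
  simp only [Set.not_subset] at h1 h2 h3 h4
  obtain ⟨a, ha⟩ := h1
  obtain ⟨b, hb⟩ := h2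
  obtain ⟨c, hc⟩ := h3
  obtain ⟨d, hd⟩ := h4
  refine ⟨⟨b, hb.1, by simpa using hb.2⟩, ⟨a, ha⟩, ⟨d, hd.1, by simpa using hd.2⟩, ⟨c, hc⟩⟩

theorem not_cross_of_nested {C D : Set X} (h : C ⊆ D ∨ C ⊆ Dᶜ ∨ Cᶜ ⊆ D ∨ Cᶜ ⊆ Dᶜ) : ¬ Cross C D := by
  rintro ⟨⟨a, ha⟩, ⟨b, hb⟩, ⟨c, hc⟩, ⟨d, hd⟩⟩
  rcases h with h | h | h | h
  · exact hb.2 (h hb.1)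
  · exact h ha.1 ha.2
  · exact hd.2 (h hd.1)
  · exact h hc.1 hc.2

/-- corners do not increase crossings -/
theorem cross_corner {C D F : Set X} (h1 : Cross F (C ∩ D)) (h2 : Cross F (C ∪ D)) :
    Cross F C ∧ Cross F D := by
  constructor
  · by_contra h
    rcases nested_of_not_cross h with h | h | h | h
    · exact not_cross_of_nested (Or.inl (h.trans Set.subset_union_left)) h2
    · exact not_cross_of_nested (Or.inr (Or.inl (h.trans (fun x hx hy => hx hy.1)))) h1
    · exact not_cross_of_nested (Or.inr (Or.inr (Or.inl (h.trans Set.subset_union_left)))) h2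
    · exact not_cross_of_nested (Or.inr (Or.inr (Or.inr (h.trans (fun x hx hy => hx hy.1))))) h1
  · by_contra h
    rcases nested_of_not_cross h with h | h | h | h
    · exact not_cross_of_nested (Or.inl (h.trans Set.subset_union_right)) h2
    · exact not_cross_of_nested (Or.inr (Or.inl (h.trans (fun x hx hy => hx hy.2)))) h1
    · exact not_cross_of_nested (Or.inr (Or.inr (Or.inl (h.trans Set.subset_union_right)))) h2
    · exact not_cross_of_nested (Or.inr (Or.inr (Or.inr (h.trans (fun x hx hy => hx hy.2))))) h1

theorem cross_corner_or {C D F : Set X} (hCD : Cross C D) (h1 : Cross F (C ∩ D) ∨ Cross F (C ∪ D)) :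
    Cross F C ∨ Cross F D := by
  by_contra h
  rw [not_or] at h
  obtain ⟨⟨p, hp⟩, ⟨q, hq⟩, ⟨r, hr⟩, ⟨s, hs⟩⟩ := hCD
  rcases h1 with ⟨⟨a, ha⟩, ⟨b, hb⟩, ⟨c, hc⟩, ⟨d, hd⟩⟩ | ⟨⟨a, ha⟩, ⟨b, hb⟩, ⟨c, hc⟩, ⟨d, hd⟩⟩
  all_goals
    rcases nested_of_not_cross h.1 with h1 | h1 | h1 | h1 <;>
    rcases nested_of_not_cross h.2 with h2 | h2 | h2 | h2 <;>
    simp only [Set.subset_def, Set.mem_compl_iff, Set.mem_inter_iff, Set.mem_union] at * <;>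
    grind

end Tight
end VF

namespace VF

universe u v w

section Cuts
variable {X : Type u} {R : X → X → Prop}

theorem bdR_compl (hR : ∀ x y, R x y → R y x) (C : Set X) : bdR R Cᶜ = Prod.swap '' bdR R C := by
  ext ⟨a, b⟩
  rw [Set.mem_image]
  constructor
  · rintro ⟨h1, h2, h3⟩
    exact ⟨(b, a), ⟨by simpa using h2, h1, hR _ _ h3⟩, rfl⟩
  · rintro ⟨⟨c, d⟩, ⟨h1, h2, h3⟩, e⟩
    simp only [Prod.swap_prod_mk, Prod.mk.injEq] at e
    obtain ⟨rfl, rfl⟩ := e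
    exact ⟨h2, by simpa using h1, hR _ _ h3⟩

theorem bdR_compl_fin (hR : ∀ x y, R x y → R y x) {C : Set X} (h : (bdR R C).Finite) :
    (bdR R Cᶜ).Finite := by
  rw [bdR_compl hR]; exact h.image _

theorem bdR_compl_card (hR : ∀ x y, R x y → R y x) (C : Set X) :
    (bdR R Cᶜ).ncard = (bdR R C).ncard := by
  rw [bdR_compl hR]; exact Set.ncard_image_of_injective _ Prod.swap_injective

theorem bdR_union_sub (C D : Set X) : bdR R (C ∩ D) ∪ bdR R (C ∪ D) ⊆ bdR R C ∪ bdR R D := by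
  rintro ⟨a, b⟩ (⟨h1, h2, h3⟩ | ⟨h1, h2, h3⟩)
  · by_cases hb : b ∈ C
    · exact Or.inr ⟨h1.2, fun h => h2 ⟨hb, h⟩, h3⟩
    · exact Or.inl ⟨h1.1, hb, h3⟩
  · rcases h1 with h1 | h1
    · exact Or.inl ⟨h1, fun h => h2 (Or.inl h), h3⟩
    · exact Or.inr ⟨h1, fun h => h2 (Or.inr h), h3⟩

theorem bdR_inter_sub (C D : Set X) : bdR R (C ∩ D) ∩ bdR R (C ∪ D) ⊆ bdR R C ∩ bdR R D := by
  rintro ⟨a, b⟩ ⟨⟨h1, h2, h3⟩, ⟨h4, h5, h6⟩⟩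
  exact ⟨⟨h1.1, fun h => h5 (Or.inl h), h3⟩, ⟨h1.2, fun h => h5 (Or.inr h), h3⟩⟩

theorem card_submod {Y : Type*} {A B A' B' : Set Y} (hA : A'.Finite) (hB : B'.Finite)
    (h1 : A ∪ B ⊆ A' ∪ B') (h2 : A ∩ B ⊆ A' ∩ B') :
    A.Finite ∧ B.Finite ∧ A.ncard + B.ncard ≤ A'.ncard + B'.ncard ∧
      (∀ x ∈ A' ∪ B', x ∉ A → x ∉ B → A.ncard + B.ncard < A'.ncard + B'.ncard) := by
  have hf := (hA.union hB)
  have hAf : A.Finite := hf.subset (Set.subset_union_left.trans h1)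
  have hBf : B.Finite := hf.subset (Set.subset_union_right.trans h1)
  have e1 := Set.ncard_union_add_ncard_inter A B hAf hBf
  have e2 := Set.ncard_union_add_ncard_inter A' B' hA hB
  have e3 := Set.ncard_le_ncard h1 hf
  have e4 := Set.ncard_le_ncard h2 (hA.inter_of_left _)
  refine ⟨hAf, hBf, by omega, ?_⟩
  intro x hx hx1 hx2
  have : (A ∪ B).ncard < (A' ∪ B').ncard :=
    Set.ncard_lt_ncard ⟨h1, fun h => (h hx).elim hx1 hx2⟩ hf
  omega

theorem bdR_submod {C D : Set X} (hC : (bdR R C).Finite) (hD : (bdR R D).Finite) :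
    (bdR R (C ∩ D)).Finite ∧ (bdR R (C ∪ D)).Finite ∧
    (bdR R (C ∩ D)).ncard + (bdR R (C ∪ D)).ncard ≤ (bdR R C).ncard + (bdR R D).ncard := by
  obtain ⟨h1, h2, h3, -⟩ := card_submod hC hD (bdR_union_sub C D) (bdR_inter_sub C D)
  exact ⟨h1, h2, h3⟩

theorem eq_univ_of_bd (hconn : ∀ x y, Relation.ReflTransGen R x y) {E : Set X} (hE : bdR R E = ∅)
    {x : X} (hx : x ∈ E) (y : X) : y ∈ E := by
  induction hconn x y with
  | refl => exact hx
  | @tail b c _ hbc ih =>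
    by_contra h
    have : (b, c) ∈ bdR R E := ⟨ih, h, hbc⟩
    rw [hE] at this; exact this

theorem uf_inter (α : Ultrafilter X) (C D : Set X) : C ∩ D ∈ α ↔ C ∈ α ∧ D ∈ α :=
  Filter.inter_mem_iff (f := (α : Filter X))

/-- a cut separating two ultrafilters -/
def Sep (π : Ultrafilter X × Ultrafilter X) (C : Set X) : Prop := ¬ (C ∈ π.1 ↔ C ∈ π.2)

theorem Sep.compl {π : Ultrafilter X × Ultrafilter X} {C : Set X} (h : Sep π C) : Sep π Cᶜ := by
  unfold Sep at *
  rw [Ultrafilter.compl_mem_iff_notMem, Ultrafilter.compl_mem_iff_notMem]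
  tauto

/-- minimal separating cut -/
structure IsMin (R : X → X → Prop) (π : Ultrafilter X × Ultrafilter X) (C : Set X) : Prop where
  fin : (bdR R C).Finite
  sep : Sep π C
  le : ∀ D, (bdR R D).Finite → Sep π D → (bdR R C).ncard ≤ (bdR R D).ncard

theorem IsMin.compl (hR : ∀ x y, R x y → R y x) {π : Ultrafilter X × Ultrafilter X} {C : Set X}
    (h : IsMin R π C) : IsMin R π Cᶜ :=
  ⟨bdR_compl_fin hR h.fin, h.sep.compl, fun D h1 h2 => by
    rw [bdR_compl_card hR]; exact h.le D h1 h2⟩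

theorem IsMin.conn (hR : ∀ x y, R x y → R y x) (hconn : ∀ x y, Relation.ReflTransGen R x y)
    {π : Ultrafilter X × Ultrafilter X} {C : Set X} (h : IsMin R π C) : ConnR R C := by
  intro D hD hne hcl
  have hD1 : bdR R D ⊆ bdR R C := by
    rintro ⟨a, b⟩ ⟨h1, h2, h3⟩
    exact ⟨hD h1, fun hb => h2 (hcl a h1 b hb h3), h3⟩
  have hE1 : bdR R (C \ D) ⊆ bdR R C := by
    rintro ⟨a, b⟩ ⟨h1, h2, h3⟩
    refine ⟨h1.1, fun hb => ?_, h3⟩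
    have : b ∈ D := by by_contra hbD; exact h2 ⟨hb, hbD⟩
    exact h1.2 (hcl b this a h1.1 (hR _ _ h3))
  have hdis : ∀ e, e ∈ bdR R D → e ∈ bdR R (C \ D) → False := fun e h1 h2 => h2.1.2 h1.1
  have hsep : Sep π D ∨ Sep π (C \ D) := by
    have hs := h.sep
    have hCe : C = D ∪ (C \ D) := by rw [Set.union_sdiff_cancel hD]
    unfold Sep at *
    rw [hCe, Ultrafilter.union_mem_iff, Ultrafilter.union_mem_iff] at hs
    tauto
  rcases hsep with hs | hs
  · have h1 := h.le D (h.fin.subset hD1) hs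
    have h2 := Set.eq_of_subset_of_ncard_le hD1 h1 h.fin
    have h3 : bdR R (C \ D) = ∅ := by
      rw [Set.eq_empty_iff_forall_notMem]
      intro e he
      exact hdis e (h2 ▸ hE1 he) he
    refine Set.Subset.antisymm hD ?_
    intro x hx
    by_contra hxD
    obtain ⟨y, hy⟩ := hne
    exact (eq_univ_of_bd hconn h3 (x := x) ⟨hx, hxD⟩ y).2 hy
  · have h1 := h.le _ (h.fin.subset hE1) hs
    have h2 := Set.eq_of_subset_of_ncard_le hE1 h1 h.fin
    have h3 : bdR R D = ∅ := by
      rw [Set.eq_empty_iff_forall_notMem]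
      intro e he
      exact hdis e he (h2 ▸ hD1 he)
    refine Set.Subset.antisymm hD ?_
    intro x hx
    obtain ⟨y, hy⟩ := hne
    exact eq_univ_of_bd hconn h3 hy x

/-- all minimal cuts -/
def CC (R : X → X → Prop) (P : Set (Ultrafilter X × Ultrafilter X)) : Set (Set X) :=
  {C | ∃ π ∈ P, IsMin R π C}

/-- cuts of the family which cross a given one -/
def crs (R : X → X → Prop) (P : Set (Ultrafilter X × Ultrafilter X)) (C : Set X) : Set (Set X) :=
  {D ∈ CC R P | Cross D C}

/-- optimal cuts -/
structure IsOpt (R : X → X → Prop) (P : Set (Ultrafilter X × Ultrafilter X))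
    (π : Ultrafilter X × Ultrafilter X) (C : Set X) : Prop where
  min : IsMin R π C
  le : ∀ D, IsMin R π D → (crs R P C).ncard ≤ (crs R P D).ncard

theorem crs_compl (P : Set (Ultrafilter X × Ultrafilter X)) (C : Set X) :
    crs R P Cᶜ = crs R P C := by
  ext D
  simp only [crs, Set.mem_ofPred_eq, cross_compl_right_iff]

theorem IsOpt.compl (hR : ∀ x y, R x y → R y x) {P : Set (Ultrafilter X × Ultrafilter X)}
    {π : Ultrafilter X × Ultrafilter X} {C : Set X}
    (h : IsOpt R P π C) : IsOpt R P π Cᶜ :=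
  ⟨h.min.compl hR, fun D hD => by rw [crs_compl]; exact h.le D hD⟩

theorem exists_isOpt (P : Set (Ultrafilter X × Ultrafilter X)) (k₀ : ℕ)
    (hP : ∀ π ∈ P, ∃ C, (bdR R C).Finite ∧ (bdR R C).ncard ≤ k₀ ∧ Sep π C)
    {π} (hπ : π ∈ P) : ∃ C, IsOpt R P π C := by
  classical
  have h1 : ∃ C, IsMin R π C := by
    obtain ⟨C₀, h1, h2, h3⟩ := hP π hπ
    have hne : {C | (bdR R C).Finite ∧ Sep π C}.Nonempty := ⟨C₀, h1, h3⟩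
    obtain ⟨C, hC, hmin⟩ := (measure (fun C : Set X => (bdR R C).ncard)).wf.has_min _ hne
    exact ⟨C, hC.1, hC.2, fun D h4 h5 => not_lt.1 (hmin D ⟨h4, h5⟩)⟩
  obtain ⟨C, hC, hmin⟩ := (measure (fun C : Set X => (crs R P C).ncard)).wf.has_min
    {C | IsMin R π C} h1
  exact ⟨C, hC, fun D h4 => not_lt.1 (hmin D h4)⟩

theorem CC_sep_fin (hR : ∀ x y, R x y → R y x) (hconn : ∀ x y, Relation.ReflTransGen R x y)
    (P : Set (Ultrafilter X × Ultrafilter X)) (k₀ : ℕ)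
    (hP : ∀ π ∈ P, ∃ C, (bdR R C).Finite ∧ (bdR R C).ncard ≤ k₀ ∧ Sep π C)
    (p q : X) : {D ∈ CC R P | p ∈ D ∧ q ∉ D}.Finite := by
  obtain ⟨E, hE, hER, hEC⟩ := path_edges (hconn p q)
  refine (hE.biUnion (t := fun e => ⋃ k ∈ Set.Iic k₀, {C : Set X | e.1 ∈ C ∧ e.2 ∉ C ∧
    ConnR R C ∧ ConnR R Cᶜ ∧ (bdR R C).Finite ∧ (bdR R C).ncard = k}) ?_).subset ?_
  · intro e he
    exact (Set.finite_Iic k₀).biUnion (fun k _ => tight_fin k R hR _ _ (hER e he))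
  · rintro D ⟨⟨π, hπ, hD⟩, hp, hq⟩
    obtain ⟨e, he, h1, h2⟩ := hEC D hp hq
    obtain ⟨C₀, h3, h4, h5⟩ := hP π hπ
    simp only [Set.mem_iUnion]
    exact ⟨e, he, (bdR R D).ncard, (hD.le C₀ h3 h5).trans h4, h1, h2, hD.conn hR hconn,
      (hD.compl hR).conn hR hconn, hD.fin, rfl⟩

theorem conn_edge {D C : Set X} (hD : ConnR R D) (h1 : (D ∩ C).Nonempty) (h2 : (D ∩ Cᶜ).Nonempty) :
    ∃ e ∈ bdR R C, e.1 ∈ D := by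
  by_contra hcon
  push Not at hcon
  have := hD (D ∩ C) Set.inter_subset_left h1 (by
    rintro x ⟨hx, hxC⟩ y hy hxy
    refine ⟨hy, ?_⟩
    by_contra hyC
    exact hcon (x, y) ⟨hxC, hyC, hxy⟩ hx)
  obtain ⟨z, hz, hzC⟩ := h2
  rw [← this] at hz
  exact hzC hz.2

theorem crs_fin (hR : ∀ x y, R x y → R y x) (hconn : ∀ x y, Relation.ReflTransGen R x y)
    (P : Set (Ultrafilter X × Ultrafilter X)) (k₀ : ℕ)
    (hP : ∀ π ∈ P, ∃ C, (bdR R C).Finite ∧ (bdR R C).ncard ≤ k₀ ∧ Sep π C)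
    {C : Set X} (hC : (bdR R C).Finite) : (crs R P C).Finite := by
  refine (hC.biUnion (t := fun e => ⋃ e' ∈ bdR R C, {D ∈ CC R P | e.1 ∈ D ∧ e'.1 ∉ D}) ?_).subset ?_
  · intro e he
    exact hC.biUnion (fun e' _ => CC_sep_fin hR hconn P k₀ hP _ _)
  · rintro D ⟨hD, hcr⟩
    have hD' := hD
    obtain ⟨π, hπ, hDm⟩ := hD'
    obtain ⟨e, he, h1⟩ := conn_edge (hDm.conn hR hconn) hcr.1 hcr.2.1
    obtain ⟨e', he', h1'⟩ := conn_edge ((hDm.compl hR).conn hR hconn) hcr.2.2.1 hcr.2.2.2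
    simp only [Set.mem_iUnion]
    exact ⟨e, he, e', he', hD, h1, h1'⟩

theorem crs_submod (hR : ∀ x y, R x y → R y x) (hconn : ∀ x y, Relation.ReflTransGen R x y)
    (P : Set (Ultrafilter X × Ultrafilter X)) (k₀ : ℕ)
    (hP : ∀ π ∈ P, ∃ C, (bdR R C).Finite ∧ (bdR R C).ncard ≤ k₀ ∧ Sep π C)
    {C D : Set X} (hC : C ∈ CC R P) (hD : D ∈ CC R P) (hCD : Cross C D) :
    (crs R P (C ∩ D)).ncard + (crs R P (C ∪ D)).ncard < (crs R P C).ncard + (crs R P D).ncard := by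
  have fC : (crs R P C).Finite := by
    obtain ⟨π, _, h⟩ := hC
    exact crs_fin hR hconn P k₀ hP h.fin
  have fD : (crs R P D).Finite := by
    obtain ⟨π, _, h⟩ := hD
    exact crs_fin hR hconn P k₀ hP h.fin
  refine (card_submod fC fD ?_ ?_).2.2.2 C (Or.inr ⟨hC, hCD⟩) ?_ ?_
  · rintro F (⟨h1, h2⟩ | ⟨h1, h2⟩)
    · rcases cross_corner_or hCD (Or.inl h2) with h | h
      · exact Or.inl ⟨h1, h⟩
      · exact Or.inr ⟨h1, h⟩
    · rcases cross_corner_or hCD (Or.inr h2) with h | h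
      · exact Or.inl ⟨h1, h⟩
      · exact Or.inr ⟨h1, h⟩
  · rintro F ⟨⟨h1, h2⟩, ⟨-, h3⟩⟩
    exact ⟨⟨h1, (cross_corner h2 h3).1⟩, ⟨h1, (cross_corner h2 h3).2⟩⟩
  · rintro ⟨-, ⟨-, -, ⟨z, hz⟩, -⟩⟩
    exact hz.1 hz.2.1
  · rintro ⟨-, ⟨-, ⟨z, hz⟩, -⟩⟩
    exact hz.2 (Or.inl hz.1)

theorem lemU (hR : ∀ x y, R x y → R y x) (hconn : ∀ x y, Relation.ReflTransGen R x y)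
    (P : Set (Ultrafilter X × Ultrafilter X)) (k₀ : ℕ)
    (hP : ∀ π ∈ P, ∃ C, (bdR R C).Finite ∧ (bdR R C).ncard ≤ k₀ ∧ Sep π C)
    {π π'} (hπ : π ∈ P) (hπ' : π' ∈ P) {C D : Set X} (hC : IsOpt R P π C)
    (hD : IsOpt R P π' D) (hCD : Cross C D) :
    ¬ (Sep π (C ∩ D) ∧ Sep π' (C ∪ D)) ∧ ¬ (Sep π' (C ∩ D) ∧ Sep π (C ∪ D)) := by
  obtain ⟨f1, f2, f3⟩ := bdR_submod hC.min.fin hD.min.fin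
  have f4 := crs_submod hR hconn P k₀ hP ⟨π, hπ, hC.min⟩ ⟨π', hπ', hD.min⟩ hCD
  constructor
  · rintro ⟨s1, s2⟩
    have l1 := hC.min.le _ f1 s1
    have l2 := hD.min.le _ f2 s2
    have l3 := hC.le (C ∩ D) ⟨f1, s1, fun E e1 e2 => by
      have := hC.min.le E e1 e2; omega⟩
    have l4 := hD.le (C ∪ D) ⟨f2, s2, fun E e1 e2 => by
      have := hD.min.le E e1 e2; omega⟩
    omega
  · rintro ⟨s1, s2⟩
    have l1 := hD.min.le _ f1 s1
    have l2 := hC.min.le _ f2 s2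
    have l3 := hD.le (C ∩ D) ⟨f1, s1, fun E e1 e2 => by
      have := hD.min.le E e1 e2; omega⟩
    have l4 := hC.le (C ∪ D) ⟨f2, s2, fun E e1 e2 => by
      have := hC.min.le E e1 e2; omega⟩
    omega

theorem lemM (hR : ∀ x y, R x y → R y x) (hconn : ∀ x y, Relation.ReflTransGen R x y)
    (P : Set (Ultrafilter X × Ultrafilter X)) (k₀ : ℕ)
    (hP : ∀ π ∈ P, ∃ C, (bdR R C).Finite ∧ (bdR R C).ncard ≤ k₀ ∧ Sep π C)
    {π π'} (hπ : π ∈ P) (hπ' : π' ∈ P) {C D : Set X} (hC : IsOpt R P π C)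
    (hD : IsOpt R P π' D) (hCD : Cross C D) :
    ¬ (Sep π (C ∩ D) ∧ Sep π (C ∪ D) ∧ Sep π' (C ∩ Dᶜ) ∧ Sep π' (C ∪ Dᶜ)) := by
  obtain ⟨f1, f2, f3⟩ := bdR_submod hC.min.fin hD.min.fin
  obtain ⟨g1, g2, g3⟩ := bdR_submod hC.min.fin (hD.compl hR).min.fin
  have f4 := crs_submod hR hconn P k₀ hP ⟨π, hπ, hC.min⟩ ⟨π', hπ', hD.min⟩ hCD
  have g4 := crs_submod hR hconn P k₀ hP ⟨π, hπ, hC.min⟩ ⟨π', hπ', (hD.compl hR).min⟩ hCD.compl_right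
  rw [crs_compl] at g4
  rw [bdR_compl_card hR] at g3
  rintro ⟨s1, s2, s3, s4⟩
  have l1 := hC.min.le _ f1 s1
  have l2 := hC.min.le _ f2 s2
  have l3 := hD.min.le _ g1 s3
  have l4 := hD.min.le _ g2 s4
  have m1 := hC.le (C ∩ D) ⟨f1, s1, fun E e1 e2 => by
    have := hC.min.le E e1 e2; omega⟩
  have m2 := hC.le (C ∪ D) ⟨f2, s2, fun E e1 e2 => by
    have := hC.min.le E e1 e2; omega⟩
  have m3 := hD.le (C ∩ Dᶜ) ⟨g1, s3, fun E e1 e2 => by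
    have := hD.min.le E e1 e2; omega⟩
  have m4 := hD.le (C ∪ Dᶜ) ⟨g2, s4, fun E e1 e2 => by
    have := hD.min.le E e1 e2; omega⟩
  omega

theorem opt_nested (hR : ∀ x y, R x y → R y x) (hconn : ∀ x y, Relation.ReflTransGen R x y)
    (P : Set (Ultrafilter X × Ultrafilter X)) (k₀ : ℕ)
    (hP : ∀ π ∈ P, ∃ C, (bdR R C).Finite ∧ (bdR R C).ncard ≤ k₀ ∧ Sep π C)
    {π π'} (hπ : π ∈ P) (hπ' : π' ∈ P) {C D : Set X} (hC : IsOpt R P π C)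
    (hD : IsOpt R P π' D) : ¬ Cross C D := by
  intro hCD
  have u1 := lemU hR hconn P k₀ hP hπ hπ' hC hD hCD
  have u2 := lemU hR hconn P k₀ hP hπ hπ' hC (hD.compl hR) hCD.compl_right
  have m1 := lemM hR hconn P k₀ hP hπ hπ' hC hD hCD
  have m2 := lemM hR hconn P k₀ hP hπ hπ' hC (hD.compl hR) hCD.compl_right
  have s1 := hC.min.sep
  have s2 := hD.min.sep
  rw [_root_.compl_compl] at m2
  obtain ⟨u1a, u1b⟩ := u1
  obtain ⟨u2a, u2b⟩ := u2
  simp only [Sep, Ultrafilter.union_mem_iff, uf_inter,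
    Ultrafilter.compl_mem_iff_notMem] at *
  generalize (C ∈ π.1) = c1 at *
  generalize (C ∈ π.2) = c2 at *
  generalize (C ∈ π'.1) = c3 at *
  generalize (C ∈ π'.2) = c4 at *
  generalize (D ∈ π.1) = d1 at *
  generalize (D ∈ π.2) = d2 at *
  generalize (D ∈ π'.1) = d3 at *
  generalize (D ∈ π'.2) = d4 at *
  clear hP hπ hπ' hC hD hCD hR hconn
  by_cases c1 <;> by_cases c2 <;> by_cases c3 <;> by_cases c4 <;> by_cases d1 <;> by_cases d2 <;>
    by_cases d3 <;> by_cases d4 <;> simp_all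

end Cuts
end VF

namespace VF

universe u v w

section GCuts
open scoped Pointwise
variable {G : Type u} [Group G]

/-- Cayley relation -/
def cay (S : Set G) (x y : G) : Prop := x⁻¹ * y ∈ S

theorem cay_symm {S : Set G} (hS : ∀ s ∈ S, s⁻¹ ∈ S) (x y : G) (h : cay S x y) : cay S y x := by
  have := hS _ h
  unfold cay
  simpa using this

theorem cay_smul {S : Set G} (a x y : G) : cay S (a * x) (a * y) ↔ cay S x y := by
  unfold cay; simp [mul_assoc]

theorem cay_conn {S : Set G} (hS : ∀ s ∈ S, s⁻¹ ∈ S) (hgen : Subgroup.closure S = ⊤) (x y : G) :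
    Relation.ReflTransGen (cay S) x y := by
  have key : ∀ t ∈ Subgroup.closure S, ∀ x : G, Relation.ReflTransGen (cay S) x (x * t) := by
    intro t ht
    induction ht using Subgroup.closure_induction with
    | mem s hs => intro x; exact Relation.ReflTransGen.single (by unfold cay; simpa using hs)
    | one => intro x; rw [mul_one]
    | mul a b _ _ ha hb =>
      intro x
      rw [← mul_assoc]
      exact (ha x).trans (hb _)
    | inv a _ ha =>
      intro x
      have h1 := ha (x * a⁻¹)
      rw [inv_mul_cancel_right] at h1
      have : Std.Symm (cay S) := ⟨cay_symm hS⟩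
      exact (Relation.ReflTransGen.stdSymm (r := cay S)).symm _ _ h1
  have := key (x⁻¹ * y) (hgen ▸ Subgroup.mem_top _) x
  rwa [mul_inv_cancel_left] at this

theorem bd_smul {S : Set G} (a : G) (C : Set G) :
    bdR (cay S) (a • C) = (fun p : G × G => (a * p.1, a * p.2)) '' bdR (cay S) C := by
  ext ⟨x, y⟩
  constructor
  · rintro ⟨h1, h2, h3⟩
    refine ⟨(a⁻¹ * x, a⁻¹ * y), ⟨?_, ?_, ?_⟩, by simp⟩
    · simpa [Set.mem_smul_set_iff_inv_smul_mem] using h1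
    · simpa [Set.mem_smul_set_iff_inv_smul_mem] using h2
    · exact (cay_smul _ _ _).2 h3
  · rintro ⟨⟨p, q⟩, ⟨h1, h2, h3⟩, e⟩
    simp only [Prod.mk.injEq] at e
    obtain ⟨rfl, rfl⟩ := e
    refine ⟨?_, ?_, ?_⟩
    · simpa [Set.mem_smul_set_iff_inv_smul_mem] using h1
    · simpa [Set.mem_smul_set_iff_inv_smul_mem] using h2
    · exact (cay_smul _ _ _).2 h3

theorem bd_smul_fin {S : Set G} (a : G) {C : Set G} (h : (bdR (cay S) C).Finite) :
    (bdR (cay S) (a • C)).Finite := by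
  rw [bd_smul]; exact h.image _

theorem bd_smul_card {S : Set G} (a : G) (C : Set G) :
    (bdR (cay S) (a • C)).ncard = (bdR (cay S) C).ncard := by
  rw [bd_smul]
  apply Set.ncard_image_of_injective
  rintro ⟨x, y⟩ ⟨x', y'⟩ e
  simpa using e

/-- translation of pairs of ultrafilters -/
def tr (a : G) (π : Ultrafilter G × Ultrafilter G) : Ultrafilter G × Ultrafilter G :=
  (π.1.map (fun x => a * x), π.2.map (fun x => a * x))

theorem mem_map_smul (a : G) (α : Ultrafilter G) (C : Set G) :
    a • C ∈ α.map (fun x => a * x) ↔ C ∈ α := by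
  rw [Ultrafilter.mem_map]
  have : (fun x => a * x) ⁻¹' (a • C) = C := by
    ext x
    simp [Set.mem_smul_set_iff_inv_smul_mem]
  rw [this]

theorem sep_tr (a : G) (π : Ultrafilter G × Ultrafilter G) (C : Set G) :
    Sep (tr a π) (a • C) ↔ Sep π C := by
  unfold Sep tr
  simp only [mem_map_smul]

theorem isMin_tr {S : Set G} (a : G) {π : Ultrafilter G × Ultrafilter G} {C : Set G}
    (h : IsMin (cay S) π C) : IsMin (cay S) (tr a π) (a • C) := by
  refine ⟨bd_smul_fin a h.fin, (sep_tr a π C).2 h.sep, ?_⟩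
  intro D h1 h2
  rw [bd_smul_card, ← bd_smul_card a⁻¹ D]
  refine h.le _ (bd_smul_fin _ h1) ?_
  rw [← sep_tr a]
  simpa using h2

theorem tr_inv (a : G) (π : Ultrafilter G × Ultrafilter G) : tr a⁻¹ (tr a π) = π := by
  unfold tr
  rw [Ultrafilter.map_map, Ultrafilter.map_map]
  have : (fun x => a⁻¹ * x) ∘ (fun x => a * x) = id := by funext x; simp
  simp [this]

theorem cross_smul (a : G) {C D : Set G} (h : Cross C D) : Cross (a • C) (a • D) := by
  obtain ⟨⟨p, hp⟩, ⟨q, hq⟩, ⟨r, hr⟩, ⟨s, hs⟩⟩ := h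
  refine ⟨⟨a * p, ?_⟩, ⟨a * q, ?_⟩, ⟨a * r, ?_⟩, ⟨a * s, ?_⟩⟩ <;>
  simpa [Set.mem_smul_set_iff_inv_smul_mem]

theorem crs_smul_card {S : Set G} (P : Set (Ultrafilter G × Ultrafilter G))
    (hP : ∀ a : G, ∀ π ∈ P, tr a π ∈ P) (a : G) (C : Set G) :
    (crs (cay S) P (a • C)).ncard = (crs (cay S) P C).ncard := by
  have h1 : ∀ (a : G) (C D : Set G), D ∈ crs (cay S) P C → a • D ∈ crs (cay S) P (a • C) := by
    rintro a C D ⟨⟨π, hπ, hD⟩, h2⟩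
    exact ⟨⟨tr a π, hP a π hπ, isMin_tr a hD⟩, cross_smul a h2⟩
  have h2 : crs (cay S) P (a • C) = (fun D => a • D) '' crs (cay S) P C := by
    ext D
    constructor
    · intro h
      refine ⟨a⁻¹ • D, ?_, by simp⟩
      simpa using h1 a⁻¹ _ _ h
    · rintro ⟨D, hD, rfl⟩
      exact h1 a C D hD
  rw [h2]
  exact Set.ncard_image_of_injective _ (MulAction.injective a)

theorem isOpt_tr {S : Set G} (P : Set (Ultrafilter G × Ultrafilter G))
    (hP : ∀ a : G, ∀ π ∈ P, tr a π ∈ P) (a : G) {π : Ultrafilter G × Ultrafilter G} {C : Set G}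
    (h : IsOpt (cay S) P π C) : IsOpt (cay S) P (tr a π) (a • C) := by
  refine ⟨isMin_tr a h.min, ?_⟩
  intro D hD
  rw [crs_smul_card P hP, ← crs_smul_card P hP a⁻¹ D]
  refine h.le _ ?_
  have := isMin_tr a⁻¹ hD
  rwa [tr_inv] at this

theorem cut_right_fin {S : Set G} (hS : ∀ s ∈ S, s⁻¹ ∈ S) (hgen : Subgroup.closure S = ⊤) (t : G) :
    ∀ C : Set G, (bdR (cay S) C).Finite → {x | x ∈ C ∧ x * t ∉ C}.Finite := by
  have ht : t ∈ Subgroup.closure S := hgen ▸ Subgroup.mem_top _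
  induction ht using Subgroup.closure_induction with
  | mem s hs =>
    intro C hC
    refine (hC.image Prod.fst).subset ?_
    rintro x ⟨h1, h2⟩
    exact ⟨(x, x * s), ⟨h1, h2, by unfold cay; simpa using hs⟩, rfl⟩
  | one =>
    intro C _
    convert Set.finite_empty
    ext x; simp
  | mul a b _ _ ha hb =>
    intro C hC
    refine ((ha C hC).union ((hb C hC).preimage (f := fun x => x * a)
      (mul_left_injective a).injOn)).subset ?_
    rintro x ⟨h1, h2⟩
    by_cases h3 : x * a ∈ C
    · exact Or.inr ⟨h3, by rwa [mul_assoc]⟩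
    · exact Or.inl ⟨h1, h3⟩
  | inv a _ ha =>
    intro C hC
    refine ((ha Cᶜ (bdR_compl_fin (cay_symm hS) hC)).preimage (f := fun x => x * a⁻¹)
      (mul_left_injective a⁻¹).injOn).subset ?_
    rintro x ⟨h1, h2⟩
    exact ⟨h2, by simpa using h1⟩

theorem eventually_const {S : Set G} (hS : ∀ s ∈ S, s⁻¹ ∈ S) (hgen : Subgroup.closure S = ⊤)
    {C : Set G} (hC : (bdR (cay S) C).Finite) {h : G} (hh : ¬ IsOfFinOrder h) :
    (∃ n₀ : ℕ, ∀ n ≥ n₀, h ^ n ∈ C) ∨ (∃ n₀ : ℕ, ∀ n ≥ n₀, h ^ n ∉ C) := by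
  have hinj : Function.Injective (fun n : ℕ => h ^ n) := injective_pow_iff_not_isOfFinOrder.2 hh
  have f1 := (cut_right_fin hS hgen h C hC).preimage hinj.injOn
  have f2 := (cut_right_fin hS hgen h Cᶜ (bdR_compl_fin (cay_symm hS) hC)).preimage hinj.injOn
  obtain ⟨N, hN⟩ := (f1.union f2).bddAbove
  have hstep : ∀ n > N, (h ^ n ∈ C ↔ h ^ (n + 1) ∈ C) := by
    intro n hn
    by_contra hcon
    have : n ∈ ((fun n : ℕ => h ^ n) ⁻¹' {x | x ∈ C ∧ x * h ∉ C}) ∪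
      ((fun n : ℕ => h ^ n) ⁻¹' {x | x ∈ Cᶜ ∧ x * h ∉ Cᶜ}) := by
      simp only [Set.mem_union, Set.mem_preimage, Set.mem_ofPred_eq, Set.mem_compl_iff, ← pow_succ]
      tauto
    exact absurd (hN this) (not_le.2 hn)
  have hall : ∀ n ≥ N + 1, (h ^ n ∈ C ↔ h ^ (N + 1) ∈ C) := by
    intro n hn
    induction n, hn using Nat.le_induction with
    | base => rfl
    | succ n hn ih => rw [← hstep n (by omega), ih]
  by_cases h1 : h ^ (N + 1) ∈ C
  · exact Or.inl ⟨N + 1, fun n hn => (hall n hn).2 h1⟩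
  · exact Or.inr ⟨N + 1, fun n hn h2 => h1 ((hall n hn).1 h2)⟩

/-- the ultrafilter of a ray -/
noncomputable def ray (g h : G) : Ultrafilter G := (Filter.hyperfilter ℕ).map (fun n => g * h ^ n)

theorem mem_ray {g h : G} {C : Set G} (hC : ∃ n₀ : ℕ, ∀ n ≥ n₀, g * h ^ n ∈ C) : C ∈ ray g h := by
  obtain ⟨n₀, hn⟩ := hC
  unfold ray
  rw [Ultrafilter.mem_map]
  apply Filter.mem_hyperfilter_of_finite_compl
  refine (Set.finite_lt_nat n₀).subset ?_
  intro n hn'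
  by_contra h2
  exact hn' (hn n (not_lt.1 h2))

theorem tr_ray (a g h : G) : (ray g h).map (fun x => a * x) = ray (a * g) h := by
  unfold ray
  rw [Ultrafilter.map_map]
  congr 1
  funext n
  simp [mul_assoc]

/-- pairs of ends -/
def endPairs (K : Subgroup G) : Set (Ultrafilter G × Ultrafilter G) :=
  {π | ∃ g : G, ∃ h ∈ K, h ≠ 1 ∧ π = (ray g h, ray g h⁻¹)}

theorem endPairs_tr (K : Subgroup G) (a : G) (π) (hπ : π ∈ endPairs K) : tr a π ∈ endPairs K := by
  obtain ⟨g, h, hh, h1, rfl⟩ := hπ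
  exact ⟨a * g, h, hh, h1, by unfold tr; rw [tr_ray, tr_ray]⟩

theorem exists_poc {K : Subgroup G} (hKfi : K.FiniteIndex) (hK : ∀ k ∈ K, IsOfFinOrder k → k = 1)
    {S : Set G} (hSf : S.Finite) (hS : ∀ s ∈ S, s⁻¹ ∈ S) (hgen : Subgroup.closure S = ⊤) (k₀ : ℕ)
    (hb : ∀ h ∈ K, h ≠ 1 → ∃ C : Set G, (bdR (cay S) C).Finite ∧ (bdR (cay S) C).ncard ≤ k₀ ∧
      (∃ n₀ : ℕ, ∀ n ≥ n₀, h ^ n ∈ C) ∧ (∃ n₀ : ℕ, ∀ n ≥ n₀, h⁻¹ ^ n ∉ C)) :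
    ∃ W, IsPoc K W := by
  have hR := cay_symm hS
  have hconn := cay_conn hS hgen
  let P := endPairs K
  have hP : ∀ π ∈ P, ∃ C, (bdR (cay S) C).Finite ∧ (bdR (cay S) C).ncard ≤ k₀ ∧ Sep π C := by
    rintro _ ⟨g, h, hh, h1, rfl⟩
    obtain ⟨C, c1, c2, ⟨n₁, c3⟩, ⟨n₂, c4⟩⟩ := hb h hh h1
    refine ⟨g • C, bd_smul_fin g c1, by rwa [bd_smul_card], ?_⟩
    have m1 : g • C ∈ ray g h := mem_ray ⟨n₁, fun n hn => by
      simpa [Set.mem_smul_set_iff_inv_smul_mem] using c3 n hn⟩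
    have m2 : (g • C)ᶜ ∈ ray g h⁻¹ := mem_ray ⟨n₂, fun n hn => by
      simpa [Set.mem_smul_set_iff_inv_smul_mem] using c4 n hn⟩
    rw [Ultrafilter.compl_mem_iff_notMem] at m2
    unfold Sep
    tauto
  have hPt := endPairs_tr K
  let W : Set (Set G) := {C | ∃ π ∈ P, IsOpt (cay S) P π C}
  have Wcompl : ∀ C ∈ W, Cᶜ ∈ W := fun C ⟨π, hπ, hC⟩ => ⟨π, hπ, hC.compl hR⟩
  have Wne : ∀ C ∈ W, C.Nonempty := by
    rintro C ⟨π, hπ, hC⟩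
    rw [Set.nonempty_iff_ne_empty]
    rintro rfl
    apply hC.min.sep
    simp [Ultrafilter.empty_notMem]
  have WCC : ∀ C ∈ W, C ∈ CC (cay S) P := fun C ⟨π, hπ, hC⟩ => ⟨π, hπ, hC.min⟩
  refine ⟨W, ?_, Wcompl, ?_, Wne, ?_, ?_, ?_⟩
  · rintro g C ⟨π, hπ, hC⟩
    exact ⟨tr g π, hPt g π hπ, isOpt_tr P hPt g hC⟩
  · rintro C ⟨π, hπ, hC⟩ D ⟨π', hπ', hD⟩
    exact nested_of_not_cross (opt_nested hR hconn P k₀ hP hπ hπ' hC hD)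
  · intro x y
    exact (CC_sep_fin hR hconn P k₀ hP x y).subset (fun C hC => ⟨WCC C hC.1, hC.2⟩)
  · have : Finite (G ⧸ K) := inferInstance
    let T : Set G := Set.range (fun q : G ⧸ K => (q.out)⁻¹)
    have hT : T.Finite := Set.finite_range _
    have hTK : ∀ g : G, ∃ k ∈ K, k * g ∈ T := by
      intro g
      obtain ⟨k, hk⟩ := QuotientGroup.mk_out_eq_mul K g⁻¹
      refine ⟨(k : G)⁻¹, K.inv_mem k.2, ⟨QuotientGroup.mk g⁻¹, ?_⟩⟩
      show (Quotient.out (QuotientGroup.mk g⁻¹ : G ⧸ K))⁻¹ = _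
      rw [hk]; simp
    refine ⟨⋃ t ∈ T, ⋃ s ∈ S, {C ∈ CC (cay S) P | t ∈ C ∧ t * s ∉ C}, ?_, ?_⟩
    · exact hT.biUnion (fun t _ => hSf.biUnion (fun s _ => CC_sep_fin hR hconn P k₀ hP _ _))
    · intro C hC
      obtain ⟨x, hx⟩ := Wne C hC
      obtain ⟨y, hy⟩ := Wne _ (Wcompl C hC)
      have hbd : (bdR (cay S) C).Nonempty := by
        rw [Set.nonempty_iff_ne_empty]
        intro e
        exact hy (eq_univ_of_bd hconn e hx y)
      obtain ⟨⟨p, q⟩, hp, hq, hpq⟩ := hbd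
      obtain ⟨k, hk, hkp⟩ := hTK p
      refine ⟨k, hk, ?_⟩
      simp only [Set.mem_iUnion]
      obtain ⟨π, hπ, hCo⟩ := hC
      refine ⟨k * p, hkp, p⁻¹ * q, hpq, ⟨tr k π, hPt k π hπ, isMin_tr k hCo.min⟩, ?_, ?_⟩
      · simpa [Set.mem_smul_set_iff_inv_smul_mem] using hp
      · simpa [Set.mem_smul_set_iff_inv_smul_mem] using hq
  · intro h hh h1
    have hπ : (ray 1 h, ray 1 h⁻¹) ∈ P := ⟨1, h, hh, h1, rfl⟩
    obtain ⟨C, hC⟩ := exists_isOpt P k₀ hP hπ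
    have hi1 : ¬ IsOfFinOrder h := fun e => h1 (hK h hh e)
    have hi2 : ¬ IsOfFinOrder h⁻¹ := fun e => h1 (hK h hh (by simpa using e))
    have hconv : ∀ {g : G}, (¬ IsOfFinOrder g) → ∀ D : Set G, (bdR (cay S) D).Finite → D ∈ ray 1 g →
        ∃ n₀ : ℕ, ∀ n ≥ n₀, g ^ n ∈ D := by
      intro g hg D hD hDr
      rcases eventually_const hS hgen hD hg with h2 | ⟨n, h2⟩
      · exact h2
      · exfalso
        have : Dᶜ ∈ ray 1 g := mem_ray ⟨n, fun m hm => by simpa using h2 m hm⟩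
        rw [Ultrafilter.compl_mem_iff_notMem] at this
        exact this hDr
    have main : ∀ C : Set G, IsOpt (cay S) P (ray 1 h, ray 1 h⁻¹) C → C ∈ ray 1 h → C ∉ ray 1 h⁻¹ →
        (∃ n₀ : ℕ, ∀ n ≥ n₀, h ^ n ∈ C) ∧ (∃ n₀ : ℕ, ∀ n ≥ n₀, h⁻¹ ^ n ∉ C) := by
      intro C hC m1 m2
      refine ⟨hconv hi1 C hC.min.fin m1, ?_⟩
      rw [← Ultrafilter.compl_mem_iff_notMem] at m2
      exact hconv hi2 Cᶜ (bdR_compl_fin hR hC.min.fin) m2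
    have hs := hC.min.sep
    unfold Sep at hs
    by_cases m1 : C ∈ ray 1 h
    · refine ⟨C, ⟨_, hπ, hC⟩, main C hC m1 (by tauto)⟩
    · refine ⟨Cᶜ, ⟨_, hπ, hC.compl hR⟩, main Cᶜ (hC.compl hR) ?_ ?_⟩
      · rwa [Ultrafilter.compl_mem_iff_notMem]
      · rw [Ultrafilter.compl_mem_iff_notMem]
        tauto

end GCuts
end VF

namespace VF

universe u v w

section FreeCut
open scoped Pointwise
variable {ι : Type v} [DecidableEq ι]

/-- first letter -/
def hd (x : FreeGroup ι) : Option (ι × Bool) := x.toWord.head?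

theorem hd_mul_of (i : ι) (k : FreeGroup ι) (h1 : k ≠ 1) (h2 : k ≠ (FreeGroup.of i)⁻¹) :
    hd (k * FreeGroup.of i) = hd k := by
  unfold hd
  have hr : FreeGroup.IsReduced k.toWord := FreeGroup.isReduced_toWord
  have hne : k.toWord ≠ [] := fun e => h1 (FreeGroup.toWord_eq_nil_iff.1 e)
  obtain ⟨L, a, hL⟩ : ∃ L a, k.toWord = L ++ [a] := ⟨_, _, (List.dropLast_append_getLast hne).symm⟩
  by_cases ha : a = (i, false)
  · subst ha
    have hLne : L ≠ [] := by
      rintro rfl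
      apply h2
      rw [← FreeGroup.toWord_inj, hL, FreeGroup.toWord_inv, FreeGroup.toWord_of]
      rfl
    have hk : k * FreeGroup.of i = FreeGroup.mk L := by
      have : k = FreeGroup.mk L * (FreeGroup.of i)⁻¹ := by
        rw [← FreeGroup.mk_toWord (x := k), hL, ← FreeGroup.mul_mk]
        rfl
      rw [this, inv_mul_cancel_right]
    have hLr : FreeGroup.IsReduced L := by
      rw [hL] at hr
      unfold FreeGroup.IsReduced at hr ⊢
      exact (List.isChain_append.1 hr).1
    rw [hk, FreeGroup.toWord_mk, hLr.reduce_eq, hL, List.head?_append]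
    cases L with
    | nil => exact absurd rfl hLne
    | cons b L => rfl
  · have hLr : FreeGroup.IsReduced (k.toWord ++ [(i, true)]) := by
      unfold FreeGroup.IsReduced at hr ⊢
      rw [List.isChain_append]
      refine ⟨hr, by simp, ?_⟩
      intro x hx y hy
      rw [hL] at hx
      simp only [List.getLast?_append, List.getLast?_singleton, Option.some_or, Option.mem_def,
        Option.some.injEq, List.head?_cons] at hx hy
      subst hx hy
      intro e
      by_contra h3
      apply ha
      ext
      · exact e
      · simpa using h3
    rw [FreeGroup.toWord_mul, FreeGroup.toWord_of, hLr.reduce_eq, List.head?_append]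
    cases hw : k.toWord with
    | nil => exact absurd hw hne
    | cons b L => rfl

theorem hd_fin (q : FreeGroup ι) : {k | hd (k * q) ≠ hd k}.Finite := by
  have hinv : ∀ q : FreeGroup ι, {k | hd (k * q) ≠ hd k}.Finite → {k | hd (k * q⁻¹) ≠ hd k}.Finite := by
    intro q h
    refine (h.preimage (f := fun k => k * q⁻¹) (mul_left_injective q⁻¹).injOn).subset ?_
    intro k hk
    show hd (k * q⁻¹ * q) ≠ hd (k * q⁻¹)
    rw [inv_mul_cancel_right]
    exact fun e => hk e.symm
  have hof : ∀ i : ι, {k | hd (k * FreeGroup.of i) ≠ hd k}.Finite := by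
    intro i
    refine (Set.toFinite {1, (FreeGroup.of i)⁻¹}).subset ?_
    intro k hk
    by_contra hcon
    simp only [Set.mem_insert_iff, Set.mem_singleton_iff, not_or] at hcon
    exact hk (hd_mul_of i k hcon.1 hcon.2)
  induction q using FreeGroup.induction_on with
  | C1 => convert Set.finite_empty; ext k; simp
  | of i => exact hof i
  | inv_of i h => exact hinv _ (hof i)
  | mul x y hx hy =>
    refine (hx.union (hy.preimage (f := fun k => k * x) (mul_left_injective x).injOn)).subset ?_
    intro k hk
    by_contra hcon
    simp only [Set.mem_union, Set.mem_preimage, Set.mem_ofPred_eq, not_or, not_not] at hcon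
    exact hk (by rw [← mul_assoc, hcon.2, hcon.1])

theorem hd_pow {x : FreeGroup ι} (hx : x ≠ 1) : ∃ c w : FreeGroup ι, x = c * w * c⁻¹ ∧ w ≠ 1 ∧
    (∀ n : ℕ, 1 ≤ n → hd (w ^ n) = hd w) ∧ (∀ n : ℕ, 1 ≤ n → hd (w⁻¹ ^ n) ≠ hd w) := by
  have hcr := FreeGroup.reduceCyclically.isCyclicallyReduced (FreeGroup.isReduced_toWord (x := x))
  have hconj := FreeGroup.reduceCyclically.conj_conjugator_reduceCyclically x.toWord
  generalize FreeGroup.reduceCyclically x.toWord = L at *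
  generalize FreeGroup.reduceCyclically.conjugator x.toWord = c at *
  have hxe : x = FreeGroup.mk c * FreeGroup.mk L * (FreeGroup.mk c)⁻¹ := by
    rw [FreeGroup.inv_mk, FreeGroup.mul_mk, FreeGroup.mul_mk, hconj, FreeGroup.mk_toWord]
  have hLw : (FreeGroup.mk L).toWord = L := by rw [FreeGroup.toWord_mk, hcr.isReduced.reduce_eq]
  have hLne : L ≠ [] := by
    rintro rfl
    apply hx
    rw [hxe]
    show FreeGroup.mk c * 1 * _ = _
    rw [mul_one, mul_inv_cancel]
  have hMw : ∀ n, (FreeGroup.mk L ^ n).toWord = (List.replicate n L).flatten := by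
    intro n
    rw [FreeGroup.toWord_pow, hLw, (hcr.flatten_replicate n).isReduced.reduce_eq]
  have hhd : ∀ n : ℕ, 1 ≤ n → ((List.replicate n L).flatten).head? = L.head? := by
    intro n hn
    obtain ⟨m, rfl⟩ := Nat.exists_eq_add_of_le hn
    rw [Nat.add_comm, List.replicate_succ, List.flatten_cons, List.head?_append]
    cases L with
    | nil => exact absurd rfl hLne
    | cons b L => rfl
  refine ⟨FreeGroup.mk c, FreeGroup.mk L, hxe, ?_, ?_, ?_⟩
  · intro e
    rw [← FreeGroup.toWord_eq_nil_iff, hLw] at e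
    exact hLne e
  · intro n hn
    unfold hd
    rw [hMw, hLw, hhd n hn]
  · intro n hn
    unfold hd
    rw [inv_pow, FreeGroup.toWord_inv, hMw, hLw, ← hhd n hn]
    have hM := hcr.flatten_replicate n
    have hMne : ((List.replicate n L).flatten) ≠ [] := by
      intro e
      have := hhd n hn
      rw [e] at this
      cases L with
      | nil => exact absurd rfl hLne
      | cons b L => simp at this
    generalize (List.replicate n L).flatten = M at *
    intro e
    obtain ⟨b, M', hb⟩ := List.exists_cons_of_ne_nil hMne
    have h1 : M.head? = some b := by rw [hb]; rfl
    have h2 : M.getLast? = some (M.getLast hMne) := List.getLast?_eq_getLast_of_ne_nil hMne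
    generalize M.getLast hMne = a at *
    rw [h1] at e
    simp only [FreeGroup.invRev, List.head?_reverse, List.getLast?_map, h2, Option.map_some,
      Option.some.injEq] at e
    have h3 := hM.2 a h2 b h1 (by rw [← e])
    rw [← e] at h3
    simp at h3

end FreeCut

section FreeCut2
open scoped Pointwise
variable {G : Type u} [Group G]

theorem exists_kappa (K : Subgroup G) (hKfi : K.FiniteIndex) :
    ∃ (κ : G → K) (T : Set G), T.Finite ∧ (∀ (k : K) (x : G), κ (k * x) = k * κ x) ∧
      ∀ x, ∃ t ∈ T, x = κ x * t := by
  classical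
  have : Finite (G ⧸ K) := inferInstance
  have h1 : ∀ x : G, x * Quotient.out (QuotientGroup.mk x⁻¹ : G ⧸ K) ∈ K := by
    intro x
    obtain ⟨k, hk⟩ := QuotientGroup.mk_out_eq_mul K x⁻¹
    rw [hk, mul_inv_cancel_left]
    exact k.2
  refine ⟨fun x => ⟨_, h1 x⟩, Set.range (fun q : G ⧸ K => (q.out)⁻¹), Set.finite_range _, ?_, ?_⟩
  · intro k x
    apply Subtype.ext
    show (k : G) * x * Quotient.out (QuotientGroup.mk (k * x)⁻¹ : G ⧸ K) =
      k * (x * Quotient.out (QuotientGroup.mk x⁻¹ : G ⧸ K))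
    have : (QuotientGroup.mk (k * x)⁻¹ : G ⧸ K) = QuotientGroup.mk x⁻¹ := by
      rw [QuotientGroup.eq]
      simp
    rw [this, mul_assoc]
  · intro x
    exact ⟨_, ⟨QuotientGroup.mk x⁻¹, rfl⟩, by simp⟩

theorem exists_bounded_cuts {K : Subgroup G} (hKfi : K.FiniteIndex) {ι : Type v} [DecidableEq ι]
    (e : K ≃* FreeGroup ι) {S : Set G} (hSf : S.Finite) :
    ∃ k₀ : ℕ, ∀ h ∈ K, h ≠ 1 → ∃ C : Set G, (bdR (cay S) C).Finite ∧ (bdR (cay S) C).ncard ≤ k₀ ∧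
      (∃ n₀ : ℕ, ∀ n ≥ n₀, h ^ n ∈ C) ∧ (∃ n₀ : ℕ, ∀ n ≥ n₀, h⁻¹ ^ n ∉ C) := by
  classical
  obtain ⟨κ, T, hT, hκ, hκT⟩ := exists_kappa K hKfi
  let E : Set (G × G) := {p | cay S p.1 p.2 ∧ hd (e (κ p.2)) ≠ hd (e (κ p.1))}
  have hE : E.Finite := by
    let Q : Set (FreeGroup ι) := (fun p : G × G => e ((κ p.1)⁻¹ * κ (p.1 * p.2))) '' (T ×ˢ S)
    have hQ : Q.Finite := (hT.prod hSf).image _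
    let B : Set (FreeGroup ι) := ⋃ q ∈ Q, {k | hd (k * q) ≠ hd k}
    have hB : B.Finite := hQ.biUnion (fun q _ => hd_fin q)
    refine ((hB.prod (hT.prod hSf)).image (fun p : FreeGroup ι × G × G =>
      (((e.symm p.1 : K) : G) * p.2.1, ((e.symm p.1 : K) : G) * p.2.1 * p.2.2))).subset ?_
    rintro ⟨x, y⟩ ⟨h1, h2⟩
    obtain ⟨t, ht, hx⟩ := hκT x
    have hs : x * (x⁻¹ * y) = y := by simp
    refine ⟨(e (κ x), t, x⁻¹ * y), ⟨?_, ht, h1⟩, ?_⟩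
    · simp only [B, Set.mem_iUnion]
      refine ⟨e ((κ t)⁻¹ * κ (t * (x⁻¹ * y))), ⟨(t, x⁻¹ * y), ⟨ht, h1⟩, rfl⟩, ?_⟩
      show hd (e (κ x) * e ((κ t)⁻¹ * κ (t * (x⁻¹ * y)))) ≠ hd (e (κ x))
      have hy : κ y = κ x * κ (t * (x⁻¹ * y)) := by
        rw [← hκ, ← mul_assoc, ← hx, hs]
      have hx2 : κ x = κ x * κ t := by
        conv_lhs => rw [hx]
        rw [hκ]
      have hx3 : κ t = 1 := by
        rwa [left_eq_mul] at hx2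
      rw [hx3, inv_one, one_mul, ← map_mul, ← hy]
      exact h2
    · simp only [MulEquiv.symm_apply_apply, ← hx, hs]
  refine ⟨E.ncard, ?_⟩
  intro h hh h1
  have hx1 : e ⟨h, hh⟩ ≠ 1 := by
    rw [Ne, EmbeddingLike.map_eq_one_iff]
    intro e2
    exact h1 (congrArg Subtype.val e2)
  obtain ⟨c, w, hw, hw1, hp, hn⟩ := hd_pow hx1
  let C₀ : Set G := {x | hd (e (κ x)) = hd w}
  have hbd : bdR (cay S) C₀ ⊆ E := by
    rintro ⟨x, y⟩ ⟨p1, p2, p3⟩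
    exact ⟨p3, fun e2 => p2 (e2.trans p1)⟩
  let c' : G := (e.symm c : K)
  refine ⟨c' • C₀, bd_smul_fin _ (hE.subset hbd), ?_, ?_⟩
  · rw [bd_smul_card]
    exact Set.ncard_le_ncard hbd hE
  have hmem : ∀ g : FreeGroup ι, ((e.symm (c * g * c⁻¹) : K) : G) ∈ c' • C₀ ↔
      hd (g * (c⁻¹ * e (κ 1))) = hd w := by
    intro g
    rw [Set.mem_smul_set_iff_inv_smul_mem]
    show hd (e (κ (c'⁻¹ * ((e.symm (c * g * c⁻¹) : K) : G)))) = hd w ↔ _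
    have : c'⁻¹ * ((e.symm (c * g * c⁻¹) : K) : G) = ((e.symm (g * c⁻¹) : K) : G) * 1 := by
      simp only [c', map_mul, Subgroup.coe_mul, mul_assoc, inv_mul_cancel_left, mul_one]
    rw [this, hκ, map_mul, MulEquiv.apply_symm_apply, mul_assoc]
  have hev : ∀ v : FreeGroup ι, v ≠ 1 → ∃ n₀ : ℕ, ∀ n ≥ n₀,
      hd (v ^ n * (c⁻¹ * e (κ 1))) = hd (v ^ n) := by
    intro v hv
    have hinj : Function.Injective (fun n : ℕ => v ^ n) := by
      rw [injective_pow_iff_not_isOfFinOrder]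
      exact not_isOfFinOrder_of_isMulTorsionFree hv
    obtain ⟨N, hN⟩ := ((hd_fin (c⁻¹ * e (κ 1))).preimage hinj.injOn).bddAbove
    refine ⟨N + 1, fun n hn => ?_⟩
    by_contra hcon
    have := hN (show n ∈ (fun n : ℕ => v ^ n) ⁻¹' {k | hd (k * (c⁻¹ * e (κ 1))) ≠ hd k} from hcon)
    omega
  have hpow : ∀ n : ℕ, h ^ n = ((e.symm (c * w ^ n * c⁻¹) : K) : G) := by
    intro n
    rw [← conj_pow, ← hw, ← map_pow, MulEquiv.symm_apply_apply]
    rfl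
  have hpow' : ∀ n : ℕ, h⁻¹ ^ n = ((e.symm (c * w⁻¹ ^ n * c⁻¹) : K) : G) := by
    intro n
    rw [← conj_pow, ← conj_inv, ← hw, ← map_inv, ← map_pow, MulEquiv.symm_apply_apply]
    rfl
  constructor
  · obtain ⟨N, hN⟩ := hev w hw1
    refine ⟨N + 1, fun n hn' => ?_⟩
    rw [hpow, hmem, hN n (by omega)]
    exact hp n (by omega)
  · obtain ⟨N, hN⟩ := hev w⁻¹ (by simpa using hw1)
    refine ⟨N + 1, fun n hn' => ?_⟩
    rw [hpow', hmem, hN n (by omega)]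
    exact hn n (by omega)

/-- Every finitely generated virtually free group acts on a good tree. -/
theorem exists_good_tree (hfg : Group.FG G)
    (hvf : ∃ H : Subgroup G, H.FiniteIndex ∧ Nonempty (IsFreeGroup H)) :
    ∃ K : Subgroup G, K.FiniteIndex ∧ (∀ k ∈ K, IsOfFinOrder k → k = 1) ∧ Group.FG K ∧
    ∃ (V : Type u) (_ : MulAction G V) (Δ : SimpleGraph V) (col : V → Prop),
      IsGT K V Δ ∧ (∀ (g : G) u, col (g • u) ↔ col u) ∧
      (∀ u v, Δ.Adj u v → (col u ↔ ¬ col v)) := by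
  classical
  obtain ⟨K, hK, ⟨hfree⟩⟩ := hvf
  have e := IsFreeGroup.toFreeGroup K
  have hfgK : Group.FG K := by
    have := Subgroup.fg_of_index_ne_zero K
    exact this
  have htf : ∀ k ∈ K, IsOfFinOrder k → k = 1 := by
    intro k hk hfin
    by_contra hne
    have h1 : e ⟨k, hk⟩ ≠ 1 := by
      rw [Ne, EmbeddingLike.map_eq_one_iff]
      intro e2
      exact hne (congrArg Subtype.val e2)
    apply not_isOfFinOrder_of_isMulTorsionFree h1
    have h2 : IsOfFinOrder (⟨k, hk⟩ : K) := by
      rw [isOfFinOrder_iff_pow_eq_one] at hfin ⊢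
      obtain ⟨n, hn, e3⟩ := hfin
      exact ⟨n, hn, Subtype.ext e3⟩
    exact MonoidHom.isOfFinOrder e.toMonoidHom h2
  obtain ⟨S₀, hS₀⟩ := hfg.out
  let S : Set G := (S₀ : Set G) ∪ (S₀ : Set G)⁻¹
  have hSf : S.Finite := S₀.finite_toSet.union S₀.finite_toSet.inv
  have hS : ∀ s ∈ S, s⁻¹ ∈ S := by
    rintro s (hs | hs)
    · exact Or.inr (by simpa using hs)
    · exact Or.inl hs
  have hgen : Subgroup.closure S = ⊤ := by
    rw [eq_top_iff, ← hS₀]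
    exact Subgroup.closure_mono Set.subset_union_left
  obtain ⟨k₀, hk₀⟩ := exists_bounded_cuts hK e hSf
  obtain ⟨W, hW⟩ := exists_poc hK htf hSf hS hgen k₀ hk₀
  exact ⟨K, hK, htf, hfgK, hW.exists_tree hK hfgK⟩

end FreeCut2
end VF

namespace VF

universe u v w

section Minimal
variable {G : Type u} [Group G]

/-- Equal, adjacent, or with a common neighbour. -/
def Near {V : Type v} (Γ : SimpleGraph V) (a b : V) : Prop :=
  a = b ∨ Γ.Adj a b ∨ ∃ x, Γ.Adj x a ∧ Γ.Adj x b

theorem Near.map {V : Type v} {W : Type w} {Γ : SimpleGraph V} {Δ : SimpleGraph W} {c : V → W}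
    (hc : Lazy Γ Δ c) {a b : V} (h : Near Γ a b) : Near Δ (c a) (c b) := by
  rcases h with h | h | ⟨x, h1, h2⟩
  · exact Or.inl (congrArg c h)
  · rcases hc _ _ h with h | h
    · exact Or.inr (Or.inl h)
    · exact Or.inl h
  · rcases hc _ _ h1 with h1 | h1 <;> rcases hc _ _ h2 with h2 | h2
    · exact Or.inr (Or.inr ⟨_, h1, h2⟩)
    · exact Or.inr (Or.inl (h2 ▸ h1.symm))
    · exact Or.inr (Or.inl (h1 ▸ h2))
    · exact Or.inl (h1.symm.trans h2)

/-- Every edge group data generates an infinite subgroup. -/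
def Red (G : Type u) [Group G] {V : Type v} [MulAction G V] (Γ : SimpleGraph V) : Prop :=
  ∀ a b, Γ.Adj a b → ¬ (Subgroup.closure (SS (G := G) a b) : Set G).Finite

theorem exists_red {K : Subgroup G} (hK : ∀ k ∈ K, IsOfFinOrder k → k = 1)
    {V : Type v} [MulAction G V] {Γ : SimpleGraph V} (h : IsGT K V Γ) :
    ∃ (W : Type v) (_ : MulAction G W) (Δ : SimpleGraph W) (c : V → W),
      IsGT K W Δ ∧ (∀ (g : G) x, c (g • x) = g • c x) ∧ Lazy Γ Δ c ∧ Red G Δ := by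
  classical
  let P : ℕ → Prop := fun n => ∃ (W : Type v) (_ : MulAction G W) (Δ : SimpleGraph W) (c : V → W),
      IsGT K W Δ ∧ (∀ (g : G) x, c (g • x) = g • c x) ∧ Lazy Γ Δ c ∧ oc K W = n
  have hP : ∃ n, P n := ⟨_, V, inferInstance, Γ, id, h, fun _ _ => rfl, fun _ _ h => Or.inl h, rfl⟩
  obtain ⟨W, act, Δ, c, h1, h2, h3, h4⟩ := Nat.find_spec hP
  refine ⟨W, act, Δ, c, h1, h2, h3, ?_⟩
  intro a b hab hfin
  obtain ⟨W', act', Δ', c', q1, q2, q3, q4, q5, q6, -⟩ :=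
    fold_step.{u, v, 0} hK h1 a b hab.ne (Or.inl hab) hfin
  rw [h4] at q5
  refine Nat.find_min hP q5 ⟨W', act', Δ', c' ∘ c, q1, ?_, ?_, rfl⟩
  · intro g x
    show c' (c (g • x)) = g • c' (c x)
    rw [h2, q3]
  · intro x y hxy
    rcases h3 x y hxy with h | h
    · exact q4 _ _ h
    · exact Or.inr (congrArg c' h)

theorem exists_min_map {K : Subgroup G} (hK : ∀ k ∈ K, IsOfFinOrder k → k = 1)
    {V : Type v} [MulAction G V] {Γ : SimpleGraph V} (h : IsGT K V Γ)
    {G' : Type*} [Group G'] {K' : Subgroup G'} {V' : Type w} [MulAction G' V'] {Γ' : SimpleGraph V'}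
    (h' : IsGT K' V' Γ') (φ : G →* G') (f : V → V') (hf : ∀ (g : G) x, f (g • x) = φ g • f x)
    (hfl : Lazy Γ Γ' f) :
    ∃ (W : Type v) (_ : MulAction G W) (Δ : SimpleGraph W) (F : W → V'),
      IsGT K W Δ ∧ (∀ (g : G) x, F (g • x) = φ g • F x) ∧
      (Function.Injective F ∨ ∃ a b, Near Δ a b ∧ F a = F b ∧
        ¬ (Subgroup.closure (SS (G := G) a b) : Set G).Finite) := by
  classical
  let P : ℕ → Prop := fun n => ∃ (W : Type v) (_ : MulAction G W) (Δ : SimpleGraph W) (F : W → V'),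
      IsGT K W Δ ∧ (∀ (g : G) x, F (g • x) = φ g • F x) ∧ Lazy Δ Γ' F ∧ oc K W = n
  have hP : ∃ n, P n := ⟨_, V, inferInstance, Γ, f, h, hf, hfl, rfl⟩
  obtain ⟨W, act, Δ, F, h1, h2, h3, h4⟩ := Nat.find_spec hP
  refine ⟨W, act, Δ, F, h1, h2, ?_⟩
  by_cases hinj : Function.Injective F
  · exact Or.inl hinj
  right
  obtain ⟨a, b, hne, hab, hadj⟩ := exists_fold h1.tree h'.tree F h3 hinj
  refine ⟨a, b, Or.inr hadj, hab, ?_⟩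
  intro hfin
  obtain ⟨W', act', Δ', c', q1, q2, q3, q4, q5, q6, q7, q8⟩ :=
    fold_step.{u, v, w} hK h1 a b hne hadj hfin
  rw [h4] at q5
  obtain ⟨F', hF'⟩ := q8 F (by
    intro g
    rw [h2, h2, hab])
  refine Nat.find_min hP q5 ⟨W', act', Δ', F', q1, ?_, ?_, rfl⟩
  · intro g x
    obtain ⟨x, rfl⟩ := q2 x
    rw [← q3, hF', hF', h2]
  · intro x y hxy
    obtain ⟨x, y, hxy2, rfl, rfl⟩ := q6 _ _ hxy
    rw [hF', hF']
    exact h3 _ _ hxy2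

end Minimal

section RedOrbit
variable {G : Type u} [Group G] {V : Type v} [MulAction G V]

theorem exists_closer {Γ : SimpleGraph V} (hT : Γ.IsTree) {a w : V} (hne : a ≠ w) :
    ∃ x, Γ.Adj a x ∧ Γ.dist w a = Γ.dist w x + 1 := by
  obtain ⟨q, hq⟩ := (hT.connected a w).exists_walk_length_eq_dist
  cases q with
  | nil => exact absurd rfl hne
  | cons h q =>
    rename_i x
    refine ⟨x, h, ?_⟩
    rw [SimpleGraph.Walk.length_cons] at hq
    have h1 : Γ.dist x w ≤ q.length := SimpleGraph.dist_le q
    have h2 : Γ.dist a w ≤ Γ.dist x w + 1 := by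
      obtain ⟨q', hq'⟩ := (hT.connected x w).exists_walk_length_eq_dist
      rw [← hq']
      exact SimpleGraph.dist_le (SimpleGraph.Walk.cons h q')
    rw [SimpleGraph.dist_comm (u := w), SimpleGraph.dist_comm (u := w)]
    omega

theorem dist_smul {Γ : SimpleGraph V} (hT : Γ.IsTree)
    (hinv : ∀ (g : G) u v, Γ.Adj u v → Γ.Adj (g • u) (g • v)) (g : G) (a b : V) :
    Γ.dist (g • a) (g • b) = Γ.dist a b := by
  have key : ∀ (g : G) a b, Γ.dist (g • a) (g • b) ≤ Γ.dist a b := by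
    intro g a b
    obtain ⟨q, hq⟩ := (hT.connected a b).exists_walk_length_eq_dist
    let f : Γ →g Γ := ⟨fun x => g • x, fun h => hinv g _ _ h⟩
    rw [← hq, ← SimpleGraph.Walk.length_map f q]
    exact SimpleGraph.dist_le _
  refine le_antisymm (key g a b) ?_
  have := key g⁻¹ (g • a) (g • b)
  simpa using this

theorem red_orbit {K : Subgroup G} {Γ : SimpleGraph V} (h : IsGT K V Γ) (hr : Red G Γ) (n : ℕ) :
    ∀ a w : V, Γ.dist w a = n → (∀ g : G, g • a = a → g • w = w) → ∃ g : G, g • a = w := by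
  induction n with
  | zero =>
    intro a w hd _
    have := (h.tree.connected.dist_eq_zero_iff).1 hd
    exact ⟨1, by simp [this]⟩
  | succ n ih =>
    intro a w hd hst
    have hne : a ≠ w := by
      rintro rfl
      simp at hd
    obtain ⟨x, hx, hxd⟩ := exists_closer h.tree hne
    have hsx : ∀ g : G, g • a = a → g • x = x := by
      intro g hg
      refine closer_unique h.tree w (v := a) ?_ hx.symm ?_ hxd
      · have := h.inv g _ _ hx
        rw [hg] at this
        exact this.symm
      · rw [hxd]
        congr 1
        rw [← dist_smul h.tree h.inv g, hst g hg]
    by_cases hex : ∃ g : G, g • a = x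
    · obtain ⟨g, hg⟩ := hex
      -- the stabilizers of a and x agree
      have hmap : ∀ k : G, k • a = a → (g⁻¹ * k * g) • a = a := by
        intro k hk
        rw [mul_smul, mul_smul, hg, hsx k hk, ← hg, inv_smul_smul]
      have hsurj : Set.SurjOn (fun k : G => g⁻¹ * k * g) {k : G | k • a = a} {k : G | k • a = a} := by
        have hbij := ((h.stab a).injOn_iff_bijOn_of_mapsTo (f := fun k : G => g⁻¹ * k * g)
          (fun k hk => hmap k hk)).1 (fun k _ k' _ e => by simpa using e)
        exact hbij.surjOn
      obtain ⟨g', hg'⟩ := ih x w (by omega) (by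
        intro k hk
        apply hst
        have h1 : (g⁻¹ * k * g) • a = a := by
          rw [mul_smul, mul_smul, hg, hk, ← hg, inv_smul_smul]
        obtain ⟨k', hk', e⟩ := hsurj h1
        have : k' = k := by simpa using e
        exact this ▸ hk')
      exact ⟨g' * g, by rw [mul_smul, hg, hg']⟩
    · exfalso
      apply hr a x hx
      apply (h.stab x).subset
      have : Subgroup.closure (SS (G := G) a x) ≤ MulAction.stabilizer G x := by
        rw [Subgroup.closure_le]
        rintro g (hg | hg | hg)
        · exact hsx g hg
        · exact hg
        · exact absurd ⟨g, hg⟩ hex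
      exact this

theorem no_inversion {K : Subgroup G} {Γ : SimpleGraph V} (h : IsGT K V Γ) {a b : V}
    (hab : Γ.Adj a b) (g : G) (h1 : g • a = b) (h2 : g • b = a) : False := by
  obtain ⟨w, hw⟩ := h.fix (Subgroup.zpowers g) (by
    have hfin : IsOfFinOrder (g ^ 2) := by
      have hz : (Subgroup.zpowers (g ^ 2) : Set G).Finite := by
        apply (h.stab a).subset
        have : Subgroup.zpowers (g ^ 2) ≤ MulAction.stabilizer G a := by
          rw [Subgroup.zpowers_le]
          show g ^ 2 • a = a
          rw [pow_two, mul_smul, h1, h2]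
        exact this
      rwa [finite_zpowers] at hz
    rw [finite_zpowers]
    exact hfin.of_pow (by norm_num))
  have hg := hw g (Subgroup.mem_zpowers g)
  have hd : Γ.dist w a = Γ.dist w b := by
    rw [← dist_smul h.tree h.inv g, hg, h1]
  obtain ⟨p, p0, hp⟩ := exists_potential_two h.tree (fun _ _ => 1) (fun _ _ => rfl) w
  have hc := const_of_adj h.tree.connected (fun x => p (g • x) - p x) (by
    intro x y hxy
    have e1 := hp _ _ hxy
    have e2 := hp _ _ (h.inv g _ _ hxy)
    show p (g • x) - p x = p (g • y) - p y
    rw [e1, e2]; ring) w a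
  have e3 := hp _ _ hab
  simp only [hg, sub_self, h1] at hc
  rw [e3] at hc
  revert hc
  ring_nf
  simp

end RedOrbit
end VF

namespace VF

universe u v w

section Twist
variable {G : Type u} [Group G] {V : Type v} [MulAction G V] {V' : Type w} [MulAction G V']

/-- Twisting data from one tree to another. -/
structure Tw (Γ : SimpleGraph V) (Γ' : SimpleGraph V') (β : V → V') (β' : V' → V)
    (t : V → V → G) (t' : V' → V' → G) : Prop where
  bb : ∀ v, β' (β v) = v
  eqv : ∀ (g : G) v, β (g • v) = g • β v
  teq : ∀ (g : G) a b, Γ.Adj a b → t (g • a) (g • b) = g * t a b * g⁻¹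
  tinv : ∀ a b, Γ.Adj a b → t b a = (t a b)⁻¹
  tadj : ∀ a b, Γ.Adj a b → Γ'.Adj (β a) (t a b • β b)
  tt : ∀ a b, Γ.Adj a b → t' (β a) (t a b • β b) = (t a b)⁻¹

variable {Γ : SimpleGraph V} {Γ' : SimpleGraph V'} {β : V → V'} {β' : V' → V}
  {t : V → V → G} {t' : V' → V' → G}

theorem Tw.pot (h : Tw Γ Γ' β β' t t') (hT : Γ.IsTree)
    (hinv : ∀ (g : G) u v, Γ.Adj u v → Γ.Adj (g • u) (g • v)) {p : V → G} {v₀ : V} (h0 : p v₀ = 1)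
    (hp : ∀ a b, Γ.Adj a b → p b = p a * t a b) (g : G) (x : V) :
    p (g • x) = p (g • v₀) * g * p x * g⁻¹ := by
  have key := const_of_adj hT.connected (fun x => p (g • x) * g * (p x)⁻¹) (by
    intro a b hab
    show p (g • a) * g * (p a)⁻¹ = p (g • b) * g * (p b)⁻¹
    rw [hp a b hab, hp _ _ (hinv g a b hab), h.teq g a b hab]
    group) x v₀
  simp only [h0, inv_one, mul_one] at key
  rw [← key]
  group

theorem Tw.inv_pot (h : Tw Γ Γ' β β' t t') (h' : Tw Γ' Γ β' β t' t) (hT : Γ.IsTree)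
    (hinv' : ∀ (g : G) u v, Γ'.Adj u v → Γ'.Adj (g • u) (g • v)) {p : V → G} {v₀ : V} (h0 : p v₀ = 1)
    (hp : ∀ a b, Γ.Adj a b → p b = p a * t a b)
    {p' : V' → G} (h0' : p' (β v₀) = 1)
    (hp' : ∀ a b, Γ'.Adj a b → p' b = p' a * t' a b) (x : V) :
    p' (p x • β x) * p x = 1 := by
  have key := const_of_adj hT.connected (fun x => p' (p x • β x) * p x) (by
    intro a b hab
    show p' (p a • β a) * p a = p' (p b • β b) * p b
    have h1 := h.tadj a b hab
    have h2 := hp' _ _ (hinv' (p a) _ _ h1)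
    rw [h'.teq _ _ _ h1, h.tt a b hab, ← mul_smul, ← hp a b hab] at h2
    rw [h2, hp a b hab]
    group) x v₀
  simp only [h0, one_smul, h0', mul_one] at key
  exact key

theorem Tw.exists_aut (h : Tw Γ Γ' β β' t t') (h' : Tw Γ' Γ β' β t' t) {K K' : Subgroup G}
    (hG : IsGT K V Γ) (hG' : IsGT K' V' Γ') :
    ∃ (σ : G ≃* G) (θ : V → V'),
      (∀ H : Subgroup G, (H : Set G).Finite → ∃ g : G, ∀ x ∈ H, x = g * σ.symm x * g⁻¹) ∧
      (∀ g x, θ (g • x) = σ g • θ x) ∧ (∀ a b, Γ.Adj a b → Γ'.Adj (θ a) (θ b)) := by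
  obtain ⟨v₀⟩ := hG.tree.connected.nonempty
  obtain ⟨p, h0, hp⟩ := exists_potential hG.tree t h.tinv v₀
  obtain ⟨p', h0', hp'⟩ := exists_potential hG'.tree t' h'.tinv (β v₀)
  have hA := h.pot hG.tree hG.inv h0 hp
  have hA' := h'.pot hG'.tree hG'.inv h0' hp'
  have hB := h.inv_pot h' hG.tree hG'.inv h0 hp h0' hp'
  have hB' := h'.inv_pot h hG'.tree hG.inv h0' hp' (p' := p) (by rw [h.bb, h0]) hp
  let σ : G ≃* G :=
    { toFun := fun g => p (g • v₀) * g
      invFun := fun g => p' (g • β v₀) * g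
      left_inv := by
        intro g
        show p' ((p (g • v₀) * g) • β v₀) * (p (g • v₀) * g) = g
        have := hB (g • v₀)
        rw [h.eqv, ← mul_smul] at this
        rw [← mul_assoc, this, one_mul]
      right_inv := by
        intro g
        show p ((p' (g • β v₀) * g) • v₀) * (p' (g • β v₀) * g) = g
        have := hB' (g • β v₀)
        rw [h'.eqv, h.bb, ← mul_smul] at this
        rw [← mul_assoc, this, one_mul]
      map_mul' := by
        intro g g'
        show p ((g * g') • v₀) * (g * g') = p (g • v₀) * g * (p (g' • v₀) * g')
        rw [mul_smul, hA g (g' • v₀)]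
        group }
  refine ⟨σ, fun x => p x • β x, ?_, ?_, ?_⟩
  · intro H hH
    obtain ⟨x, hx⟩ := hG'.fix H hH
    refine ⟨(p' x)⁻¹, fun k hk => ?_⟩
    show k = (p' x)⁻¹ * (p' (k • β v₀) * k) * (p' x)⁻¹⁻¹
    have := hA' k x
    rw [hx k hk] at this
    rw [eq_mul_inv_iff_mul_eq] at this
    rw [inv_inv, mul_assoc, ← this, inv_mul_cancel_left]
  · intro g x
    show p (g • x) • β (g • x) = (p (g • v₀) * g) • (p x • β x)
    rw [hA, h.eqv, ← mul_smul, ← mul_smul]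
    congr 1
    group
  · intro a b hab
    show Γ'.Adj (p a • β a) (p b • β b)
    rw [hp a b hab, mul_smul]
    exact hG'.inv _ _ _ (h.tadj a b hab)

end Twist
end VF

namespace VF

universe u v w

section Pres
variable {G : Type u} [Group G]

/-- Presentation of a tree action by orbit representatives. -/
structure Pres {V : Type v} [MulAction G V] (Γ : SimpleGraph V) {ι κ : Type*}
    (M : ι → Subgroup G) (I : Set ι) (i j : κ → ι) (x : ι → V) (h : κ → G) : Prop where
  stab : ∀ μ ∈ I, ∀ g : G, g • x μ = x μ ↔ g ∈ M μ
  cov : ∀ y : V, ∃ g : G, ∃ μ ∈ I, y = g • x μ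
  uniq : ∀ μ ∈ I, ∀ ν ∈ I, ∀ g : G, g • x μ = x ν → μ = ν
  iI : ∀ k, i k ∈ I
  jI : ∀ k, j k ∈ I
  adj : ∀ k, Γ.Adj (x (i k)) (h k • x (j k))
  ecov : ∀ a b, Γ.Adj a b → ∃ k, ∃ g : G, (a = g • x (i k) ∧ b = (g * h k) • x (j k)) ∨
    (a = (g * h k) • x (j k) ∧ b = g • x (i k))
  euniq : ∀ k l, ∀ g : G, g • x (i k) = x (i l) → (g * h k) • x (j k) = h l • x (j l) → k = l
  eswap : ∀ k l, ∀ g : G, g • x (i k) = h l • x (j l) → (g * h k) • x (j k) = x (i l) → False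

variable {V : Type v} [MulAction G V] {Γ : SimpleGraph V} {V' : Type w} [MulAction G V']
  {Γ' : SimpleGraph V'} {ι κ : Type*}
  {M : ι → Subgroup G} {I : Set ι} {i j : κ → ι} {x : ι → V} {h : κ → G} {x' : ι → V'} {h' : κ → G}

theorem Pres.exists_beta (P : Pres Γ M I i j x h) (P' : Pres Γ' M I i j x' h') :
    ∃ β : V → V', ∀ μ ∈ I, ∀ g : G, β (g • x μ) = g • x' μ := by
  choose γ m hm hγ using P.cov
  refine ⟨fun y => γ y • x' (m y), ?_⟩
  intro μ hμ g
  show γ (g • x μ) • x' (m (g • x μ)) = g • x' μ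
  have h1 := hγ (g • x μ)
  have h2 := hm (g • x μ)
  generalize γ (g • x μ) = c at *
  generalize m (g • x μ) = ν at *
  have h3 : (c⁻¹ * g) • x μ = x ν := by rw [mul_smul, h1, inv_smul_smul]
  obtain rfl := P.uniq μ hμ ν h2 _ h3
  rw [P.stab μ hμ, ← P'.stab μ hμ, mul_smul, inv_smul_eq_iff] at h3
  exact h3.symm

theorem Pres.exists_t (P : Pres Γ M I i j x h)
    (hR : ∀ k, ∀ a ∈ M (i k), ∀ b ∈ M (j k), a * h k = h k * b → a * h' k = h' k * b) :
    ∃ t : V → V → G,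
      (∀ k (g : G), t (g • x (i k)) ((g * h k) • x (j k)) = g * (h' k * (h k)⁻¹) * g⁻¹) ∧
      (∀ k (g : G), t ((g * h k) • x (j k)) (g • x (i k)) = g * (h k * (h' k)⁻¹) * g⁻¹) := by
  classical
  have key : ∀ k l (g c : G), g • x (i k) = c • x (i l) →
      (g * h k) • x (j k) = (c * h l) • x (j l) →
      g * (h' k * (h k)⁻¹) * g⁻¹ = c * (h' l * (h l)⁻¹) * c⁻¹ := by
    intro k l g c h1 h2
    have e1 : (c⁻¹ * g) • x (i k) = x (i l) := by rw [mul_smul, h1, inv_smul_smul]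
    have e2 : (c⁻¹ * g * h k) • x (j k) = h l • x (j l) := by
      rw [mul_assoc, mul_smul, h2, ← mul_smul, inv_mul_cancel_left]
    obtain rfl := P.euniq k l _ e1 e2
    rw [P.stab _ (P.iI k)] at e1
    have e3 : (((h k)⁻¹ * (c⁻¹ * g)) * h k) • x (j k) = x (j k) := by
      rw [mul_assoc, mul_smul, e2, inv_smul_smul]
    rw [P.stab _ (P.jI k)] at e3
    have e4 := hR k _ e1 _ e3 (by group)
    have e5 : c⁻¹ * g * (h' k * (h k)⁻¹) = h' k * (h k)⁻¹ * (c⁻¹ * g) := by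
      rw [← mul_assoc, e4]
      group
    have e6 : g = c * (c⁻¹ * g) := by group
    calc g * (h' k * (h k)⁻¹) * g⁻¹ = c * ((c⁻¹ * g) * (h' k * (h k)⁻¹)) * g⁻¹ := by group
      _ = _ := by rw [e5]; group
  have keys : ∀ k l (g c : G), g • x (i k) = (c * h l) • x (j l) →
      (g * h k) • x (j k) = c • x (i l) → False := by
    intro k l g c h1 h2
    apply P.eswap k l (c⁻¹ * g)
    · rw [mul_smul, h1, ← mul_smul, inv_mul_cancel_left]
    · rw [mul_assoc, mul_smul, h2, inv_smul_smul]
  let A : V → V → κ × G → Prop := fun a b q => a = q.2 • x (i q.1) ∧ b = (q.2 * h q.1) • x (j q.1)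
  let val : κ × G → G := fun q => q.2 * (h' q.1 * (h q.1)⁻¹) * q.2⁻¹
  let t : V → V → G := fun a b => if H : ∃ q, A a b q then val H.choose else
    if H' : ∃ q, A b a q then (val H'.choose)⁻¹ else 1
  refine ⟨t, ?_, ?_⟩
  · intro k g
    have H : ∃ q, A (g • x (i k)) ((g * h k) • x (j k)) q := ⟨(k, g), rfl, rfl⟩
    have e : t (g • x (i k)) ((g * h k) • x (j k)) = val H.choose := dif_pos H
    rw [e]
    exact (key _ _ _ _ H.choose_spec.1 H.choose_spec.2).symm
  · intro k g
    have H : ∃ q, A (g • x (i k)) ((g * h k) • x (j k)) q := ⟨(k, g), rfl, rfl⟩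
    have H0 : ¬ ∃ q, A ((g * h k) • x (j k)) (g • x (i k)) q := by
      rintro ⟨⟨l, c⟩, q1, q2⟩
      exact keys k l g c q2 q1
    have e : t ((g * h k) • x (j k)) (g • x (i k)) = (val H.choose)⁻¹ :=
      (dif_neg H0).trans (dif_pos H)
    rw [e]
    have e2 := (key _ _ _ _ H.choose_spec.1 H.choose_spec.2).symm
    have e3 : val H.choose = g * (h' k * (h k)⁻¹) * g⁻¹ := e2
    rw [e3]
    group

theorem Pres.tw (P : Pres Γ M I i j x h) (P' : Pres Γ' M I i j x' h')
    (hinv' : ∀ (g : G) u v, Γ'.Adj u v → Γ'.Adj (g • u) (g • v))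
    {β : V → V'} (hβ : ∀ μ ∈ I, ∀ g : G, β (g • x μ) = g • x' μ)
    {β' : V' → V} (hβ' : ∀ μ ∈ I, ∀ g : G, β' (g • x' μ) = g • x μ)
    {t : V → V → G} {t' : V' → V' → G}
    (t1 : ∀ k (g : G), t (g • x (i k)) ((g * h k) • x (j k)) = g * (h' k * (h k)⁻¹) * g⁻¹)
    (t2 : ∀ k (g : G), t ((g * h k) • x (j k)) (g • x (i k)) = g * (h k * (h' k)⁻¹) * g⁻¹)
    (t1' : ∀ k (g : G), t' (g • x' (i k)) ((g * h' k) • x' (j k)) = g * (h k * (h' k)⁻¹) * g⁻¹)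
    (t2' : ∀ k (g : G), t' ((g * h' k) • x' (j k)) (g • x' (i k)) = g * (h' k * (h k)⁻¹) * g⁻¹) :
    Tw Γ Γ' β β' t t' where
  bb := by
    intro y
    obtain ⟨g, μ, hμ, rfl⟩ := P.cov y
    rw [hβ μ hμ, hβ' μ hμ]
  eqv := by
    intro g y
    obtain ⟨c, μ, hμ, rfl⟩ := P.cov y
    rw [hβ μ hμ, ← mul_smul, hβ μ hμ, mul_smul]
  teq := by
    intro g a b hab
    obtain ⟨k, c, ⟨rfl, rfl⟩ | ⟨rfl, rfl⟩⟩ := P.ecov a b hab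
    · rw [t1, ← mul_smul, ← mul_smul, ← mul_assoc, t1]; group
    · rw [t2, ← mul_smul, ← mul_smul, ← mul_assoc, t2]; group
  tinv := by
    intro a b hab
    obtain ⟨k, c, ⟨rfl, rfl⟩ | ⟨rfl, rfl⟩⟩ := P.ecov a b hab
    · rw [t1, t2]; group
    · rw [t1, t2]; group
  tadj := by
    intro a b hab
    obtain ⟨k, c, ⟨rfl, rfl⟩ | ⟨rfl, rfl⟩⟩ := P.ecov a b hab
    · rw [t1, hβ _ (P.iI k), hβ _ (P.jI k), ← mul_smul]
      have := hinv' c _ _ (P'.adj k)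
      rw [← mul_smul] at this
      convert this using 2
      group
    · rw [t2, hβ _ (P.iI k), hβ _ (P.jI k), ← mul_smul]
      have := hinv' (c * h k * (h' k)⁻¹) _ _ (P'.adj k).symm
      rw [← mul_smul] at this
      convert this using 2
      · group
      · group
  tt := by
    intro a b hab
    obtain ⟨k, c, ⟨rfl, rfl⟩ | ⟨rfl, rfl⟩⟩ := P.ecov a b hab
    · rw [t1, hβ _ (P.iI k), hβ _ (P.jI k), ← mul_smul]
      have := t1' k c
      have e : c * (h' k * (h k)⁻¹) * c⁻¹ * (c * h k) = c * h' k := by group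
      rw [e, this]
      group
    · rw [t2, hβ _ (P.iI k), hβ _ (P.jI k), ← mul_smul]
      have := t2' k (c * h k * (h' k)⁻¹)
      have e1 : c * h k * (h' k)⁻¹ * h' k = c * h k := by group
      have e : c * (h k * (h' k)⁻¹) * c⁻¹ * c = c * h k * (h' k)⁻¹ := by group
      rw [e1] at this
      rw [e, this]
      group

theorem Pres.exists_aut (P : Pres Γ M I i j x h) (P' : Pres Γ' M I i j x' h')
    (hR : ∀ k, ∀ a ∈ M (i k), ∀ b ∈ M (j k), a * h k = h k * b ↔ a * h' k = h' k * b)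
    {K K' : Subgroup G} (hG : IsGT K V Γ) (hG' : IsGT K' V' Γ') :
    ∃ (σ : G ≃* G) (θ : V → V'),
      (∀ H : Subgroup G, (H : Set G).Finite → ∃ g : G, ∀ x ∈ H, x = g * σ.symm x * g⁻¹) ∧
      (∀ g x, θ (g • x) = σ g • θ x) ∧ (∀ a b, Γ.Adj a b → Γ'.Adj (θ a) (θ b)) := by
  obtain ⟨β, hβ⟩ := P.exists_beta P'
  obtain ⟨β', hβ'⟩ := P'.exists_beta P
  obtain ⟨t, t1, t2⟩ := P.exists_t (h' := h') (fun k a ha b hb e => (hR k a ha b hb).1 e)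
  obtain ⟨t', t1', t2'⟩ := P'.exists_t (h' := h) (fun k a ha b hb e => (hR k a ha b hb).2 e)
  exact Tw.exists_aut (P.tw P' hG'.inv hβ hβ' t1 t2 t1' t2')
    (P'.tw P hG.inv hβ' hβ t1' t2' t1 t2) hG hG'

end Pres
end VF

namespace VF

universe u v w

section EdgeCount
variable {G : Type u} [Group G] {V : Type v} [MulAction G V]

/-- Unoriented edge orbits. -/
def edgeSetoid (G : Type u) [Group G] {V : Type v} [MulAction G V] (Γ : SimpleGraph V) :
    Setoid {e : V × V // Γ.Adj e.1 e.2} where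
  r e f := ∃ g : G, (g • e.1.1 = f.1.1 ∧ g • e.1.2 = f.1.2) ∨ (g • e.1.1 = f.1.2 ∧ g • e.1.2 = f.1.1)
  iseqv := by
    constructor
    · intro e
      exact ⟨1, Or.inl ⟨one_smul _ _, one_smul _ _⟩⟩
    · rintro e f ⟨g, ⟨h1, h2⟩ | ⟨h1, h2⟩⟩
      · exact ⟨g⁻¹, Or.inl ⟨by rw [← h1, inv_smul_smul], by rw [← h2, inv_smul_smul]⟩⟩
      · exact ⟨g⁻¹, Or.inr ⟨by rw [← h2, inv_smul_smul], by rw [← h1, inv_smul_smul]⟩⟩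
    · rintro e f k ⟨g, ⟨h1, h2⟩ | ⟨h1, h2⟩⟩ ⟨c, ⟨q1, q2⟩ | ⟨q1, q2⟩⟩
      · exact ⟨c * g, Or.inl ⟨by rw [mul_smul, h1, q1], by rw [mul_smul, h2, q2]⟩⟩
      · exact ⟨c * g, Or.inr ⟨by rw [mul_smul, h1, q1], by rw [mul_smul, h2, q2]⟩⟩
      · exact ⟨c * g, Or.inr ⟨by rw [mul_smul, h1, q2], by rw [mul_smul, h2, q1]⟩⟩
      · exact ⟨c * g, Or.inl ⟨by rw [mul_smul, h1, q2], by rw [mul_smul, h2, q1]⟩⟩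

theorem edge_count {Γ : SimpleGraph V} (hT : Γ.IsTree)
    (hinv : ∀ (g : G) u v, Γ.Adj u v → Γ.Adj (g • u) (g • v))
    {S : Finset G} (hS : Subgroup.closure (S : Set G) = ⊤)
    {ι : Type w} [Finite ι] (x : ι → V) (hx : ∀ y : V, ∃ (g : G) (μ : ι), y = g • x μ) :
    Finite (Quotient (edgeSetoid G Γ)) ∧
      Nat.card (Quotient (edgeSetoid G Γ)) ≤ Nat.card ι + S.card := by
  classical
  let Q := Quotient (edgeSetoid G Γ)
  obtain ⟨v₀⟩ := hT.connected.nonempty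
  let t : (Q → ZMod 2) → V → V → ZMod 2 := fun ε a b =>
    if h : Γ.Adj a b then ε (Quotient.mk _ ⟨(a, b), h⟩) else 0
  have tadj : ∀ ε a b (h : Γ.Adj a b), t ε a b = ε (Quotient.mk _ ⟨(a, b), h⟩) :=
    fun ε a b h => dif_pos h
  have tsymm : ∀ ε a b, t ε a b = t ε b a := by
    intro ε a b
    by_cases h : Γ.Adj a b
    · rw [tadj ε a b h, tadj ε b a h.symm]
      congr 1
      exact Quotient.sound ⟨1, Or.inr ⟨one_smul _ _, one_smul _ _⟩⟩
    · have h' : ¬ Γ.Adj b a := fun h' => h h'.symm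
      rw [show t ε a b = 0 from dif_neg h, show t ε b a = 0 from dif_neg h']
  have tsmul : ∀ ε (g : G) a b, Γ.Adj a b → t ε (g • a) (g • b) = t ε a b := by
    intro ε g a b h
    rw [tadj ε _ _ h, tadj ε _ _ (hinv g _ _ h)]
    congr 1
    exact Quotient.sound ⟨g⁻¹, Or.inl ⟨inv_smul_smul _ _, inv_smul_smul _ _⟩⟩
  choose p p0 hp using fun ε => exists_potential_two hT (t ε) (tsymm ε) v₀
  have pg : ∀ ε (g : G) y, p ε (g • y) = p ε y + p ε (g • v₀) := by
    intro ε g y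
    have := const_of_adj hT.connected (fun y => p ε (g • y) - p ε y) (by
      intro a b hab
      show p ε (g • a) - p ε a = p ε (g • b) - p ε b
      rw [hp ε _ _ hab, hp ε _ _ (hinv g _ _ hab), tsmul ε g a b hab]
      ring) y v₀
    simp only [p0, sub_zero] at this
    rw [← this]; ring
  let Φ : (Q → ZMod 2) → (ι → ZMod 2) × (S → ZMod 2) := fun ε =>
    (fun μ => p ε (x μ), fun s => p ε ((s : G) • v₀))
  have hΦ : Function.Injective Φ := by
    intro ε ε' e
    have e1 : ∀ μ, p ε (x μ) = p ε' (x μ) := fun μ => congrFun (congrArg Prod.fst e) μ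
    have e2 : ∀ s ∈ S, p ε (s • v₀) = p ε' (s • v₀) := fun s hs =>
      congrFun (congrArg Prod.snd e) ⟨s, hs⟩
    have e3 : ∀ g : G, p ε (g • v₀) = p ε' (g • v₀) := by
      intro g
      have hg : g ∈ Subgroup.closure (S : Set G) := by rw [hS]; trivial
      induction hg using Subgroup.closure_induction with
      | mem s hs => exact e2 s hs
      | one => rw [one_smul, p0, p0]
      | mul a b _ _ ha hb => rw [mul_smul, pg, pg ε', ha, hb]
      | inv a _ ha =>
        have q1 := pg ε a (a⁻¹ • v₀)
        have q2 := pg ε' a (a⁻¹ • v₀)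
        rw [smul_inv_smul, p0] at q1 q2
        rw [ha] at q1
        rw [q2] at q1
        exact (add_right_cancel q1).symm
    have e4 : ∀ y, p ε y = p ε' y := by
      intro y
      obtain ⟨g, μ, rfl⟩ := hx y
      rw [pg, pg ε', e1, e3]
    funext q
    induction q using Quotient.inductionOn with
    | h q =>
      obtain ⟨⟨a, b⟩, hab⟩ := q
      have q1 := hp ε a b hab
      have q2 := hp ε' a b hab
      rw [tadj ε a b hab] at q1
      rw [tadj ε' a b hab] at q2
      rw [e4, e4, q2] at q1
      exact (add_left_cancel q1).symm
  have f1 : Finite (Q → ZMod 2) := Finite.of_injective Φ hΦ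
  have f2 : Finite Q := Finite.of_injective (fun q : Q => (Pi.single q 1 : Q → ZMod 2)) (by
    intro a b e
    by_contra hne
    have := congrFun e a
    simp [hne] at this)
  refine ⟨f2, ?_⟩
  have hcard := Nat.card_le_card_of_injective Φ hΦ
  rw [Nat.card_prod, Nat.card_fun, Nat.card_fun, Nat.card_fun, ← pow_add, Nat.card_zmod] at hcard
  have := (Nat.pow_le_pow_iff_right (by norm_num : 1 < 2)).1 hcard
  simpa using this

end EdgeCount

section ExistsPres
variable {G : Type u} [Group G] {V : Type v} [MulAction G V]

theorem exists_pres {K : Subgroup G} {Γ : SimpleGraph V} (hG : IsGT K V Γ) (hr : Red G Γ)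
    {S : Finset G} (hS : Subgroup.closure (S : Set G) = ⊤)
    {ι : Type w} [Finite ι] (M : ι → Subgroup G)
    (hM : ∀ H : Subgroup G, (H : Set G).Finite → ∃ (μ : ι) (g : G), ∀ a, a ∈ M μ ↔ g * a * g⁻¹ ∈ H) :
    ∃ n ≤ Nat.card ι + S.card, ∃ (I : Set ι) (i j : Fin n → ι) (x : ι → V) (h : Fin n → G),
      Pres Γ M I i j x h := by
  classical
  obtain ⟨v₀⟩ := hG.tree.connected.nonempty
  let Q := MulAction.orbitRel.Quotient G V
  have hz : ∀ q : Q, ∃ (z : V) (μ : ι), (Quotient.mk _ z : Q) = q ∧ ∀ a : G, a • z = z ↔ a ∈ M μ := by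
    intro q
    obtain ⟨y, rfl⟩ := Quotient.exists_rep q
    obtain ⟨μ, g, hg⟩ := hM (MulAction.stabilizer G y) (hG.stab y)
    refine ⟨g⁻¹ • y, μ, Quotient.sound ⟨g⁻¹, rfl⟩, fun a => ?_⟩
    rw [hg, MulAction.mem_stabilizer_iff, mul_smul, mul_smul]
    constructor
    · intro h
      rw [h, smul_inv_smul]
    · intro h
      rw [eq_inv_smul_iff, h]
  choose z m hzq hzm using hz
  have horb : ∀ a b : V, (Quotient.mk _ a : Q) = Quotient.mk _ b → ∃ g : G, a = g • b := by
    intro a b e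
    obtain ⟨g, hg⟩ := Quotient.exact e
    exact ⟨g, hg.symm⟩
  have hminj : Function.Injective m := by
    intro q q' e
    obtain ⟨g, hg⟩ := red_orbit hG hr _ (z q) (z q') rfl (by
      intro g hg
      rw [hzm] at hg ⊢
      rwa [← e])
    rw [← hzq q, ← hzq q']
    exact Quotient.sound ⟨g⁻¹, by show g⁻¹ • z q' = z q; rw [← hg, inv_smul_smul]⟩
  let x : ι → V := Function.extend m z (fun _ => v₀)
  have hx : ∀ q, x (m q) = z q := fun q => hminj.extend_apply _ _ q
  have hcov : ∀ y : V, ∃ g : G, ∃ μ ∈ Set.range m, y = g • x μ := by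
    intro y
    obtain ⟨g, hg⟩ := horb y (z (Quotient.mk _ y)) (hzq _).symm
    exact ⟨g, m (Quotient.mk _ y), ⟨_, rfl⟩, by rw [hx]; exact hg⟩
  have huniq : ∀ μ ∈ Set.range m, ∀ ν ∈ Set.range m, ∀ g : G, g • x μ = x ν → μ = ν := by
    rintro _ ⟨q, rfl⟩ _ ⟨q', rfl⟩ g hg
    rw [hx, hx] at hg
    congr 1
    rw [← hzq q, ← hzq q']
    exact Quotient.sound ⟨g⁻¹, by show g⁻¹ • z q' = z q; rw [← hg, inv_smul_smul]⟩
  obtain ⟨hfin, hcard⟩ := edge_count hG.tree hG.inv hS x (fun y => by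
    obtain ⟨g, μ, _, h⟩ := hcov y
    exact ⟨g, μ, h⟩)
  let e := Finite.equivFin (Quotient (edgeSetoid G Γ))
  have hrep : ∀ k : Fin (Nat.card (Quotient (edgeSetoid G Γ))), ∃ (μ ν : ι) (c : G)
      (h : Γ.Adj (x μ) (c • x ν)), μ ∈ Set.range m ∧ ν ∈ Set.range m ∧
      e (Quotient.mk _ ⟨(x μ, c • x ν), h⟩) = k := by
    intro k
    obtain ⟨⟨⟨a, b⟩, hab⟩, hq⟩ := Quotient.exists_rep (e.symm k)
    obtain ⟨g, μ, hμ, ha⟩ := hcov a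
    obtain ⟨c, ν, hν, hb⟩ := hcov b
    have h1 : Γ.Adj (x μ) ((g⁻¹ * c) • x ν) := by
      have := hG.inv g⁻¹ _ _ hab
      simp only [ha, hb, ← mul_smul] at this
      simpa using this
    refine ⟨μ, ν, g⁻¹ * c, h1, hμ, hν, ?_⟩
    rw [← Equiv.eq_symm_apply, ← hq]
    refine Quotient.sound ⟨g, Or.inl ⟨ha.symm, ?_⟩⟩
    show g • ((g⁻¹ * c) • x ν) = b
    rw [hb, ← mul_smul, mul_inv_cancel_left]
  choose i j h hadj hi hj hk using hrep
  have heq : ∀ k l (g : G), (g • x (i k) = x (i l) ∧ (g * h k) • x (j k) = h l • x (j l)) ∨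
      (g • x (i k) = h l • x (j l) ∧ (g * h k) • x (j k) = x (i l)) → k = l := by
    intro k l g hgl
    rw [← hk k, ← hk l]
    congr 1
    simp only [mul_smul] at hgl
    exact Quotient.sound ⟨g, hgl⟩
  refine ⟨_, hcard, Set.range m, i, j, x, h, ?_⟩
  constructor
  · rintro _ ⟨q, rfl⟩ g
    rw [hx, hzm]
  · exact hcov
  · exact huniq
  · exact hi
  · exact hj
  · exact hadj
  · intro a b hab
    refine ⟨e (Quotient.mk _ ⟨(a, b), hab⟩), ?_⟩
    have h1 := e.injective (hk (e (Quotient.mk _ ⟨(a, b), hab⟩)))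
    obtain ⟨g, ⟨h2, h3⟩ | ⟨h2, h3⟩⟩ := Quotient.exact h1
    · exact ⟨g, Or.inl ⟨h2.symm, by rw [mul_smul]; exact h3.symm⟩⟩
    · exact ⟨g, Or.inr ⟨by rw [mul_smul]; exact h3.symm, h2.symm⟩⟩
  · intro k l g h1 h2
    exact heq k l g (Or.inl ⟨h1, h2⟩)
  · intro k l g h1 h2
    obtain rfl := heq k l g (Or.inr ⟨h1, h2⟩)
    exact no_inversion hG (hadj k) g h1 (by rw [← mul_smul]; exact h2)

end ExistsPres
end VF

namespace VF

universe u v w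

section Test
variable {G : Type u} [Group G]

theorem isOfFinOrder_of_fix {V : Type v} [MulAction G V] {y : V}
    (hst : {g : G | g • y = y}.Finite) {g : G} (hg : g • y = y) : IsOfFinOrder g := by
  have hz : (Subgroup.zpowers g : Set G).Finite := by
    apply hst.subset
    have : Subgroup.zpowers g ≤ MulAction.stabilizer G y := by
      rw [Subgroup.zpowers_le]
      exact hg
    exact this
  rwa [finite_zpowers] at hz

theorem SS_fin {V : Type v} [MulAction G V] (hst : ∀ y : V, {g : G | g • y = y}.Finite) (a b : V) :
    (SS (G := G) a b).Finite :=
  (hst a).union ((hst b).union (trans_fin hst a b))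

theorem SS_conj {V : Type v} [MulAction G V] (a b : V) (g s : G) (hs : s ∈ SS (G := G) a b) :
    g * s * g⁻¹ ∈ SS (G := G) (g • a) (g • b) := by
  rcases hs with hs | hs | hs
  · exact Or.inl (by rw [mul_smul, inv_smul_smul, mul_smul, hs])
  · exact Or.inr (Or.inl (by rw [mul_smul, inv_smul_smul, mul_smul, hs]))
  · exact Or.inr (Or.inr (by rw [mul_smul, inv_smul_smul, mul_smul, hs]))

theorem nbr_fin {V : Type v} [MulAction G V] {Γ : SimpleGraph V} {K : Subgroup G} (h : IsGT K V Γ)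
    (hfg : Group.FG G) (a : V) : {b | Γ.Adj a b}.Finite := by
  obtain ⟨A, hA, hAV⟩ := (orbit_fin_iff K V).1 h.fin
  obtain ⟨E, hE, -, hEV⟩ := edge_fin h.tree h.inv hfg ⟨A, hA, fun y => by
    obtain ⟨k, _, hk⟩ := hAV y
    exact ⟨k, hk⟩⟩
  have : (⋃ e ∈ E, (fun g : G => g • e.2) '' {g : G | g • e.1 = a}).Finite :=
    hE.biUnion (fun e _ => (trans_fin h.stab e.1 a).image _)
  refine this.subset ?_
  intro b hb
  obtain ⟨g, hg⟩ := hEV a b hb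
  simp only [Set.mem_iUnion]
  exact ⟨_, hg, g⁻¹, inv_smul_smul _ _, inv_smul_smul _ _⟩

theorem finite_SS {V : Type v} [MulAction G V] {Γ : SimpleGraph V} {K : Subgroup G} (h : IsGT K V Γ)
    (hfg : Group.FG G) :
    ∃ C : Set (Set G), C.Finite ∧ (∀ S ∈ C, S.Finite) ∧
      ∀ a b, Near Γ a b → ∃ g : G, ∃ S ∈ C, ∀ s ∈ SS (G := G) a b, g * s * g⁻¹ ∈ S := by
  obtain ⟨A, hA, hAV⟩ := (orbit_fin_iff K V).1 h.fin
  have hnear : ∀ a, {b | Near Γ a b}.Finite := by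
    intro a
    have : ({a} ∪ ({b | Γ.Adj a b} ∪ ⋃ x ∈ {x | Γ.Adj a x}, {b | Γ.Adj x b})).Finite :=
      (Set.finite_singleton a).union ((nbr_fin h hfg a).union
        ((nbr_fin h hfg a).biUnion (fun x _ => nbr_fin h hfg x)))
    refine this.subset ?_
    rintro b (hb | hb | ⟨x, h1, h2⟩)
    · exact Or.inl hb.symm
    · exact Or.inr (Or.inl hb)
    · refine Or.inr (Or.inr ?_)
      simp only [Set.mem_iUnion]
      exact ⟨x, h1.symm, h2⟩
  refine ⟨⋃ a ∈ A, (fun b => SS (G := G) a b) '' {b | Near Γ a b},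
    hA.biUnion (fun a _ => (hnear a).image _), ?_, ?_⟩
  · intro S hS
    simp only [Set.mem_iUnion] at hS
    obtain ⟨a, _, b, _, rfl⟩ := hS
    exact SS_fin h.stab a b
  · intro a b hab
    obtain ⟨g, _, hg⟩ := hAV a
    refine ⟨g, SS (G := G) (g • a) (g • b), ?_, fun s hs => SS_conj a b g s hs⟩
    simp only [Set.mem_iUnion]
    refine ⟨g • a, hg, g • b, ?_, rfl⟩
    exact Near.map (c := fun y => g • y) (fun x y hxy => Or.inl (h.inv g _ _ hxy)) hab

/-- Combinatorial data of a presentation. -/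
abbrev Dat (ι : Type u) (B : Type u) (N : ℕ) : Type u :=
  Σ n : Fin (N + 1), Set ι × (Fin n → ι) × (Fin n → ι) × (Fin n → Set (B × B))

theorem exists_SS_collection (hfg : Group.FG G) {K : Subgroup G} {V₀ : Type v} [MulAction G V₀]
    {Γ₀ : SimpleGraph V₀} (h₀ : IsGT K V₀ Γ₀) :
    ∃ C : Set (Set G), C.Finite ∧ (∀ S ∈ C, S.Finite) ∧
      ∀ (V : Type w) (_ : MulAction G V) (Γ : SimpleGraph V), IsGT K V Γ → Red G Γ →
      ∀ a b, Near Γ a b → ∃ σ : G ≃* G,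
        (∀ H : Subgroup G, (H : Set G).Finite → ∃ g : G, ∀ x ∈ H, x = g * σ.symm x * g⁻¹) ∧
        ∃ g : G, ∃ S ∈ C, ∀ s ∈ SS (G := G) a b, g * σ s * g⁻¹ ∈ S := by
  classical
  obtain ⟨A, hA, hAV⟩ := (orbit_fin_iff K V₀).1 h₀.fin
  let B : Set G := ⋃ a ∈ A, {g : G | g • a = a}
  have hB : B.Finite := hA.biUnion (fun a _ => h₀.stab a)
  let ι := {H : Subgroup G // (H : Set G) ⊆ B}
  have hι : Finite ι := by
    have h1 : Finite {s : Set G // s ⊆ B} := hB.finite_subsets.to_subtype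
    refine Finite.of_injective (fun H : ι => (⟨(H.1 : Set G), H.2⟩ : {s : Set G // s ⊆ B})) ?_
    intro H H' e
    apply Subtype.ext
    exact SetLike.coe_injective (congrArg Subtype.val e)
  have hBf : Finite B := hB.to_subtype
  let M : ι → Subgroup G := fun H => H.1
  have hM : ∀ H : Subgroup G, (H : Set G).Finite →
      ∃ (μ : ι) (g : G), ∀ a, a ∈ M μ ↔ g * a * g⁻¹ ∈ H := by
    intro H hH
    obtain ⟨y, hy⟩ := h₀.fix H hH
    obtain ⟨k, _, hk⟩ := hAV y
    refine ⟨⟨H.comap (MulAut.conj k⁻¹).toMonoidHom, ?_⟩, k⁻¹, fun a => Iff.rfl⟩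
    intro a ha
    have ha' : k⁻¹ * a * k⁻¹⁻¹ ∈ H := ha
    have := hy _ ha'
    rw [inv_inv, mul_smul, mul_smul, inv_smul_eq_iff] at this
    exact Set.mem_biUnion hk this
  obtain ⟨S, hS⟩ := hfg.out
  let N := Nat.card ι + S.card
  let D := Dat ι B N
  have hD : Finite D := inferInstance
  let Real : ∀ (d : D) (V : Type w) (_ : MulAction G V) (_ : SimpleGraph V),
      (ι → V) → (Fin d.1 → G) → Prop := fun d V _ Γ x h =>
    IsGT K V Γ ∧ Pres Γ M d.2.1 d.2.2.1 d.2.2.2.1 x h ∧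
      ∀ k (a b : B), (a, b) ∈ d.2.2.2.2 k ↔ (a : G) * h k = h k * b
  have hd : ∀ d : D, ∃ C : Set (Set G), C.Finite ∧ (∀ S ∈ C, S.Finite) ∧
      ∀ (V : Type w) (act : MulAction G V) (Γ : SimpleGraph V) (x : ι → V) (h : Fin d.1 → G),
      Real d V act Γ x h → ∀ a b, Near Γ a b → ∃ σ : G ≃* G,
        (∀ H : Subgroup G, (H : Set G).Finite → ∃ g : G, ∀ x ∈ H, x = g * σ.symm x * g⁻¹) ∧
        ∃ g : G, ∃ S ∈ C, ∀ s ∈ SS (G := G) a b, g * σ s * g⁻¹ ∈ S := by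
    intro d
    by_cases hex : ∃ (V : Type w) (act : MulAction G V) (Γ : SimpleGraph V) (x : ι → V)
        (h : Fin d.1 → G), Real d V act Γ x h
    · obtain ⟨V', act', Γ', x', h', r1, r2, r3⟩ := hex
      obtain ⟨C, c1, c2, c3⟩ := finite_SS r1 hfg
      refine ⟨C, c1, c2, ?_⟩
      rintro V act Γ x h ⟨q1, q2, q3⟩ a b hab
      obtain ⟨σ, θ, s1, s2, s3⟩ := q2.exists_aut r2 (by
        intro k a ha b hb
        have e1 := q3 k ⟨a, (d.2.2.1 k).2 ha⟩ ⟨b, (d.2.2.2.1 k).2 hb⟩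
        have e2 := r3 k ⟨a, (d.2.2.1 k).2 ha⟩ ⟨b, (d.2.2.2.1 k).2 hb⟩
        exact e1.symm.trans e2) q1 r1
      refine ⟨σ, s1, ?_⟩
      obtain ⟨g, S, hSC, hgs⟩ := c3 (θ a) (θ b)
        (Near.map (fun x y hxy => Or.inl (s3 x y hxy)) hab)
      refine ⟨g, S, hSC, fun s hs => hgs (σ s) ?_⟩
      rcases hs with hs | hs | hs
      · exact Or.inl (by rw [← s2, hs])
      · exact Or.inr (Or.inl (by rw [← s2, hs]))
      · exact Or.inr (Or.inr (by rw [← s2, hs]))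
    · refine ⟨∅, Set.finite_empty, by simp, ?_⟩
      intro V act Γ x h hR
      exact absurd ⟨V, act, Γ, x, h, hR⟩ hex
  choose C c1 c2 c3 using hd
  refine ⟨⋃ d, C d, Set.finite_iUnion c1, ?_, ?_⟩
  · intro T hT
    obtain ⟨d, hd⟩ := Set.mem_iUnion.1 hT
    exact c2 d T hd
  · intro V act Γ hG hr a b hab
    obtain ⟨n, hn, I, i, j, x, h, P⟩ := exists_pres hG hr hS M hM
    let d : D := ⟨⟨n, Nat.lt_succ_of_le hn⟩, I, i, j, fun k => {q | (q.1 : G) * h k = h k * q.2}⟩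
    obtain ⟨σ, s1, g, T, hT, s2⟩ := c3 d V act Γ x h ⟨hG, P, fun k a b => Iff.rfl⟩ a b hab
    exact ⟨σ, s1, g, T, Set.mem_iUnion.2 ⟨d, hT⟩, s2⟩

theorem exists_test (K' : Type w) [Finite K'] (S : Set G) :
    ∃ F : Set G, F.Finite ∧ (1 : G) ∉ F ∧ (¬ (Subgroup.closure S : Set G).Finite →
      ∀ q : G → K', ∃ a ∈ Subgroup.closure S, ∃ b ∈ Subgroup.closure S, q a = q b ∧ a⁻¹ * b ∈ F) := by
  classical
  by_cases hfin : (Subgroup.closure S : Set G).Finite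
  · exact ⟨∅, Set.finite_empty, by simp, fun h => absurd hfin h⟩
  have := Fintype.ofFinite K'
  obtain ⟨T, hT, hcard⟩ := Set.Infinite.exists_subset_card_eq hfin (Fintype.card K' + 1)
  refine ⟨{x | ∃ a ∈ T, ∃ b ∈ T, a ≠ b ∧ x = a⁻¹ * b}, ?_, ?_, ?_⟩
  · apply ((T.finite_toSet.prod T.finite_toSet).image (fun q : G × G => q.1⁻¹ * q.2)).subset
    rintro x ⟨a, ha, b, hb, _, rfl⟩
    exact ⟨(a, b), ⟨ha, hb⟩, rfl⟩
  · rintro ⟨a, _, b, _, hne, e⟩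
    exact hne (by rw [eq_comm, inv_mul_eq_one] at e; exact e)
  · intro _ q
    obtain ⟨a, ha, b, hb, hne, e⟩ := Finset.exists_ne_map_eq_of_card_lt_of_maps_to
      (s := T) (t := Finset.univ) (f := q) (by rw [hcard, Finset.card_univ]; omega) (by simp)
    exact ⟨a, hT ha, b, hT hb, e, a, ha, b, hb, hne, rfl⟩

theorem main_aux {G' : Type v} [Group G'] (hfg : Group.FG G) (hfg' : Group.FG G')
    (hvf : ∃ H : Subgroup G, H.FiniteIndex ∧ Nonempty (IsFreeGroup H))
    (hvf' : ∃ H : Subgroup G', H.FiniteIndex ∧ Nonempty (IsFreeGroup H)) :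
    ∃ F : Finset G, (1 : G) ∉ F ∧ ∀ φ : G →* G', ¬ Function.Injective φ →
      ∃ σ : G ≃* G, (∀ H : Subgroup G, (H : Set G).Finite → ∃ g : G, ∀ x ∈ H, x = g * σ x * g⁻¹) ∧
      ∃ f ∈ F, φ (σ f) = 1 := by
  classical
  obtain ⟨K, hKi, hKt, hKfg, V, act, Γ, col, hG, hcol, hcolA⟩ := exists_good_tree hfg hvf
  obtain ⟨K', hKi', hKt', -, V', act', Γ', -, hG', -, -⟩ := exists_good_tree hfg' hvf'
  obtain ⟨A, hA, hAV⟩ := (orbit_fin_iff K V).1 hG.fin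
  let B : Set G := ⋃ a ∈ A, {g : G | g • a = a}
  have hB : B.Finite := hA.biUnion (fun a _ => hG.stab a)
  obtain ⟨C, c1, c2, c3⟩ := exists_SS_collection.{u, u, u} hfg hG
  have hQ : Finite (G' ⧸ K') := Subgroup.finite_quotient_of_finiteIndex
  choose T t1 t2 t3 using exists_test (G := G) (G' ⧸ K')
  have hFfin : ((B \ {1}) ∪ ⋃ S ∈ C, ⋃ S₀ ∈ {S₀ : Set G | S₀ ⊆ S}, T S₀).Finite :=
    (hB.subset Set.sdiff_subset).union (c1.biUnion (fun S hS =>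
      (c2 S hS).finite_subsets.biUnion (fun S₀ _ => t1 S₀)))
  refine ⟨hFfin.toFinset, ?_, ?_⟩
  · rw [Set.Finite.mem_toFinset]
    rintro (h | h)
    · exact h.2 rfl
    · simp only [Set.mem_iUnion] at h
      obtain ⟨S, _, S₀, _, h⟩ := h
      exact t2 S₀ h
  intro φ hφ
  simp only [Set.Finite.mem_toFinset]
  obtain ⟨W₁, act₁, Δ₁, F₁, w1, w2, w3⟩ := exists_resolved_map hKfg hG col hcol hcolA hG' φ
  obtain ⟨W, actW, Δ, F, q1, q2, q3 | ⟨a, b, hab, hF, hinf⟩⟩ := exists_min_map hKt w1 hG' φ F₁ w2 w3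
  · refine ⟨MulEquiv.refl G, fun H _ => ⟨1, fun x _ => by simp⟩, ?_⟩
    obtain ⟨k, hk, hk1⟩ : ∃ k : G, φ k = 1 ∧ k ≠ 1 := by
      by_contra hcon
      push Not at hcon
      exact hφ ((injective_iff_map_eq_one φ).2 hcon)
    obtain ⟨y⟩ := q1.tree.connected.nonempty
    have hky : k • y = y := q3 (by rw [q2, hk, one_smul])
    have hfo := isOfFinOrder_of_fix (q1.stab y) hky
    obtain ⟨x, hx⟩ := hG.fix (Subgroup.zpowers k) (finite_zpowers.2 hfo)
    have hkx := hx k (Subgroup.mem_zpowers k)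
    obtain ⟨c, _, hc⟩ := hAV x
    refine ⟨c * k * c⁻¹, Or.inl ⟨?_, ?_⟩, ?_⟩
    · refine Set.mem_biUnion hc ?_
      show (c * k * c⁻¹) • c • x = c • x
      rw [mul_smul, inv_smul_smul, mul_smul, hkx]
    · intro e
      have e' : c * k * c⁻¹ = 1 := e
      rw [mul_inv_eq_one, mul_eq_left] at e'
      exact hk1 e'
    · show φ (c * k * c⁻¹) = 1
      rw [map_mul, map_mul, hk, mul_one, ← map_mul, mul_inv_cancel, map_one]
  · obtain ⟨R, actR, ΔR, c, r1, r2, r3, r4⟩ := exists_red hKt q1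
    obtain ⟨σ, s1, g, S, hS, s2⟩ := c3 R actR ΔR r1 r4 (c a) (c b) (Near.map r3 hab)
    let τ : G →* G := (MulAut.conj g).toMonoidHom.comp σ.toMonoidHom
    have hτ : ∀ x, τ x = g * σ x * g⁻¹ := fun x => rfl
    have hτi : Function.Injective τ := (MulAut.conj g).injective.comp σ.injective
    let S₀ : Set G := τ '' SS (G := G) a b
    have hS₀ : S₀ ⊆ S := by
      rintro _ ⟨s, hs, rfl⟩
      rw [hτ]
      apply s2
      rcases hs with hs | hs | hs
      · exact Or.inl (by rw [← r2, hs])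
      · exact Or.inr (Or.inl (by rw [← r2, hs]))
      · exact Or.inr (Or.inr (by rw [← r2, hs]))
    have hcl : Subgroup.closure S₀ = (Subgroup.closure (SS (G := G) a b)).map τ :=
      (MonoidHom.map_closure τ _).symm
    have hinf₀ : ¬ (Subgroup.closure S₀ : Set G).Finite := by
      intro hf
      apply hinf
      rw [hcl, Subgroup.coe_map] at hf
      exact Set.Finite.of_finite_image hf hτi.injOn
    let ψ : G → G' := fun y => φ (σ.symm (g⁻¹ * y * g))
    have hψτ : ∀ x, ψ (τ x) = φ x := by
      intro x
      show φ (σ.symm (g⁻¹ * τ x * g)) = φ x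
      rw [hτ]
      congr 1
      rw [MulEquiv.symm_apply_eq]
      group
    obtain ⟨y₁, hy₁, y₂, hy₂, hy, hyT⟩ := t3 S₀ hinf₀ (fun y => QuotientGroup.mk (ψ y))
    rw [hcl] at hy₁ hy₂
    obtain ⟨x₁, hx₁, rfl⟩ := hy₁
    obtain ⟨x₂, hx₂, rfl⟩ := hy₂
    rw [hψτ, hψτ, QuotientGroup.eq] at hy
    have hfixF : Subgroup.closure (SS (G := G) a b) ≤
        (MulAction.stabilizer G' (F a)).comap φ := by
      rw [Subgroup.closure_le]
      intro s hs
      show φ s • F a = F a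
      rcases hs with hs | hs | hs
      · rw [← q2, hs]
      · rw [hF, ← q2, hs]
      · rw [← q2, hs, hF]
    have hfx : φ (x₁⁻¹ * x₂) • F a = F a :=
      hfixF (Subgroup.mul_mem _ (Subgroup.inv_mem _ hx₁) hx₂)
    have hone : φ (x₁⁻¹ * x₂) = 1 := by
      apply hKt'
      · rw [map_mul, map_inv]
        exact hy
      · exact isOfFinOrder_of_fix (hG'.stab (F a)) hfx
    refine ⟨σ.symm, s1, (τ x₁)⁻¹ * τ x₂, Or.inr ?_, ?_⟩
    · simp only [Set.mem_iUnion]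
      exact ⟨S, hS, S₀, hS₀, hyT⟩
    · have e : (τ x₁)⁻¹ * τ x₂ = g * σ (x₁⁻¹ * x₂) * g⁻¹ := by
        rw [← map_inv, ← map_mul, hτ]
      rw [e, map_mul σ.symm, map_mul σ.symm, MulEquiv.symm_apply_apply, map_mul, map_mul, hone, mul_one,
        ← map_mul, ← map_mul, mul_inv_cancel, map_one, map_one]

end Test
end VF

/-- For finitely generated virtually free groups `G`, `G'`, there is a finite subset
`F` of `G \ {1}` such that every non-injective homomorphism `φ : G → G'` kills an
element of `σ(F)` for some automorphism `σ` of `G` equivalent to the identity. -/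
theorem exists_finite_test_set_for_noninjective_aut0
    (G : Type*) (G' : Type*) [Group G] [Group G']
    (hfg : Group.FG G) (hfg' : Group.FG G')
    (hvf : VirtuallyFree G) (hvf' : VirtuallyFree G') :
    ∃ F : Finset G, (1 : G) ∉ F ∧
      ∀ φ : G →* G', ¬ Function.Injective φ →
        ∃ σ : G ≃* G, HomEquiv σ.toMonoidHom (MonoidHom.id G) ∧
          ∃ f ∈ F, φ (σ f) = 1 := by
  exact VF.main_aux hfg hfg' hvf hvf'
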